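/- Let k be a differential field of characteristic zero whose field of constants C is algebraically closed, and let k ⊂ K ⊆ E be differential fields such that E is an iterated strongly normal extension of k, i.e., there is a tower of differential fields k = E₀ ⊆ E₁ ⊆ ⋯ ⊆ Eₙ = E in which each Eᵢ is a strongly normal extension of Eᵢ₋₁. Then K can be resolved into a tower of differential fields k = K₀ ⊂ K₁ ⊂ ⋯ ⊂ K_m = K such that for every i = 1,…,m there exist a strongly normal extension F of Kᵢ₋₁ and a differential field embedding of Kᵢ into F fixing Kᵢ₋₁ pointwise. -/

import Mathlib

universe u

/-- A bundled differential field of characteristic zero: a field together with a derivation,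
given as a raw function satisfying additivity and the Leibniz rule. -/
structure DFld : Type (u + 1) where
  carrier : Type u
  [fieldInst : Field carrier]
  [charZeroInst : CharZero carrier]
  deriv : carrier → carrier
  deriv_add : ∀ a b, deriv (a + b) = deriv a + deriv b
  deriv_mul : ∀ a b, deriv (a * b) = deriv a * b + a * deriv b

attribute [instance] DFld.fieldInst DFld.charZeroInst

/-- The result of applying the monic linear differential operator
`∂^n + a_{n-1} ∂^{n-1} + ⋯ + a_1 ∂ + a_0` (with coefficients `a`) to `y`,
where the derivation is given by `D`. -/
def LApply {E : Type u} [Field E] (D : E → E) (n : ℕ) (a : Fin n → E) (y : E) : E :=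
  D^[n] y + ∑ i : Fin n, a i * D^[(i : ℕ)] y

/-- `diffGen D k S` is the smallest differential subfield (w.r.t. the derivation `D`)
containing the subfield `k` and the set `S`; i.e. the differential field `k⟨S⟩`. -/
def diffGen {E : Type u} [Field E] (D : E → E) (k : Subfield E) (S : Set E) : Subfield E :=
  sInf {F : Subfield E | k ≤ F ∧ S ⊆ ↑F ∧ ∀ x ∈ F, D x ∈ F}

/-- The subfield of constants of a differential subfield `k`: `{x ∈ k | D x = 0}`. -/
def constantsOf {E : Type u} [Field E] (D : Derivation ℤ E E) (k : Subfield E) : Subfield E where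
  carrier := {x | x ∈ k ∧ D x = 0}
  zero_mem' := ⟨k.zero_mem, map_zero D⟩
  one_mem' := ⟨k.one_mem, D.map_one_eq_zero⟩
  add_mem' := by
    rintro a b ⟨hak, ha0⟩ ⟨hbk, hb0⟩
    exact ⟨k.add_mem hak hbk, by rw [map_add, ha0, hb0, add_zero]⟩
  neg_mem' := by
    rintro a ⟨hak, ha0⟩
    exact ⟨k.neg_mem hak, by rw [map_neg, ha0, neg_zero]⟩
  mul_mem' := by
    rintro a b ⟨hak, ha0⟩ ⟨hbk, hb0⟩
    exact ⟨k.mul_mem hak hbk, by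
      rw [Derivation.leibniz, ha0, hb0, smul_zero, smul_zero, add_zero]⟩
  inv_mem' := by
    rintro x ⟨hxk, hx0⟩
    refine ⟨k.inv_mem hxk, ?_⟩
    by_cases h : x = 0
    · simp [h]
    · have h1 : D (x * x⁻¹) = 0 := by rw [mul_inv_cancel₀ h, D.map_one_eq_zero]
      rw [Derivation.leibniz, hx0, smul_zero, add_zero, smul_eq_mul] at h1
      exact (mul_eq_zero.mp h1).resolve_left h

/-- `F` is a Picard–Vessiot extension of `k` (inside a common differential field) for the
monic linear differential operator of order `n` with (lower-order) coefficients `a`: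
both are differential subfields, the constants of `F` equal the constants of `k`,
the coefficients lie in `k`, and `F` is differentially generated over `k` by an
`n`-dimensional vector space (over the constants) of solutions. -/
def IsPVWith {E : Type u} [Field E] (D : E → E) (k F : Subfield E) (n : ℕ)
    (a : Fin n → E) : Prop :=
  k ≤ F ∧ (∀ x ∈ k, D x ∈ k) ∧ (∀ x ∈ F, D x ∈ F) ∧
  (∀ x ∈ F, D x = 0 → x ∈ k) ∧
  (∀ i, a i ∈ k) ∧
  ∃ y : Fin n → E,
    (∀ i, y i ∈ F) ∧
    (∀ i, LApply D n a (y i) = 0) ∧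
    (∀ c : Fin n → E, (∀ i, c i ∈ k ∧ D (c i) = 0) → (∑ i, c i * y i) = 0 → ∀ i, c i = 0) ∧
    diffGen D k (Set.range y) = F

/-- `F` is a Picard–Vessiot extension of `k` for some monic linear differential operator. -/
def IsPV {E : Type u} [Field E] (D : E → E) (k F : Subfield E) : Prop :=
  ∃ (n : ℕ) (a : Fin n → E), IsPVWith D k F n a

/-- Relative version: the differential subfield `F` is a Picard–Vessiot extension
of the differential subfield `kb ≤ F`. -/
def IsPVRel {E : Type u} [Field E] (D : E → E) (kb F : Subfield E)
    (hF : ∀ x ∈ F, D x ∈ F) : Prop :=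
  IsPV (fun x : ↥F => (⟨D ↑x, hF ↑x x.2⟩ : ↥F)) (Subfield.comap F.subtype kb) ⊤

/-- The ambient differential field (with derivation `D`) is a strongly normal extension of
its differential subfield `k`: it is finitely generated as a field extension of `k`, has no
new constants, and every differential embedding over `k` into a differential field extension
`M` lands in the compositum of the image of the base copy with the constants of `M`. -/
def IsSN {E : Type u} [Field E] (D : E → E) (k : Subfield E) : Prop :=
  (∀ x ∈ k, D x ∈ k) ∧
  (∃ s : Finset E, Subfield.closure (↑k ∪ ↑s) = (⊤ : Subfield E)) ∧
  (∀ x : E, D x = 0 → x ∈ k) ∧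
  ∀ (M : DFld.{u}) (ι σ : E →+* M.carrier),
    (∀ x, ι (D x) = M.deriv (ι x)) →
    (∀ x, σ (D x) = M.deriv (σ x)) →
    (∀ x ∈ k, σ x = ι x) →
    ∀ e : E, σ e ∈ Subfield.closure (Set.range ι ∪ {m : M.carrier | M.deriv m = 0})

/-- Relative version: the differential subfield `F` is a strongly normal extension of the
differential subfield `kb ≤ F`. -/
def IsSNRel {E : Type u} [Field E] (D : E → E) (kb F : Subfield E)
    (hF : ∀ x ∈ F, D x ∈ F) : Prop :=
  IsSN (fun x : ↥F => (⟨D ↑x, hF ↑x x.2⟩ : ↥F)) (Subfield.comap F.subtype kb)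

/-- `K` is a finite field extension of the subfield `M`. -/
def FinExt {E : Type u} [Field E] (M K : Subfield E) : Prop :=
  ∃ h : M ≤ K,
    letI : Algebra ↥M ↥K := (Subfield.inclusion h).toAlgebra
    Module.Finite ↥M ↥K

/-- The transcendence degree of the subfield `K` over the subfield `k`, as the supremum of the
cardinalities of subsets of `K` that are algebraically independent over `k`. -/
noncomputable def trdegOf {E : Type u} [Field E] (k K : Subfield E) : Cardinal.{u} :=
  ⨆ s : {s : Set E // s ⊆ (K : Set E) ∧ AlgebraicIndependent ↥k (fun x : ↥s => (x : E))},
    Cardinal.mk ↥(s.1)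

/-- `K` and `M` are free over `k`: every finite subset of `K` that is algebraically
independent over `k` remains algebraically independent over `M`. -/
def FreeOver {E : Type u} [Field E] (k K M : Subfield E) : Prop :=
  ∀ s : Finset E, (↑s : Set E) ⊆ (K : Set E) →
    AlgebraicIndependent ↥k (fun x : ↥(↑s : Set E) => (x : E)) →
    AlgebraicIndependent ↥M (fun x : ↥(↑s : Set E) => (x : E))

/-- `K` is a `k`-irreducible differential field: it is a finitely generated differential field
extension of `k` of transcendence degree at least 1, and every intermediate differential field
`k ⊂ M ⊆ K` has transcendence degree `0` or `trdeg(K|k)` over `k`. -/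
def IsIrred {E : Type u} [Field E] (D : E → E) (k K : Subfield E) : Prop :=
  (∃ s : Finset E, diffGen D k ↑s = K) ∧
  1 ≤ trdegOf k K ∧
  ∀ M : Subfield E, (∀ x ∈ M, D x ∈ M) → k < M → M ≤ K →
    trdegOf k M = 0 ∨ trdegOf k M = trdegOf k K

/-- `Kf` is a `d`-solvable extension of `k`: there is a tower of differential fields starting
at (a copy of) `k`, each step being a finite algebraic extension or a Picard–Vessiot extension
for an operator of order at most `d`, whose top contains (the copy of) `Kf`. -/
def IsDSolvable {E : Type u} [Field E] (D : E → E) (k Kf : Subfield E) (d : ℕ) : Prop :=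
  ∃ (Ω : DFld.{u}) (j : E →+* Ω.carrier),
    (∀ x, j (D x) = Ω.deriv (j x)) ∧
    ∃ (r : ℕ) (T : Fin (r + 1) → Subfield Ω.carrier),
      T 0 = Subfield.map j k ∧
      Subfield.map j Kf ≤ T (Fin.last r) ∧
      (∀ i, ∀ x ∈ T i, Ω.deriv x ∈ T i) ∧
      ∀ i : Fin r,
        FinExt (T i.castSucc) (T i.succ) ∨
        ∃ n ≤ d, ∃ a : Fin n → Ω.carrier, IsPVWith Ω.deriv (T i.castSucc) (T i.succ) n a

/-- `Kn` is generated over `kb`, as a differential field with the same constants, by one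
solution `z` of an inhomogeneous equation `L(y) = b` (with `L` monic over `kb` of order
`n ≤ d` and `b ∈ kb`) together with an `n`-dimensional space (over the constants) of
solutions of `L(y) = 0`. -/
def IsPVInhomLe {E : Type u} [Field E] (D : E → E) (kb Kn : Subfield E) (d : ℕ) : Prop :=
  kb ≤ Kn ∧ (∀ x ∈ kb, D x ∈ kb) ∧ (∀ x ∈ Kn, D x ∈ Kn) ∧
  (∀ x ∈ Kn, D x = 0 → x ∈ kb) ∧
  ∃ n, n ≤ d ∧ ∃ (a : Fin n → E) (b z : E) (y : Fin n → E),
    (∀ i, a i ∈ kb) ∧ b ∈ kb ∧ z ∈ Kn ∧ (∀ i, y i ∈ Kn) ∧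
    LApply D n a z = b ∧
    (∀ i, LApply D n a (y i) = 0) ∧
    (∀ c : Fin n → E, (∀ i, c i ∈ kb ∧ D (c i) = 0) → (∑ i, c i * y i) = 0 → ∀ i, c i = 0) ∧
    diffGen D kb (insert z (Set.range y)) = Kn

/-- `Kf` is a `d⁺`-solvable extension of `k`. -/
def IsDPlusSolvable {E : Type u} [Field E] (D : E → E) (k Kf : Subfield E) (d : ℕ) : Prop :=
  ∃ (Ω : DFld.{u}) (j : E →+* Ω.carrier),
    (∀ x, j (D x) = Ω.deriv (j x)) ∧
    ∃ (r : ℕ) (T : Fin (r + 1) → Subfield Ω.carrier),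
      T 0 = Subfield.map j k ∧
      Subfield.map j Kf ≤ T (Fin.last r) ∧
      (∀ i, ∀ x ∈ T i, Ω.deriv x ∈ T i) ∧
      ∀ i : Fin r,
        FinExt (T i.castSucc) (T i.succ) ∨ IsPVInhomLe Ω.deriv (T i.castSucc) (T i.succ) d

/-- `TSet D kb K` is the set of elements of `K` annihilated by some monic linear differential
operator with coefficients in `kb`. -/
def TSet {E : Type u} [Field E] (D : E → E) (kb K : Subfield E) : Set E :=
  {x | x ∈ K ∧ ∃ (n : ℕ) (a : Fin n → E), (∀ i, a i ∈ kb) ∧ LApply D n a x = 0}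

set_option linter.all false

namespace SNT

variable {A B E F M N : DFld.{u}}

theorem d_zero (E : DFld.{u}) : E.deriv 0 = 0 := by
  have := E.deriv_add 0 0
  simpa using this

theorem d_one (E : DFld.{u}) : E.deriv 1 = 0 := by
  have := E.deriv_mul 1 1
  simpa using this

theorem d_neg (E : DFld.{u}) (a : E.carrier) : E.deriv (-a) = - E.deriv a := by
  have := E.deriv_add a (-a)
  rw [add_neg_cancel, d_zero] at this
  exact (neg_eq_of_add_eq_zero_right this.symm).symm

theorem d_sub (E : DFld.{u}) (a b : E.carrier) : E.deriv (a - b) = E.deriv a - E.deriv b := by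
  rw [sub_eq_add_neg, E.deriv_add, d_neg, sub_eq_add_neg]

theorem d_inv (E : DFld.{u}) (a : E.carrier) : E.deriv a⁻¹ = - E.deriv a / a ^ 2 := by
  by_cases h : a = 0
  · simp [h, d_zero]
  · have := E.deriv_mul a a⁻¹
    rw [mul_inv_cancel₀ h, d_one] at this
    field_simp
    field_simp at this
    linear_combination -this

theorem d_div (E : DFld.{u}) (a b : E.carrier) (hb : b ≠ 0) :
    E.deriv (a / b) = (E.deriv a * b - a * E.deriv b) / b ^ 2 := by
  rw [div_eq_mul_inv, E.deriv_mul, d_inv]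
  field_simp
  ring

theorem d_sum (E : DFld.{u}) {I : Type*} (s : Finset I) (f : I → E.carrier) :
    E.deriv (∑ i ∈ s, f i) = ∑ i ∈ s, E.deriv (f i) := by
  classical
  induction s using Finset.induction_on with
  | empty => simp [d_zero]
  | insert a s ha ih => rw [Finset.sum_insert ha, Finset.sum_insert ha, E.deriv_add, ih]

/-- differential homomorphisms -/
structure DHom (A B : DFld.{u}) where
  f : A.carrier →+* B.carrier
  comm : ∀ x, f (A.deriv x) = B.deriv (f x)

instance : CoeFun (DHom A B) (fun _ => A.carrier → B.carrier) := ⟨fun g => g.f⟩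

theorem DHom.inj (g : DHom A B) : Function.Injective g := g.f.injective

def DHom.comp (g : DHom B E) (f : DHom A B) : DHom A E :=
  ⟨g.f.comp f.f, fun x => by simp [f.comm, g.comm]⟩

@[simp] theorem DHom.comp_apply (g : DHom B E) (f : DHom A B) (x) : (g.comp f) x = g (f x) := rfl

def DHom.id (A : DFld.{u}) : DHom A A := ⟨RingHom.id _, fun _ => rfl⟩
@[simp] theorem DHom.id_apply (x : A.carrier) : (DHom.id A) x = x := rfl

@[ext] theorem DHom.ext {f g : DHom A B} (h : ∀ x, f x = g x) : f = g := by
  cases f; cases g; congr; exact RingHom.ext h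

/-- subfield of constants -/
def con (E : DFld.{u}) : Subfield E.carrier where
  carrier := {x | E.deriv x = 0}
  zero_mem' := d_zero E
  one_mem' := d_one E
  add_mem' := by
    intro a b ha hb
    simp only [Set.mem_setOf_eq] at *
    rw [E.deriv_add, ha, hb, add_zero]
  neg_mem' := by
    intro a ha
    simp only [Set.mem_setOf_eq] at *
    rw [d_neg, ha, neg_zero]
  mul_mem' := by
    intro a b ha hb
    simp only [Set.mem_setOf_eq] at *
    rw [E.deriv_mul, ha, hb]; simp
  inv_mem' := by
    intro a ha
    simp only [Set.mem_setOf_eq] at *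
    rw [d_inv, ha]; simp

theorem mem_con {x : E.carrier} : x ∈ con E ↔ E.deriv x = 0 := Iff.rfl

theorem DHom.cmem (g : DHom A B) {x} (hx : x ∈ con A) : g x ∈ con B := by
  rw [mem_con] at *; rw [← g.comm, hx, map_zero]

theorem DHom.con_iff (g : DHom A B) {x : A.carrier} : g x ∈ con B ↔ x ∈ con A := by
  refine ⟨fun h => ?_, g.cmem⟩
  rw [mem_con] at *; rw [← g.comm] at h
  exact g.inj (h.trans (map_zero g.f).symm)

/-- D-closed -/
def DC (E : DFld.{u}) (K : Subfield E.carrier) : Prop := ∀ x ∈ K, E.deriv x ∈ K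

/-- differential subfield as a differential field -/
def sub (E : DFld.{u}) (K : Subfield E.carrier) (hK : DC E K) : DFld.{u} where
  carrier := ↥K
  deriv x := ⟨E.deriv x, hK x x.2⟩
  deriv_add a b := Subtype.ext (E.deriv_add a b)
  deriv_mul a b := Subtype.ext (E.deriv_mul a b)

def subi (E : DFld.{u}) (K : Subfield E.carrier) (hK : DC E K) : DHom (sub E K hK) E :=
  ⟨K.subtype, fun _ => rfl⟩

def incl (E : DFld.{u}) {K L : Subfield E.carrier} (hK : DC E K) (hL : DC E L) (h : K ≤ L) :
    DHom (sub E K hK) (sub E L hL) :=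
  ⟨Subfield.inclusion h, fun _ => rfl⟩

def DHom.codRestrict (g : DHom A E) (K : Subfield E.carrier) (hK : DC E K) (h : ∀ x, g x ∈ K) :
    DHom A (sub E K hK) :=
  ⟨g.f.codRestrict K h, fun x => Subtype.ext (g.comm x)⟩

@[simp] theorem DHom.codRestrict_apply (g : DHom A E) (K : Subfield E.carrier) (hK : DC E K)
    (h : ∀ x, g x ∈ K) (x) : subi E K hK (g.codRestrict K hK h x) = g x := rfl

/-- closure of DC-generating set -/
theorem DC_closure {s : Set E.carrier} (h : ∀ x ∈ s, E.deriv x ∈ Subfield.closure s) :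
    DC E (Subfield.closure s) := by
  intro x hx
  induction hx using Subfield.closure_induction with
  | mem x hx => exact h x hx
  | one => rw [d_one]; exact zero_mem _
  | add x y hx hy h1 h2 => rw [E.deriv_add]; exact add_mem h1 h2
  | neg x hx h1 => rw [d_neg]; exact neg_mem h1
  | inv x hx h1 =>
    rw [d_inv]; exact div_mem (neg_mem h1) (pow_mem hx 2)
  | mul x y hx hy h1 h2 =>
    rw [E.deriv_mul]; exact add_mem (mul_mem h1 hy) (mul_mem hx h2)

theorem DC_sSup {S : Set (Subfield E.carrier)} (h : ∀ K ∈ S, DC E K) : DC E (sSup S) := by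
  have : sSup S = Subfield.closure (⋃ K ∈ S, (K : Set E.carrier)) := by
    apply le_antisymm
    · refine sSup_le fun K hK => ?_
      exact fun x hx => Subfield.subset_closure (Set.mem_biUnion hK hx)
    · rw [Subfield.closure_le]
      exact Set.iUnion₂_subset fun K hK => (le_sSup hK : K ≤ sSup S)
  rw [this]
  refine DC_closure fun x hx => ?_
  simp only [Set.mem_iUnion] at hx
  obtain ⟨K, hK, hx⟩ := hx
  exact Subfield.subset_closure (Set.mem_biUnion hK (h K hK x hx))

theorem DC_sup {K L : Subfield E.carrier} (hK : DC E K) (hL : DC E L) : DC E (K ⊔ L) := by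
  rw [← sSup_pair]
  apply DC_sSup
  rintro X (rfl | rfl) <;> assumption

theorem DC_inf {K L : Subfield E.carrier} (hK : DC E K) (hL : DC E L) : DC E (K ⊓ L) :=
  fun x hx => ⟨hK x hx.1, hL x hx.2⟩

theorem DC_top : DC E ⊤ := fun _ _ => Subfield.mem_top _

theorem DC_con : DC E (con E) := fun x hx => by
  have h : E.deriv x = 0 := hx
  rw [h]; exact zero_mem _

theorem DC_range (g : DHom A B) : DC B g.f.fieldRange := by
  rintro _ ⟨x, rfl⟩
  exact ⟨_, g.comm x⟩

theorem DC_map (g : DHom A B) {K : Subfield A.carrier} (h : DC A K) : DC B (K.map g.f) := by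
  rintro _ ⟨x, hx, rfl⟩
  exact ⟨_, h x hx, g.comm x⟩

theorem DC_comap (g : DHom A B) {K : Subfield B.carrier} (h : DC B K) : DC A (K.comap g.f) := by
  intro x hx
  have := h _ hx
  rw [← g.comm] at this
  exact this

/-- compositum with constants -/
def cl (ι : DHom A M) : Subfield M.carrier := ι.f.fieldRange ⊔ con M

theorem cl_eq (ι : DHom A M) :
    Subfield.closure (Set.range ι.f ∪ {m : M.carrier | M.deriv m = 0}) = cl ι := by
  rw [Subfield.closure_union, cl]
  congr 1
  · rw [← RingHom.coe_fieldRange, Subfield.closure_eq]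
  · exact Subfield.closure_eq (con M)

theorem DC_cl (ι : DHom A M) : DC M (cl ι) := DC_sup (DC_range ι) DC_con

/-- strongly normal, hom form -/
def SN (g : DHom B F) : Prop := IsSN F.deriv g.f.fieldRange

theorem SN_iff (g : DHom B F) : SN g ↔
    (∃ s : Finset F.carrier, g.f.fieldRange ⊔ Subfield.closure (s : Set F.carrier) = ⊤) ∧
    (∀ x ∈ con F, ∃ b, g b = x) ∧
    ∀ (M : DFld.{u}) (ι σ : DHom F M), (∀ b, ι (g b) = σ (g b)) → ∀ e, σ e ∈ cl ι := by
  unfold SN IsSN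
  constructor
  · rintro ⟨-, ⟨s, hs⟩, h2, h3⟩
    refine ⟨⟨s, ?_⟩, fun x hx => h2 x hx, fun M ι σ h e => ?_⟩
    · rw [← hs, Subfield.closure_union, Subfield.closure_eq]
    · rw [← cl_eq]
      refine h3 M ι.f σ.f ι.comm σ.comm ?_ e
      rintro _ ⟨b, rfl⟩
      exact (h b).symm
  · rintro ⟨⟨s, hs⟩, h2, h3⟩
    refine ⟨DC_range g, ⟨s, ?_⟩, fun x hx => h2 x hx, fun M ι σ hι hσ h e => ?_⟩
    · rw [← hs, Subfield.closure_union, Subfield.closure_eq]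
    · have := cl_eq (M := M) (⟨ι, hι⟩ : DHom F M)
      simp only at this
      rw [this]
      refine h3 M ⟨ι, hι⟩ ⟨σ, hσ⟩ (fun b => ?_) e
      exact (h _ ⟨b, rfl⟩).symm

theorem incl_range {K L : Subfield E.carrier} (hK : DC E K) (hL : DC E L) (h : K ≤ L) :
    (incl E hK hL h).f.fieldRange = Subfield.comap L.subtype K := by
  ext x
  constructor
  · rintro ⟨y, rfl⟩; exact y.2
  · intro hx; exact ⟨⟨x.1, hx⟩, rfl⟩

theorem SN_incl {K L : Subfield E.carrier} (hK : DC E K) (hL : DC E L) (h : K ≤ L) :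
    SN (incl E hK hL h) ↔ IsSNRel E.deriv K L hL := by
  unfold SN IsSNRel
  rw [incl_range]; rfl

theorem algClosed_of (g : DHom A B) (h : ∀ x ∈ con B, ∃ a, g a = x) (hA : IsAlgClosed (con A)) :
    IsAlgClosed (con B) := by
  let φ : con A →+* con B := (g.f.comp (con A).subtype).codRestrict (con B) (fun x => g.cmem x.2)
  have hb : Function.Bijective φ := by
    refine ⟨φ.injective, ?_⟩
    rintro ⟨x, hx⟩
    obtain ⟨a, rfl⟩ := h x hx
    exact ⟨⟨a, g.con_iff.1 hx⟩, rfl⟩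
  exact IsAlgClosed.of_ringEquiv _ _ (RingEquiv.ofBijective φ hb)

theorem algClosed_of' (g : DHom A B) (h : ∀ x ∈ con B, ∃ a, g a = x) (hB : IsAlgClosed (con B)) :
    IsAlgClosed (con A) := by
  let φ : con A →+* con B := (g.f.comp (con A).subtype).codRestrict (con B) (fun x => g.cmem x.2)
  have hb : Function.Bijective φ := by
    refine ⟨φ.injective, ?_⟩
    rintro ⟨x, hx⟩
    obtain ⟨a, rfl⟩ := h x hx
    exact ⟨⟨a, g.con_iff.1 hx⟩, rfl⟩
  exact IsAlgClosed.of_ringEquiv _ _ (RingEquiv.ofBijective φ hb).symm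

end SNT

namespace SNT
open TensorProduct

theorem isReduced_fin {k E L : Type u} [Field k] [CharZero k] [Field E] [Field L] [Algebra k E]
    [Algebra k L] [Module.Finite k L] : IsReduced (L ⊗[k] E) := by
  haveI : Algebra.IsSeparable k L := inferInstance
  haveI := Algebra.FormallyUnramified.of_isSeparable k L
  haveI : IsReduced (E ⊗[k] L) := Algebra.FormallyUnramified.isReduced_of_field E _
  exact isReduced_of_injective (Algebra.TensorProduct.comm k L E).toRingHom
    (Algebra.TensorProduct.comm k L E).injective

theorem isReduced_fg {k E A : Type u} [Field k] [CharZero k] [Field E] [CommRing A] [IsDomain A]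
    [Algebra k E] [Algebra k A] [Algebra.FiniteType k A] : IsReduced (A ⊗[k] E) := by
  refine ⟨fun x hx => ?_⟩
  let b := Module.Free.chooseBasis k E
  have nat : ∀ (m : Ideal A) (x : A ⊗[k] E) i,
      (Algebra.TensorProduct.basis (A ⧸ m) b).repr
        (Algebra.TensorProduct.map (Ideal.Quotient.mkₐ k m) (AlgHom.id k E) x) i =
      Ideal.Quotient.mk m ((Algebra.TensorProduct.basis A b).repr x i) := by
    intro m x i
    induction x with
    | zero => simp
    | tmul a e =>
      rw [Algebra.TensorProduct.map_tmul, Algebra.TensorProduct.basis_repr_tmul,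
        Algebra.TensorProduct.basis_repr_tmul]
      simp
    | add x y hx hy => simp only [map_add, Finsupp.add_apply, hx, hy]
  have key : ∀ (m : Ideal A) [m.IsMaximal] i, (Algebra.TensorProduct.basis A b).repr x i ∈ m := by
    intro m hm i
    letI := Ideal.Quotient.field m
    haveI : Algebra.FiniteType k (A ⧸ m) :=
      Algebra.FiniteType.of_surjective (Ideal.Quotient.mkₐ k m) (Ideal.Quotient.mkₐ_surjective k m)
    haveI : Module.Finite k (A ⧸ m) := finite_of_finite_type_of_isJacobsonRing k (A ⧸ m)
    haveI : IsReduced ((A ⧸ m) ⊗[k] E) := isReduced_fin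
    have h0 : Algebra.TensorProduct.map (Ideal.Quotient.mkₐ k m) (AlgHom.id k E) x = 0 :=
      (hx.map _).eq_zero
    have := nat m x i
    rw [h0] at this
    rw [← Ideal.Quotient.eq_zero_iff_mem, ← this]; simp
  apply (Algebra.TensorProduct.basis A b).repr.injective
  ext i
  haveI : IsJacobsonRing A := isJacobsonRing_of_finiteType (A := k)
  have hj : Ideal.jacobson (⊥ : Ideal A) = ⊥ :=
    IsJacobsonRing.out inferInstance (Ideal.isRadical_bot_iff.2 inferInstance)
  have : (Algebra.TensorProduct.basis A b).repr x i ∈ Ideal.jacobson (⊥ : Ideal A) := by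
    rw [Ideal.jacobson, Ideal.mem_sInf]
    rintro m ⟨_, hm⟩
    exact key m i
  rw [hj] at this
  simpa using this

theorem isReduced_tensor {k E F : Type u} [Field k] [CharZero k] [Field E] [Field F]
    [Algebra k E] [Algebra k F] : IsReduced (E ⊗[k] F) := by
  apply IsReduced.tensorProduct_of_flat_of_forall_fg
  intro A hA
  haveI : Algebra.FiniteType k A := A.fg_iff_finiteType.1 hA
  haveI : IsReduced (A ⊗[k] E) := isReduced_fg
  exact isReduced_of_injective (Algebra.TensorProduct.comm k E A).toRingHom
    (Algebra.TensorProduct.comm k E A).injective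

end SNT

namespace SNT
open TensorProduct

/-- linear independence through a ring hom -/
def LI {B F I : Type*} [Semiring B] [Semiring F] (g : B →+* F) (v : I → F) : Prop :=
  ∀ (s : Finset I) (c : I → B), ∑ i ∈ s, g (c i) * v i = 0 → ∀ i ∈ s, c i = 0

theorem LI_iff {B F I : Type*} [CommRing B] [CommRing F] (g : B →+* F) (v : I → F) :
    LI g v ↔ (letI := g.toAlgebra; LinearIndependent B v) := by
  letI := g.toAlgebra
  show LI g v ↔ LinearIndependent B v
  rw [linearIndependent_iff']
  rfl

def SP {B F I : Type*} [Semiring B] [Semiring F] (g : B →+* F) (v : I → F) : Prop :=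
  ∀ x, ∃ c : I →₀ B, x = ∑ i ∈ c.support, g (c i) * v i

theorem exists_basis {B F : Type u} [Field B] [CommRing F] (g : B →+* F) :
    ∃ (I : Type u) (v : I → F), LI g v ∧ SP g v := by
  letI := g.toAlgebra
  let b := Module.Free.chooseBasis B F
  refine ⟨_, b, (LI_iff _ _).2 b.linearIndependent, fun x => ⟨b.repr x, ?_⟩⟩
  conv_lhs => rw [← b.linearCombination_repr x]
  rfl

/-- raw derivations -/
structure IsD {R : Type*} [CommRing R] (d : R → R) : Prop where
  add : ∀ a b, d (a + b) = d a + d b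
  mul : ∀ a b, d (a * b) = d a * b + a * d b

section
variable {B S F R : Type u} [Field B] [CommRing S] [Field F] [CommRing R]

/-- tensor product along ring homs -/
def Ten (f : B →+* S) (g : B →+* F) : Type u :=
  letI := f.toAlgebra; letI := g.toAlgebra; S ⊗[B] F

noncomputable instance (f : B →+* S) (g : B →+* F) : CommRing (Ten f g) :=
  letI := f.toAlgebra; letI := g.toAlgebra; (inferInstance : CommRing (S ⊗[B] F))

noncomputable def inl (f : B →+* S) (g : B →+* F) : S →+* Ten f g :=
  letI := f.toAlgebra; letI := g.toAlgebra
  (Algebra.TensorProduct.includeLeftRingHom : S →+* S ⊗[B] F)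

noncomputable def inr (f : B →+* S) (g : B →+* F) : F →+* Ten f g :=
  letI := f.toAlgebra; letI := g.toAlgebra
  ((Algebra.TensorProduct.includeRight : F →ₐ[B] S ⊗[B] F) : F →+* S ⊗[B] F)

theorem inl_inr (f : B →+* S) (g : B →+* F) (b : B) : inl f g (f b) = inr f g (g b) := by
  letI := f.toAlgebra; letI := g.toAlgebra
  show (f b) ⊗ₜ[B] (1 : F) = (1 : S) ⊗ₜ[B] (g b)
  have h1 : f b = b • (1 : S) := by rw [Algebra.smul_def, mul_one]; rfl
  have h2 : g b = b • (1 : F) := by rw [Algebra.smul_def, mul_one]; rfl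
  rw [h1, h2, TensorProduct.smul_tmul]

theorem Ten_ind {f : B →+* S} {g : B →+* F} {P : Ten f g → Prop}
    (h : ∀ a b, P (inl f g a * inr f g b)) (ha : ∀ x y, P x → P y → P (x + y)) (t) : P t := by
  letI := f.toAlgebra; letI := g.toAlgebra
  have h' : ∀ (a : S) (b : F), P (a ⊗ₜ[B] b : S ⊗[B] F) := by
    intro a b
    have := h a b
    have e : inl f g a * inr f g b = (a ⊗ₜ[B] b : S ⊗[B] F) := by
      show (a ⊗ₜ[B] (1:F)) * ((1:S) ⊗ₜ[B] b) = _
      rw [Algebra.TensorProduct.tmul_mul_tmul, mul_one, one_mul]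
    rwa [e] at this
  induction t using TensorProduct.induction_on with
  | zero => have := h 0 0; rwa [map_zero, zero_mul] at this
  | tmul a b => exact h' a b
  | add x y hx hy => exact ha x y hx hy

noncomputable def ev {f : B →+* S} {g : B →+* F} (a : S →+* R) (b : F →+* R)
    (h : ∀ x, a (f x) = b (g x)) : Ten f g →+* R :=
  letI := f.toAlgebra; letI := g.toAlgebra; letI := (a.comp f).toAlgebra
  letI a' : S →ₐ[B] R := { a with commutes' := fun x => rfl }
  letI b' : F →ₐ[B] R := { b with commutes' := fun x => (h x).symm }
  ((Algebra.TensorProduct.productMap a' b' : S ⊗[B] F →ₐ[B] R) : S ⊗[B] F →+* R)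

@[simp] theorem ev_inl {f : B →+* S} {g : B →+* F} (a : S →+* R) (b : F →+* R)
    (h : ∀ x, a (f x) = b (g x)) (x) : ev a b h (inl f g x) = a x := by
  letI := f.toAlgebra; letI := g.toAlgebra; letI := (a.comp f).toAlgebra
  letI a' : S →ₐ[B] R := { a with commutes' := fun x => rfl }
  letI b' : F →ₐ[B] R := { b with commutes' := fun x => (h x).symm }
  exact Algebra.TensorProduct.productMap_left_apply a' b' x

@[simp] theorem ev_inr {f : B →+* S} {g : B →+* F} (a : S →+* R) (b : F →+* R)
    (h : ∀ x, a (f x) = b (g x)) (x) : ev a b h (inr f g x) = b x := by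
  letI := f.toAlgebra; letI := g.toAlgebra; letI := (a.comp f).toAlgebra
  letI a' : S →ₐ[B] R := { a with commutes' := fun x => rfl }
  letI b' : F →ₐ[B] R := { b with commutes' := fun x => (h x).symm }
  exact Algebra.TensorProduct.productMap_right_apply a' b' x

theorem Ten_indep {f : B →+* S} {g : B →+* F} {I : Type*} {v : I → F} (hv : LI g v)
    (s : Finset I) (u : I → S) (h : ∑ i ∈ s, inl f g (u i) * inr f g (v i) = 0) :
    ∀ i ∈ s, u i = 0 := by
  letI := f.toAlgebra; letI := g.toAlgebra
  have hv' : LinearIndependent B v := (LI_iff g v).1 hv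
  have h2 : LinearIndependent S (fun i => (1 : S) ⊗ₜ[B] (v i)) :=
    Module.Flat.linearIndependent_one_tmul hv'
  rw [linearIndependent_iff'] at h2
  refine h2 s u ?_
  refine Eq.trans (Finset.sum_congr rfl fun i _ => ?_) h
  show _ = (u i ⊗ₜ[B] (1:F)) * ((1:S) ⊗ₜ[B] v i)
  rw [Algebra.TensorProduct.tmul_mul_tmul, TensorProduct.smul_tmul', smul_eq_mul, one_mul]

theorem Ten_rep {f : B →+* S} {g : B →+* F} {I : Type*} {v : I → F} (hv : SP g v) (t : Ten f g) :
    ∃ c : I →₀ S, t = ∑ i ∈ c.support, inl f g (c i) * inr f g (v i) := by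
  classical
  have key : ∀ c : I →₀ S, ∑ i ∈ c.support, inl f g (c i) * inr f g (v i)
    = c.sum (fun i a => inl f g a * inr f g (v i)) := fun c => rfl
  induction t using Ten_ind with
  | h a b =>
    obtain ⟨c, rfl⟩ := hv b
    refine ⟨c.mapRange (fun x => a * f x) (by simp), ?_⟩
    rw [key, Finsupp.sum_mapRange_index (by simp), map_sum]
    refine (Finset.mul_sum _ _ _).trans ?_
    refine Finset.sum_congr rfl fun i _ => ?_
    show _ = inl f g (a * f (c i)) * inr f g (v i)
    rw [map_mul, map_mul, ← inl_inr, mul_assoc]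
  | ha x y hx hy =>
    obtain ⟨c, rfl⟩ := hx
    obtain ⟨c', rfl⟩ := hy
    refine ⟨c + c', ?_⟩
    rw [key, key, key, Finsupp.sum_add_index' (by simp) (by intros; rw [map_add, add_mul])]

theorem Ten_red {B E F : Type u} [Field B] [CharZero B] [Field E] [Field F]
    (f : B →+* E) (g : B →+* F) : IsReduced (Ten f g) := by
  letI := f.toAlgebra; letI := g.toAlgebra
  exact (isReduced_tensor : IsReduced (E ⊗[B] F))

theorem IsD.zero {d : S → S} (h : IsD d) : d 0 = 0 := by
  have := h.add 0 0; simpa using this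

theorem IsD.one {d : S → S} (h : IsD d) : d 1 = 0 := by
  have := h.mul 1 1; simpa using this

theorem IsD.neg {d : S → S} (h : IsD d) (a) : d (-a) = - d a := by
  have := h.add a (-a)
  rw [add_neg_cancel, h.zero] at this
  exact (neg_eq_of_add_eq_zero_right this.symm).symm

theorem Ten_der (f : B →+* S) (g : B →+* F) {dB : B → B} {dS : S → S} {dF : F → F}
    (hB : IsD dB) (hS : IsD dS) (hF : IsD dF) (hf : ∀ b, f (dB b) = dS (f b))
    (hg : ∀ b, g (dB b) = dF (g b)) :
    ∃ d : Ten f g → Ten f g, IsD d ∧ (∀ a, d (inl f g a) = inl f g (dS a)) ∧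
      (∀ a, d (inr f g a) = inr f g (dF a)) := by
  letI := f.toAlgebra; letI := g.toAlgebra
  let d0 : S →+ F →+ Ten f g := AddMonoidHom.mk' (fun a => AddMonoidHom.mk'
    (fun b => inl f g (dS a) * inr f g b + inl f g a * inr f g (dF b))
    (fun x y => by rw [hF.add]; simp only [map_add]; ring))
    (fun x y => by
      ext b
      simp only [AddMonoidHom.mk'_apply, AddMonoidHom.add_apply]
      rw [hS.add]; simp only [map_add]; ring)
  have hd0 : ∀ (r : B) (m : S) (n : F), d0 (r • m) n = d0 m (r • n) := by
    intro r m n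
    have h1 : r • m = f r * m := rfl
    have h2 : r • n = g r * n := rfl
    simp only [d0, AddMonoidHom.mk'_apply]
    rw [h1, h2, hS.mul, hF.mul, ← hf, ← hg]
    simp only [map_add, map_mul, inl_inr]; ring
  let d : Ten f g →+ Ten f g := TensorProduct.liftAddHom d0 hd0
  have hd : ∀ a b, d (inl f g a * inr f g b) =
      inl f g (dS a) * inr f g b + inl f g a * inr f g (dF b) := by
    intro a b
    have e : inl f g a * inr f g b = (a ⊗ₜ[B] b : S ⊗[B] F) := by
      show (a ⊗ₜ[B] (1:F)) * ((1:S) ⊗ₜ[B] b) = _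
      rw [Algebra.TensorProduct.tmul_mul_tmul, mul_one, one_mul]
    rw [e]
    exact TensorProduct.liftAddHom_tmul d0 hd0 a b
  refine ⟨d, ⟨map_add d, fun x y => ?_⟩, fun a => ?_, fun a => ?_⟩
  · induction x using Ten_ind with
    | ha x x' hx hx' => rw [add_mul, map_add, hx, hx', map_add]; ring
    | h a b =>
      induction y using Ten_ind with
      | ha x x' hx hx' => rw [mul_add, map_add, hx, hx', map_add]; ring
      | h a' b' =>
        have : inl f g a * inr f g b * (inl f g a' * inr f g b') =
          inl f g (a * a') * inr f g (b * b') := by simp only [map_mul]; ring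
        rw [this, hd, hd, hd, hS.mul, hF.mul]
        simp only [map_mul, map_add]; ring
  · have := hd a 1
    rw [map_one, mul_one, mul_one, hF.one, map_zero, mul_zero, add_zero] at this
    exact this
  · have := hd 1 a
    rw [map_one, one_mul, one_mul, hS.one, map_zero, zero_mul, zero_add] at this
    exact this
end
end SNT

namespace SNT

theorem IsD.ofDFld (E : DFld.{u}) : IsD E.deriv := ⟨E.deriv_add, E.deriv_mul⟩

theorem fracD1 {R : Type u} [CommRing R] {d : R → R} (hd : IsD d) (P : Ideal R) [hP : P.IsPrime]
    (hdP : ∀ x ∈ P, d x ∈ P) {Q : Type*} [Field Q] [CharZero Q] (j : Q →+* R)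
    (K : Type u) [Field K] [Algebra (R ⧸ P) K] [IsFractionRing (R ⧸ P) K] :
    ∃ (M : DFld.{u}) (π : R →+* M.carrier), (∀ r, π r = 0 ↔ r ∈ P) ∧
      (∀ r, π (d r) = M.deriv (π r)) ∧ (∀ m, ∃ a b, π b ≠ 0 ∧ m = π a / π b) := by
  let π : R →+* K := (algebraMap (R ⧸ P) K).comp (Ideal.Quotient.mk P)
  have hπ : ∀ r, π r = 0 ↔ r ∈ P := by
    intro r
    rw [← Ideal.Quotient.eq_zero_iff_mem]
    exact map_eq_zero_iff _ (IsFractionRing.injective (R ⧸ P) K)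
  have hfr : ∀ m : K, ∃ a b, π b ≠ 0 ∧ m = π a / π b := by
    intro m
    obtain ⟨a, b, hb, rfl⟩ := IsFractionRing.div_surjective (A := R ⧸ P) m
    obtain ⟨a, rfl⟩ := Ideal.Quotient.mk_surjective a
    obtain ⟨b, rfl⟩ := Ideal.Quotient.mk_surjective b
    refine ⟨a, b, ?_, rfl⟩
    rw [Ne, hπ, ← Ideal.Quotient.eq_zero_iff_mem]
    exact nonZeroDivisors.ne_zero hb
  haveI : CharZero K := charZero_of_injective_ringHom (π.comp j).injective
  let Φ : R →+* TrivSqZeroExt K K :=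
    { toFun := fun r => (TrivSqZeroExt.inl (π r) + TrivSqZeroExt.inr (π (d r)))
      map_one' := by rw [hd.one]; simp
      map_zero' := by rw [hd.zero]; simp
      map_add' := fun x y => by rw [hd.add]; ext <;> simp
      map_mul' := fun x y => by rw [hd.mul]; ext <;> simp <;> ring }
  have hΦ0 : ∀ r ∈ P, Φ r = 0 := by
    intro r hr
    show TrivSqZeroExt.inl (π r) + TrivSqZeroExt.inr (π (d r)) = 0
    rw [(hπ r).2 hr, (hπ _).2 (hdP r hr)]; simp
  let Φ' : (R ⧸ P) →+* TrivSqZeroExt K K := Ideal.Quotient.lift P Φ hΦ0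
  have hu : ∀ y : nonZeroDivisors (R ⧸ P), IsUnit (Φ' y) := by
    rintro ⟨y, hy⟩
    obtain ⟨y, rfl⟩ := Ideal.Quotient.mk_surjective y
    rw [TrivSqZeroExt.isUnit_iff_isUnit_fst]
    have : (Φ' (Ideal.Quotient.mk P y)).fst = π y := by
      show (TrivSqZeroExt.inl (π y) + TrivSqZeroExt.inr (π (d y))).fst = _
      simp
    rw [this, isUnit_iff_ne_zero, Ne, hπ, ← Ideal.Quotient.eq_zero_iff_mem]
    exact nonZeroDivisors.ne_zero hy
  let Ψ : K →+* TrivSqZeroExt K K := IsLocalization.lift (M := nonZeroDivisors (R ⧸ P)) hu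
  have hΨ : ∀ r, Ψ (π r) = TrivSqZeroExt.inl (π r) + TrivSqZeroExt.inr (π (d r)) := by
    intro r
    exact IsLocalization.lift_eq hu (Ideal.Quotient.mk P r)
  have hfst : ∀ x, (Ψ x).fst = x := by
    intro x
    obtain ⟨a, b, hb, rfl⟩ := hfr x
    rw [eq_div_iff hb]
    have h1 : Ψ (π a / π b) * Ψ (π b) = Ψ (π a) := by rw [← map_mul, div_mul_cancel₀ _ hb]
    have h2 := congrArg TrivSqZeroExt.fst h1
    rw [TrivSqZeroExt.fst_mul, hΨ b, hΨ a] at h2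
    simpa using h2
  refine ⟨⟨K, fun x => (Ψ x).snd, fun a b => by simp, fun a b => ?_⟩, π, hπ, fun r => ?_, hfr⟩
  · rw [map_mul, TrivSqZeroExt.snd_mul, hfst, hfst]
    simp [mul_comm]; ring
  · show _ = (Ψ (π r)).snd
    rw [hΨ]; simp

theorem fracD {R : Type u} [CommRing R] {d : R → R} (hd : IsD d) (P : Ideal R) [hP : P.IsPrime]
    (hdP : ∀ x ∈ P, d x ∈ P) {Q : Type*} [Field Q] [CharZero Q] (j : Q →+* R) :
    ∃ (M : DFld.{u}) (π : R →+* M.carrier), (∀ r, π r = 0 ↔ r ∈ P) ∧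
      (∀ r, π (d r) = M.deriv (π r)) ∧ (∀ m, ∃ a b, π b ≠ 0 ∧ m = π a / π b) :=
  fracD1 hd P hdP j (FractionRing (R ⧸ P))

/-- minimal primes of a reduced differential ring are differential -/
theorem min_prime {R : Type u} [CommRing R] [IsReduced R] {d : R → R} (hd : IsD d)
    (w : R) (hw : w ≠ 0) : ∃ P : Ideal R, P.IsPrime ∧ w ∉ P ∧ (∀ x ∈ P, d x ∈ P) ∧
      ∀ x ∈ P, ∃ v ∉ P, v * x = 0 := by
  have h1 : w ∉ nilradical R := by
    rw [mem_nilradical]; exact fun h => hw h.eq_zero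
  rw [nilradical, ← Ideal.sInf_minimalPrimes, Ideal.mem_sInf] at h1
  push Not at h1
  obtain ⟨P, hP, hwP⟩ := h1
  haveI := hP.1.1
  have h2 : ∀ x ∈ P, ∃ v ∉ P, v * x = 0 := by
    intro x hx
    by_contra hcon
    push Not at hcon
    let S : Submonoid R := P.primeCompl ⊔ Submonoid.powers x
    have hS : ((⊥ : Ideal R) : Set R) ∩ S = ∅ := by
      ext t
      simp only [Set.mem_inter_iff, Set.mem_empty_iff_false, iff_false, not_and]
      intro ht hts
      have ht : t = 0 := by simpa using ht
      obtain ⟨v, hv, y, ⟨n, rfl⟩, hvy⟩ := Submonoid.mem_sup.1 hts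
      have hvy : v * x ^ n = 0 := hvy.trans ht
      have : IsNilpotent (v * x) := ⟨n+1, by
        rw [mul_pow, pow_succ v, pow_succ x]
        linear_combination (v ^ n * x) * hvy⟩
      exact hcon v hv this.eq_zero
    obtain ⟨Q, hQ, -, hdis⟩ := Ideal.exists_le_prime_disjoint (⊥ : Ideal R) S
      (Set.disjoint_iff_inter_eq_empty.2 hS)
    have hQP : Q ≤ P := by
      intro t ht
      by_contra htP
      exact Set.disjoint_left.1 hdis ht
        ((le_sup_left : P.primeCompl ≤ S) htP)
    have := hP.2 ⟨hQ, bot_le⟩ hQP hx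
    exact Set.disjoint_left.1 hdis this
        ((le_sup_right : _ ≤ S) (Submonoid.mem_powers x))
  refine ⟨P, hP.1.1, hwP, fun x hx => ?_, h2⟩
  obtain ⟨v, hv, hvx⟩ := h2 x hx
  have h3 : d v * x + v * d x = 0 := by rw [← hd.mul, hvx, hd.zero]
  have h4 : v * v * d x ∈ P := by
    have : v * v * d x = 0 := by linear_combination v * h3 - d v * hvx
    rw [this]; exact zero_mem _
  rcases hP.1.1.mem_or_mem h4 with h | h
  · rcases hP.1.1.mem_or_mem h with h | h <;> exact absurd h hv
  · exact h

/-- L3 : generic amalgams -/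
theorem amalgam {B E F : DFld.{u}} (f : DHom B E) (g : DHom B F) (w : Ten f.f g.f) (hw : w ≠ 0) :
    ∃ (M : DFld.{u}) (ι : DHom E M) (σ : DHom F M) (h : ∀ b, ι (f b) = σ (g b)),
      ev ι.f σ.f h w ≠ 0 ∧
      (∀ r, ev ι.f σ.f h r = 0 → ∃ v, ev ι.f σ.f h v ≠ 0 ∧ v * r = 0) ∧
      (∀ m, ∃ a b, ev ι.f σ.f h b ≠ 0 ∧ m = ev ι.f σ.f h a / ev ι.f σ.f h b) := by
  haveI := Ten_red f.f g.f
  obtain ⟨d, hd, hl, hr⟩ := Ten_der f.f g.f (.ofDFld B) (.ofDFld E) (.ofDFld F) f.comm g.comm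
  obtain ⟨P, hP, hwP, hdP, hv⟩ := min_prime hd w hw
  obtain ⟨M, π, h0, hπd, hfr⟩ := fracD hd P hdP (inl f.f g.f)
  let ι : DHom E M := ⟨π.comp (inl f.f g.f), fun x => by simp [← hl, hπd]⟩
  let σ : DHom F M := ⟨π.comp (inr f.f g.f), fun x => by simp [← hr, hπd]⟩
  have h : ∀ b, ι (f b) = σ (g b) := fun b => congrArg π (inl_inr f.f g.f b)
  have hev : ∀ t, ev ι.f σ.f h t = π t := by
    intro t
    induction t using Ten_ind with
    | h a b => rw [map_mul, ev_inl, ev_inr, map_mul]; rfl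
    | ha x y hx hy => rw [map_add, map_add, hx, hy]
  refine ⟨M, ι, σ, h, ?_, fun r hr0 => ?_, fun m => ?_⟩
  · rw [hev, Ne, h0]; exact hwP
  · rw [hev, h0] at hr0
    obtain ⟨v, hvP, hv0⟩ := hv r hr0
    exact ⟨v, by rw [hev, Ne, h0]; exact hvP, hv0⟩
  · obtain ⟨a, b, hb, rfl⟩ := hfr m
    exact ⟨a, b, by rwa [hev], by rw [hev, hev]⟩

theorem LI_one {B F : Type u} [Field B] [Field F] (g : B →+* F) (x : F) (hx : x ≠ 0) :
    LI g (fun _ : Unit => x) := by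
  intro s c h i hi
  have : s = {()} := by ext ⟨⟩; simpa using hi
  rw [this] at h
  simp [hx] at h
  exact h

theorem Ten_one_ne {B E F : DFld.{u}} (f : DHom B E) (g : DHom B F) : (1 : Ten f.f g.f) ≠ 0 := by
  intro h
  have := Ten_indep (f := f.f) (LI_one g.f 1 one_ne_zero) {()} (fun _ => 1) (by simpa using h) () (by simp)
  exact one_ne_zero this

/-- plain amalgam -/
theorem amalgam0 {B E F : DFld.{u}} (f : DHom B E) (g : DHom B F) :
    ∃ (M : DFld.{u}) (ι : DHom E M) (σ : DHom F M), ∀ b, ι (f b) = σ (g b) := by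
  obtain ⟨M, ι, σ, h, -⟩ := amalgam f g 1 (Ten_one_ne f g)
  exact ⟨M, ι, σ, h⟩

/-- Zorn: a differential prime avoiding z, maximal. -/
theorem diff_prime {R : Type u} [CommRing R] [Algebra ℚ R] {d : R → R} (hd : IsD d) (z : R)
    (hz : ¬ IsNilpotent z) : ∃ P : Ideal R, P.IsPrime ∧ z ∉ P ∧ (∀ x ∈ P, d x ∈ P) ∧
      ∀ J : Ideal R, P < J → (∀ x ∈ J, d x ∈ J) → ∃ n, z ^ n ∈ J := by
  let S : Set (Ideal R) := {I | (∀ x ∈ I, d x ∈ I) ∧ ∀ n, z ^ n ∉ I}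
  have hbot : (⊥ : Ideal R) ∈ S := by
    refine ⟨fun x hx => ?_, fun n hn => hz ⟨n, by simpa using hn⟩⟩
    have hx : x = 0 := by simpa using hx
    rw [hx, hd.zero]; exact zero_mem _
  obtain ⟨P, -, hP⟩ := zorn_le_nonempty₀ S (by
    intro c hc hchain y hy
    refine ⟨sSup c, ⟨fun x hx => ?_, fun n hn => ?_⟩, fun I hI => le_sSup hI⟩
    · obtain ⟨I, hI, hxI⟩ := (Submodule.mem_sSup_of_directed ⟨y, hy⟩ hchain.directedOn).1 hx
      exact (Submodule.mem_sSup_of_directed ⟨y, hy⟩ hchain.directedOn).2 ⟨I, hI, (hc hI).1 x hxI⟩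
    · obtain ⟨I, hI, hxI⟩ := (Submodule.mem_sSup_of_directed ⟨y, hy⟩ hchain.directedOn).1 hn
      exact (hc hI).2 n hxI) ⊥ hbot
  have hmax : ∀ J : Ideal R, P ≤ J → (∀ x ∈ J, d x ∈ J) → J ≤ P ∨ ∃ n, z ^ n ∈ J := by
    intro J hPJ hJ
    by_cases h : ∃ n, z ^ n ∈ J
    · exact Or.inr h
    · push Not at h
      exact Or.inl (hP.2 ⟨hJ, h⟩ hPJ)
  have hPd := hP.1.1
  have hPz := hP.1.2
  -- radical of P is differential
  have hpow : ∀ (x : R) (n : ℕ), d (x ^ (n+1)) = (n+1 : ℚ) • (x ^ n * d x) := by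
    intro x n
    induction n with
    | zero => simp
    | succ n ih =>
      rw [pow_succ, hd.mul, ih]
      have : (((n + 1 : ℕ) : ℚ) + 1) = (n + 1 : ℚ) + 1 := by push_cast; ring
      rw [this, add_smul (n + 1 : ℚ) 1, one_smul, Algebra.smul_def, Algebra.smul_def]
      ring
  have hstep : ∀ (x : R) (n j : ℕ), x ^ (n+1) * (d x) ^ j ∈ P → x ^ n * (d x) ^ (j+2) ∈ P := by
    intro x n j h
    have h1 := hPd _ h
    rw [hd.mul, hpow] at h1
    have h2 : ((n+1 : ℚ) • (x ^ n * d x)) * (d x) ^ j * d x + x ^ (n+1) * d (d x ^ j) * d x ∈ P := by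
      have := P.mul_mem_right (d x) h1
      convert this using 1; ring
    have h3 : x ^ (n+1) * d (d x ^ j) * d x ∈ P := by
      cases j with
      | zero => simp [hd.one]
      | succ j =>
        rw [hpow]
        have := P.mul_mem_left (algebraMap ℚ R (j+1) * d (d x)) h
        convert this using 1
        rw [Algebra.smul_def]; ring
    have h4 := P.sub_mem h2 h3
    rw [add_sub_cancel_right] at h4
    have h5 := P.mul_mem_left (algebraMap ℚ R ((n+1 : ℚ)⁻¹)) h4
    convert h5 using 1
    rw [Algebra.smul_def]
    have : algebraMap ℚ R ((n+1 : ℚ)⁻¹) * algebraMap ℚ R (n+1) = 1 := by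
      rw [← map_mul, inv_mul_cancel₀ (by positivity), map_one]
    linear_combination (-(x ^ n * d x ^ (j+2))) * this
  have hrad : P.IsRadical := by
    have h1 : ∀ x ∈ P.radical, d x ∈ P.radical := by
      rintro x ⟨n, hn⟩
      have : ∀ m ≤ n, ∃ j, x ^ (n - m) * (d x) ^ j ∈ P := by
        intro m
        induction m with
        | zero => exact fun _ => ⟨0, by simpa using hn⟩
        | succ m ih =>
          intro hm
          obtain ⟨j, hj⟩ := ih (by omega)
          refine ⟨j + 2, hstep x (n - (m+1)) j ?_⟩
          convert hj using 3; omega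
      obtain ⟨j, hj⟩ := this n le_rfl
      exact ⟨j, by simpa using hj⟩
    rcases hmax P.radical Ideal.le_radical h1 with h | ⟨n, m, hn⟩
    · exact h
    · exact absurd (by rwa [← pow_mul] at hn) (hPz (n*m))
  have hcolon : ∀ a b, a * b ∈ P → a * d b ∈ P := by
    intro a b hab
    have h1 := hPd _ hab
    rw [hd.mul] at h1
    have h2 : (a * d b) ^ 2 ∈ P := by
      have h3 := P.mul_mem_left (a * d b) h1
      have h4 := P.mul_mem_left (d a * d b) hab
      have := P.sub_mem h3 h4
      convert this using 1; ring
    exact hrad ⟨2, h2⟩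
  have col : ∀ a : R, a ∉ P → ∃ n, z ^ n * a ∈ P ∨ (∀ b, b * a ∈ P → b ∈ P) := by
    intro a ha
    let J : Ideal R := { carrier := {b | b * a ∈ P}
                         zero_mem' := by simp
                         add_mem' := fun {x y} hx hy => by
                          have := P.add_mem hx hy
                          simpa [add_mul] using this
                         smul_mem' := fun c x hx => by
                          have := P.mul_mem_left c hx
                          simpa [mul_assoc] using this }
    rcases hmax J (fun x hx => P.mul_mem_right a hx) (fun x hx => by
        have : a * d x ∈ P := hcolon a x (by rw [mul_comm]; exact hx)
        show d x * a ∈ P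
        rwa [mul_comm]) with h | ⟨n, hn⟩
    · exact ⟨0, Or.inr fun b hb => h hb⟩
    · exact ⟨n, Or.inl hn⟩
  have hzreg : ∀ n b, z ^ n * b ∈ P → b ∈ P := by
    intro n b hb
    let J : Ideal R := { carrier := {b | ∃ n, z ^ n * b ∈ P}
                         zero_mem' := ⟨0, by simp⟩
                         add_mem' := fun {x y} ⟨n, hx⟩ ⟨m, hy⟩ => ⟨n + m, by
                          have := P.add_mem (P.mul_mem_left (z^m) hx) (P.mul_mem_left (z^n) hy)
                          convert this using 1; ring⟩
                         smul_mem' := fun c x ⟨n, hx⟩ => ⟨n, by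
                          have := P.mul_mem_left c hx
                          convert this using 1
                          simp only [smul_eq_mul]; ring⟩ }
    rcases hmax J (fun x hx => ⟨0, by simpa using hx⟩) (fun x ⟨n, hx⟩ => ⟨n, hcolon _ _ hx⟩)
      with h | ⟨m, l, hn⟩
    · exact h ⟨n, hb⟩
    · exact absurd (by rwa [← pow_add] at hn) (hPz _)
  have hprime : P.IsPrime := by
    refine ⟨fun h => hPz 0 (by rw [h]; trivial), fun {a b} hab => ?_⟩
    by_contra hcon
    push Not at hcon
    obtain ⟨n, h | h⟩ := col b hcon.2
    · exact hcon.2 (hzreg n b h)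
    · exact hcon.1 (h a hab)
  refine ⟨P, hprime, fun h => hPz 1 (by simpa using h), hPd, fun J hJ hJd => ?_⟩
  rcases hmax J hJ.le hJd with h | h
  · exact absurd h (not_le_of_gt hJ)
  · exact h

end SNT

namespace SNT
variable {A B E F M N : DFld.{u}}

theorem LI_con (ι : DHom E M) {I : Type*} (c : I → M.carrier) (hc : ∀ i, c i ∈ con M)
    (hli : LI (ι.f.comp (con E).subtype) c) : LI ι.f c := by
  classical
  intro s
  induction s using Finset.induction_on with
  | empty => intro a h i hi; simp at hi
  | insert i0 s hi0 ih =>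
    intro a h
    by_cases h0 : a i0 = 0
    · rw [Finset.sum_insert hi0, h0, map_zero, zero_mul, zero_add] at h
      intro i hi
      rcases Finset.mem_insert.1 hi with rfl | hi
      · exact h0
      · exact ih a h i hi
    · exfalso
      have h1 : c i0 + ∑ i ∈ s, ι (a i / a i0) * c i = 0 := by
        rw [Finset.sum_insert hi0] at h
        have h0' : ι (a i0) ≠ 0 := fun h => h0 (ι.inj (h.trans (map_zero ι.f).symm))
        apply mul_left_cancel₀ h0'
        rw [mul_zero, ← h, mul_add, Finset.mul_sum]
        congr 1
        refine Finset.sum_congr rfl fun i _ => ?_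
        have : ι (a i / a i0) = ι (a i) / ι (a i0) := map_div₀ ι.f _ _
        rw [this]; field_simp
      have h2 := congrArg M.deriv h1
      rw [M.deriv_add, d_sum, d_zero, (hc i0 : M.deriv _ = 0), zero_add] at h2
      have h3 : ∑ i ∈ s, ι (E.deriv (a i / a i0)) * c i = 0 := by
        rw [← h2]
        refine Finset.sum_congr rfl fun i _ => ?_
        rw [M.deriv_mul, (hc i : M.deriv _ = 0), mul_zero, add_zero, ι.comm]
      have h4 := ih _ h3
      let e : I → con E := fun i => if h : i ∈ s then ⟨a i / a i0, h4 i h⟩ else 1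
      have he : ∀ i ∈ s, ((e i : con E) : E.carrier) = a i / a i0 := by
        intro i hi; simp only [e, dif_pos hi]
      have he0 : e i0 = 1 := by simp only [e, dif_neg hi0]
      have := hli (insert i0 s) e (by
        rw [Finset.sum_insert hi0, he0, ← h1]
        congr 1
        · simp
        · refine Finset.sum_congr rfl fun i hi => ?_
          show ι.f ((e i : con E) : E.carrier) * _ = _
          rw [he i hi]) i0 (Finset.mem_insert_self _ _)
      rw [he0] at this
      exact one_ne_zero this

/-- S-coefficients combos -/
def RP (ι : DHom E M) {I : Type u} (b : I → M.carrier) (S : Subfield E.carrier) (p : M.carrier) :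
    Prop := ∃ f : I →₀ E.carrier, (∀ i, f i ∈ S) ∧ p = f.sum (fun i a => ι.f a * b i)

theorem RP_mul0 (ι : DHom E M) {I : Type u} (b : I → M.carrier) (S : Subfield E.carrier)
    (hb : ∀ i, b i ∈ con M) (hsp : ∀ γ ∈ con M, ∃ c : I →₀ con E, 
      γ = ∑ i ∈ c.support, ι.f (c i) * b i) (hS : con E ≤ S) :
    (∀ s ∈ S, ∀ γ ∈ con M, RP ι b S (ι.f s * γ)) ∧ RP ι b S 0 ∧
    (∀ p q, RP ι b S p → RP ι b S q → RP ι b S (p + q)) ∧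
    (∀ p q, RP ι b S p → RP ι b S q → RP ι b S (p * q)) := by
  classical
  have h0 : RP ι b S 0 := ⟨0, fun i => zero_mem _, by simp⟩
  have hadd : ∀ p q, RP ι b S p → RP ι b S q → RP ι b S (p + q) := by
    rintro p q ⟨f, hf, rfl⟩ ⟨g, hg, rfl⟩
    exact ⟨f + g, fun i => add_mem (hf i) (hg i), by
      rw [Finsupp.sum_add_index' (by simp) (by intros; rw [map_add, add_mul])]⟩
  have hsum : ∀ {J : Type u} (s : Finset J) (p : J → M.carrier), (∀ j ∈ s, RP ι b S (p j)) →
      RP ι b S (∑ j ∈ s, p j) := by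
    intro J s p hp
    induction s using Finset.induction_on with
    | empty => simpa using h0
    | insert a s ha ih =>
      rw [Finset.sum_insert ha]
      exact hadd _ _ (hp _ (Finset.mem_insert_self _ _))
        (ih fun j hj => hp j (Finset.mem_insert_of_mem hj))
  have hgen : ∀ s ∈ S, ∀ γ ∈ con M, RP ι b S (ι.f s * γ) := by
    intro s hs γ hγ
    obtain ⟨c, hc⟩ := hsp γ hγ
    refine ⟨c.mapRange (fun x : con E => s * (x : E.carrier)) (by simp), fun i => ?_, ?_⟩
    · exact mul_mem hs (hS (c i).2)
    · rw [Finsupp.sum_mapRange_index (by simp)]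
      rw [hc, Finset.mul_sum]
      refine Finset.sum_congr rfl fun i _ => ?_
      show ι.f s * (ι.f (c i) * b i) = ι.f (s * c i) * b i
      rw [map_mul, mul_assoc]
  have hmul : ∀ p q, RP ι b S p → RP ι b S q → RP ι b S (p * q) := by
    rintro p q ⟨f, hf, rfl⟩ ⟨g, hg, rfl⟩
    rw [Finsupp.sum, Finsupp.sum, Finset.sum_mul_sum]
    refine hsum _ _ fun i _ => hsum _ _ fun j _ => ?_
    have : ι.f (f i) * b i * (ι.f (g j) * b j) = ι.f (f i * g j) * (b i * b j) := by
      rw [map_mul]; ring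
    rw [this]
    exact hgen _ (mul_mem (hf i) (hg j)) _ (mul_mem (hb i) (hb j))
  exact ⟨hgen, h0, hadd, hmul⟩

theorem exists_rep (ι : DHom E M) : ∃ (I : Type u) (b : I → M.carrier),
    (∀ i, b i ∈ con M) ∧ LI ι.f b ∧
    (∀ γ ∈ con M, ∃ c : I →₀ con E, γ = ∑ i ∈ c.support, ι.f (c i) * b i) ∧
    ∀ S : Subfield E.carrier, con E ≤ S → ∀ m ∈ S.map ι.f ⊔ con M,
      (∃ p q, RP ι b S p ∧ RP ι b S q ∧ q ≠ 0 ∧ m = p / q) := by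
  classical
  let h : con E →+* con M := (ι.f.comp (con E).subtype).codRestrict (con M) (fun x => ι.cmem x.2)
  obtain ⟨I, v, hli, hsp⟩ := exists_basis h
  let b : I → M.carrier := fun i => (v i : M.carrier)
  have hsp' : ∀ γ ∈ con M, ∃ c : I →₀ con E, γ = ∑ i ∈ c.support, ι.f (c i) * b i := by
    intro γ hγ
    obtain ⟨c, hc⟩ := hsp ⟨γ, hγ⟩
    have := congrArg (Subtype.val) hc
    rw [AddSubmonoidClass.coe_finsetSum] at this
    exact ⟨c, this⟩
  refine ⟨I, b, fun i => (v i).2, ?_, hsp', fun S hS m hm => ?_⟩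
  · apply LI_con ι b (fun i => (v i).2)
    intro s c hsum
    apply hli s c
    apply Subtype.ext
    rw [ZeroMemClass.coe_zero, ← hsum, AddSubmonoidClass.coe_finsetSum]
    rfl
  · obtain ⟨hgen, h0, hadd, hmul⟩ := RP_mul0 ι b S (fun i => (v i).2) hsp' hS
    have hcl : ∀ p ∈ Subring.closure ((S.map ι.f : Set M.carrier) ∪ (con M : Set M.carrier)),
        RP ι b S p := by
      intro p hp
      induction hp using Subring.closure_induction with
      | mem x hx =>
        rcases hx with ⟨s, hs, rfl⟩ | hx
        · have := hgen s hs 1 (one_mem _); rwa [mul_one] at this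
        · have := hgen 1 (one_mem _) x hx; rwa [map_one, one_mul] at this
      | zero => exact h0
      | one => have := hgen 1 (one_mem _) 1 (one_mem _); rwa [map_one, one_mul] at this
      | add x y _ _ hx hy => exact hadd _ _ hx hy
      | neg x _ hx =>
        have := hmul _ _ (hgen (-1) (neg_mem (one_mem _)) 1 (one_mem _)) hx
        simpa using this
      | mul x y _ _ hx hy => exact hmul _ _ hx hy
    have : m ∈ Subfield.closure ((S.map ι.f : Set M.carrier) ∪ (con M : Set M.carrier)) := by
      rw [Subfield.closure_union, Subfield.closure_eq, Subfield.closure_eq]; exact hm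
    rw [Subfield.mem_closure_iff] at this
    obtain ⟨y, hy, z, hz, rfl⟩ := this
    by_cases hz0 : z = 0
    · refine ⟨0, 1, h0, ?_, one_ne_zero, by simp [hz0]⟩
      have := hgen 1 (one_mem _) 1 (one_mem _); rwa [map_one, one_mul] at this
    · exact ⟨y, z, hcl y hy, hcl z hz, hz0, rfl⟩

theorem LI_sum {ι : DHom E M} {I : Type u} {b : I → M.carrier} (hb : LI ι.f b)
    (f : I →₀ E.carrier) (h : f.sum (fun i a => ι.f a * b i) = 0) : f = 0 := by
  ext i
  by_cases hi : i ∈ f.support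
  · exact hb _ f h i hi
  · simpa using hi

theorem desc (h : DHom M N) (S : Subfield M.carrier) (hS : con M ≤ S) (x : M.carrier)
    (hu : h x ∈ S.map h.f ⊔ con N) : x ∈ S := by
  obtain ⟨I, b, hb, hli, -, hrep⟩ := exists_rep h
  obtain ⟨p, q, ⟨f, hf, rfl⟩, ⟨g, hg, rfl⟩, hq, he⟩ := hrep S hS _ hu
  rw [eq_div_iff hq] at he
  have h1 : f = g.mapRange (fun y => x * y) (by simp) := by
    rw [← sub_eq_zero]
    apply LI_sum hli
    rw [Finsupp.sum_sub_index (by intros; rw [map_sub, sub_mul]), ← he,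
      Finsupp.sum_mapRange_index (by simp), sub_eq_zero]
    rw [Finsupp.sum, Finset.mul_sum]
    refine Finset.sum_congr rfl fun i _ => ?_
    show h.f x * (h.f (g i) * b i) = h.f (x * g i) * b i
    rw [map_mul, mul_assoc]
  have h2 : ∃ i, g i ≠ 0 := by
    by_contra hcon
    push Not at hcon
    have : g = 0 := Finsupp.ext hcon
    rw [this] at hq; simp at hq
  obtain ⟨i, hi⟩ := h2
  have h3 : f i = x * g i := by rw [h1]; simp
  have : x = f i / g i := by rw [h3]; field_simp
  rw [this]; exact div_mem (hf i) (hg i)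

/-- common denominators -/
theorem rep_common (ι : DHom E M) {I : Type u} {b : I → M.carrier} (hb : ∀ i, b i ∈ con M)
    (hsp : ∀ γ ∈ con M, ∃ c : I →₀ con E, γ = ∑ i ∈ c.support, ι.f (c i) * b i) 
    (S : Subfield E.carrier) (hS : con E ≤ S) 
    (hrep : ∀ m ∈ S.map ι.f ⊔ con M, ∃ p q, RP ι b S p ∧ RP ι b S q ∧ q ≠ 0 ∧ m = p / q)
    {J : Type u} (s : Finset J) (m : J → M.carrier) (hm : ∀ j, m j ∈ S.map ι.f ⊔ con M) :
    ∃ Q, Q ≠ 0 ∧ RP ι b S Q ∧ ∀ j ∈ s, RP ι b S (Q * m j) := by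
  classical
  obtain ⟨hgen, h0, hadd, hmul⟩ := RP_mul0 ι b S hb hsp hS
  choose p q hp hq hq0 he using fun j => hrep (m j) (hm j)
  have hprod : ∀ t : Finset J, RP ι b S (∏ j ∈ t, q j) := by
    intro t
    induction t using Finset.induction_on with
    | empty => 
      have := hgen 1 (one_mem _) 1 (one_mem _)
      rw [map_one, one_mul] at this
      simpa using this
    | insert a t ha ih => rw [Finset.prod_insert ha]; exact hmul _ _ (hq a) ih
  refine ⟨∏ j ∈ s, q j, Finset.prod_ne_zero_iff.2 fun j _ => hq0 j, hprod s, fun j hj => ?_⟩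
  rw [← Finset.mul_prod_erase s q hj, he j]
  have : q j * (∏ x ∈ s.erase j, q x) * (p j / q j) = p j * ∏ x ∈ s.erase j, q x := by
    have := hq0 j
    field_simp
  rw [this]
  exact hmul _ _ (hp j) (hprod _)

theorem con_le_cl (ι : DHom A M) : con M ≤ cl ι := le_sup_right

theorem mem_cl (ι : DHom A M) (x) : ι x ∈ cl ι := (le_sup_left : _ ≤ cl ι) ⟨x, rfl⟩

theorem map_con_le (h : DHom M N) : (con M).map h.f ≤ con N := by
  rintro _ ⟨x, hx, rfl⟩; exact h.cmem hx

theorem cl_map_le (h : DHom M N) (ι : DHom A M) : (cl ι).map h.f ≤ cl (h.comp ι) := by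
  rw [cl, Subfield.map_sup]
  refine sup_le ?_ ((map_con_le h).trans (con_le_cl _))
  rintro _ ⟨_, ⟨x, rfl⟩, rfl⟩
  exact mem_cl (h.comp ι) x

theorem desc_cl (h : DHom M N) (ι : DHom A M) (x) (hx : h x ∈ cl (h.comp ι)) : x ∈ cl ι := by
  apply desc h _ (con_le_cl ι)
  refine (sup_le ?_ le_sup_right : cl (h.comp ι) ≤ _) hx
  rintro _ ⟨x, rfl⟩
  exact (le_sup_left : _ ≤ (cl ι).map h.f ⊔ con N) ⟨_, mem_cl ι x, rfl⟩

end SNT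

namespace SNT
variable {A B E F M N : DFld.{u}}

def RG (g : DHom B F) (s : Set F.carrier) : Subring F.carrier :=
  Subring.closure (Set.range g.f ∪ s)

def FrS (R : Subring F.carrier) : Prop := ∀ x, ∃ a ∈ R, ∃ b ∈ R, b ≠ 0 ∧ x = a / b

def DR (E : DFld.{u}) (R : Subring E.carrier) : Prop := ∀ x ∈ R, E.deriv x ∈ R

theorem DR_closure {t : Set E.carrier} (h : ∀ x ∈ t, E.deriv x ∈ Subring.closure t) :
    DR E (Subring.closure t) := by
  intro x hx
  induction hx using Subring.closure_induction with
  | mem x hx => exact h x hx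
  | zero => rw [d_zero]; exact zero_mem _
  | one => rw [d_one]; exact zero_mem _
  | add x y hx hy h1 h2 => rw [E.deriv_add]; exact add_mem h1 h2
  | neg x hx h1 => rw [d_neg]; exact neg_mem h1
  | mul x y hx hy h1 h2 =>
    rw [E.deriv_mul]; exact add_mem (mul_mem h1 hy) (mul_mem hx h2)

theorem RG_base (g : DHom B F) (s : Set F.carrier) (b) : g b ∈ RG g s :=
  Subring.subset_closure (Or.inl ⟨b, rfl⟩)

theorem RG_gen (g : DHom B F) (s : Set F.carrier) {x} (h : x ∈ s) : x ∈ RG g s :=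
  Subring.subset_closure (Or.inr h)

theorem RG_mono (g : DHom B F) {s t : Set F.carrier} (h : s ⊆ t) : RG g s ≤ RG g t :=
  Subring.closure_mono (Set.union_subset_union_right _ h)

theorem DR_RG (g : DHom B F) (s : Set F.carrier) (h : ∀ x ∈ s, F.deriv x ∈ RG g s) :
    DR F (RG g s) := by
  apply DR_closure
  rintro x (⟨b, rfl⟩ | hx)
  · rw [← g.comm]; exact RG_base g s _
  · exact h x hx

theorem RG_inv (g : DHom B F) (s : Set F.carrier) (h : DR F (RG g s)) (u) (hu : u ∈ RG g s) :
    DR F (RG g (insert u⁻¹ s)) := by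
  apply DR_RG
  have hm := RG_mono g (Set.subset_insert u⁻¹ s)
  have hi : u⁻¹ ∈ RG g (insert u⁻¹ s) := RG_gen g _ (Set.mem_insert _ _)
  rintro x (rfl | hx)
  · rw [d_inv, div_eq_mul_inv, ← inv_pow]
    exact mul_mem (neg_mem (hm (h _ hu))) (pow_mem hi 2)
  · exact hm (h _ (RG_gen g s hx))

theorem FrS_mono {R S : Subring F.carrier} (h : R ≤ S) (hR : FrS R) : FrS S := by
  intro x
  obtain ⟨a, ha, b, hb, h0, e⟩ := hR x
  exact ⟨a, h ha, b, h hb, h0, e⟩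

theorem exists_RG (g : DHom B F)
    (hfg : ∃ s : Finset F.carrier, g.f.fieldRange ⊔ Subfield.closure (s : Set F.carrier) = ⊤) :
    ∃ s : Finset F.carrier, DR F (RG g s) ∧ FrS (RG g s) := by
  classical
  obtain ⟨s, hs⟩ := hfg
  have hfr : FrS (RG g s) := by
    intro x
    have hx : x ∈ Subfield.closure (Set.range g.f ∪ (s : Set F.carrier)) := by
      rw [Subfield.closure_union, ← RingHom.coe_fieldRange, Subfield.closure_eq, hs]; trivial
    rw [Subfield.mem_closure_iff] at hx
    obtain ⟨y, hy, z, hz, rfl⟩ := hx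
    by_cases h0 : z = 0
    · exact ⟨0, zero_mem _, 1, one_mem _, one_ne_zero, by simp [h0]⟩
    · exact ⟨y, hy, z, hz, h0, rfl⟩
  choose a ha b hb h0 he using fun x => hfr (F.deriv x)
  let q := ∏ x ∈ s, b x
  have hq : q ∈ RG g s := prod_mem fun x _ => hb x
  have hq0 : q ≠ 0 := Finset.prod_ne_zero_iff.2 fun x _ => h0 x
  have hm := RG_mono g (Set.subset_insert q⁻¹ (s : Set F.carrier))
  have hi : q⁻¹ ∈ RG g (insert q⁻¹ (s : Set F.carrier)) := RG_gen g _ (Set.mem_insert _ _)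
  have hx : ∀ x ∈ RG g s, F.deriv x ∈ RG g (insert q⁻¹ (s : Set F.carrier)) := by
    intro x hx
    induction hx using Subring.closure_induction with
    | mem x hx =>
      rcases hx with ⟨c, rfl⟩ | hx
      · rw [← g.comm]; exact RG_base _ _ _
      · rw [he x]
        have : a x / b x = a x * (∏ y ∈ s.erase x, b y) * q⁻¹ := by
          have : q = b x * ∏ y ∈ s.erase x, b y := (Finset.mul_prod_erase s b hx).symm
          have h2 : ∏ y ∈ s.erase x, b y ≠ 0 := Finset.prod_ne_zero_iff.2 fun x _ => h0 x
          rw [this]; have := h0 x; field_simp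
        rw [this]
        exact mul_mem (mul_mem (hm (ha x)) (hm (prod_mem fun y _ => hb y))) hi
    | zero => rw [d_zero]; exact zero_mem _
    | one => rw [d_one]; exact zero_mem _
    | add x y hx hy h1 h2 => rw [F.deriv_add]; exact add_mem h1 h2
    | neg x hx h1 => rw [d_neg]; exact neg_mem h1
    | mul x y hx hy h1 h2 =>
      rw [F.deriv_mul]; exact add_mem (mul_mem h1 (hm hy)) (mul_mem (hm hx) h2)
  refine ⟨insert q⁻¹ s, ?_, ?_⟩
  · rw [Finset.coe_insert]
    apply DR_RG
    rintro x (rfl | hxs)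
    · rw [d_inv, div_eq_mul_inv, ← inv_pow]
      exact mul_mem (neg_mem (hx _ hq)) (pow_mem hi 2)
    · exact hx _ (RG_gen _ _ hxs)
  · rw [Finset.coe_insert]
    exact FrS_mono hm hfr

theorem extend (R : Subring F.carrier) (hD : DR F R) (hfr : FrS R) (φ : R →+* M.carrier)
    (hinj : ∀ x, φ x = 0 → x = 0)
    (hφ : ∀ x : R, φ ⟨F.deriv x, hD x x.2⟩ = M.deriv (φ x)) :
    ∃ ψ : DHom F M, ∀ x : R, ψ x = φ x := by
  haveI : IsFractionRing R F.carrier := by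
    apply IsFractionRing.of_field
    intro z
    obtain ⟨a, ha, b, hb, h0, e⟩ := hfr z
    exact ⟨⟨a, ha⟩, ⟨b, hb⟩, e⟩
  have hinj' : Function.Injective φ := (injective_iff_map_eq_zero φ).2 hinj
  let ψ : F.carrier →+* M.carrier := IsFractionRing.lift hinj'
  have hψ : ∀ x : R, ψ x = φ x := fun x => IsFractionRing.lift_algebraMap hinj' x
  refine ⟨⟨ψ, fun z => ?_⟩, hψ⟩
  obtain ⟨a, ha, b, hb, h0, rfl⟩ := hfr z
  have hb0 : ψ b ≠ 0 := fun h => h0 (ψ.injective (h.trans ψ.map_zero.symm))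
  rw [d_div _ _ _ h0, map_div₀ ψ a b, d_div _ _ _ hb0]
  have h1 := hφ ⟨a, ha⟩
  have h2 := hφ ⟨b, hb⟩
  rw [← hψ, ← hψ] at h1 h2
  simp only at h1 h2
  rw [← h1, ← h2]
  simp

/-- the derivation of a D-closed subring -/
def dS (R : Subring E.carrier) (hD : DR E R) : R → R := fun x => ⟨E.deriv x, hD x x.2⟩

theorem isD_dS (R : Subring E.carrier) (hD : DR E R) : IsD (dS R hD) :=
  ⟨fun a b => Subtype.ext (E.deriv_add a b), fun a b => Subtype.ext (E.deriv_mul a b)⟩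

theorem Ten_sub_inj {B F S L : Type u} [Field B] [Field F] [CommRing S] [Field L]
    (f : B →+* S) (g : B →+* F) (φ : S →+* L) (t : Ten f g) (ht : t ≠ 0)
    (hφ : ∀ x, φ x = 0 → x = 0) :
    ev (f := f) (g := g) ((inl (φ.comp f) g).comp φ) (inr (φ.comp f) g)
      (fun b => inl_inr (φ.comp f) g b) t ≠ 0 := by
  intro h
  obtain ⟨I, v, hli, hsp⟩ := exists_basis g
  obtain ⟨c, rfl⟩ := Ten_rep (f := f) hsp t
  apply ht
  rw [map_sum] at h
  simp only [map_mul, ev_inl, ev_inr] at h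
  have := Ten_indep (f := φ.comp f) hli c.support (fun i => φ (c i)) h
  refine Finset.sum_eq_zero fun i hi => ?_
  rw [hφ _ (this i hi), map_zero, zero_mul]

theorem Ten_red' {B F S L : Type u} [Field B] [CharZero B] [Field F] [CommRing S] [Field L]
    (f : B →+* S) (g : B →+* F) (φ : S →+* L) (hφ : ∀ x, φ x = 0 → x = 0) :
    IsReduced (Ten f g) := by
  haveI := Ten_red (φ.comp f) g
  refine isReduced_of_injective (ev (f := f) (g := g) ((inl (φ.comp f) g).comp φ) (inr (φ.comp f) g)
      (fun b => inl_inr (φ.comp f) g b)) ?_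
  rw [injective_iff_map_eq_zero]
  intro t ht
  by_contra h0
  exact Ten_sub_inj f g φ t h0 hφ ht

/-- base into subring -/
def toRG (g : DHom B F) (s : Set F.carrier) : B.carrier →+* RG g s :=
  g.f.codRestrict (RG g s) (RG_base g s)

theorem amalgamR (g : DHom B F) (s : Set F.carrier) (hD : DR F (RG g s)) (hfr : FrS (RG g s)) :
    ∃ (d : Ten (toRG g s) g.f → Ten (toRG g s) g.f), IsD d ∧ 
      (∀ a, d (inl _ _ a) = inl _ _ (dS _ hD a)) ∧ (∀ a, d (inr _ _ a) = inr _ _ (F.deriv a)) ∧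
    ∃ (M : DFld.{u}) (ι σ : DHom F M) (h : ∀ b, ι (g b) = σ (g b))
      (π : Ten (toRG g s) g.f →+* M.carrier), (∀ a, π (inl _ _ a) = ι a) ∧ (∀ a, π (inr _ _ a) = σ a)
      ∧ (∀ r, π (d r) = M.deriv (π r)) ∧
      (∀ r, π r = 0 → ∃ v, π v ≠ 0 ∧ v * r = 0) ∧
      (∀ m, ∃ a b, π b ≠ 0 ∧ m = π a / π b) := by
  haveI := Ten_red' (toRG g s) g.f (RG g s).subtype (fun x hx => Subtype.ext hx)
  obtain ⟨d, hd, hl, hr⟩ := Ten_der (toRG g s) g.f (.ofDFld B) (isD_dS _ hD) (.ofDFld F)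
    (fun b => Subtype.ext (g.comm b)) g.comm
  refine ⟨d, hd, hl, hr, ?_⟩
  have h1 : (1 : Ten (toRG g s) g.f) ≠ 0 := by
    intro h
    have := Ten_indep (f := toRG g s) (LI_one g.f 1 one_ne_zero) {()} (fun _ => 1)
      (by simpa using h) () (by simp)
    exact one_ne_zero this
  obtain ⟨P, hP, hwP, hdP, hv⟩ := min_prime hd 1 h1
  obtain ⟨M, π, h0, hπd, hfrac⟩ := fracD hd P hdP ((inl (toRG g s) g.f).comp (toRG g s))
  let σ : DHom F M := ⟨π.comp (inr _ _), fun x => by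
    show π (inr _ _ _) = _
    rw [← hr, hπd]; rfl⟩
  obtain ⟨ι, hι⟩ := extend (M := M) (RG g s) hD hfr (π.comp (inl _ _)) (by
    intro x hx
    have hx' := (h0 _).1 hx
    obtain ⟨v, hvP, hvx⟩ := hv _ hx'
    by_contra hx0
    obtain ⟨I, e, hli, hsp⟩ := exists_basis g.f
    obtain ⟨c, rfl⟩ := Ten_rep (f := toRG g s) hsp v
    apply hvP
    have : ∑ i ∈ c.support, inl (toRG g s) g.f (x * c i) * inr (toRG g s) g.f (e i) = 0 := by
      rw [← hvx, mul_comm]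
      refine Eq.symm ((Finset.mul_sum _ _ _).trans (Finset.sum_congr rfl fun i _ => ?_))
      rw [map_mul, mul_assoc]
    have h2 := Ten_indep hli _ _ this
    have : ∑ i ∈ c.support, inl (toRG g s) g.f (c i) * inr (toRG g s) g.f (e i) = 0 := by
      refine Finset.sum_eq_zero fun i hi => ?_
      rw [(mul_eq_zero.1 (h2 i hi)).resolve_left hx0, map_zero, zero_mul]
    rw [this]; exact zero_mem _) (by
    intro x
    show π (inl _ _ (dS _ hD x)) = M.deriv (π (inl _ _ x))
    rw [← hl, hπd])
  refine ⟨M, ι, σ, ?_, π, fun a => (hι a).symm, fun a => rfl, hπd, ?_, hfrac⟩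
  · intro b
    have := hι (toRG g s b)
    refine this.trans ?_
    show π (inl _ _ (toRG g s b)) = π (inr _ _ (g b))
    congr 1
    exact inl_inr _ _ _
  · intro r hr
    obtain ⟨v, hv1, hv2⟩ := hv r ((h0 r).1 hr)
    exact ⟨v, fun h => hv1 ((h0 v).1 h), hv2⟩
end SNT

namespace SNT
variable {A B E F M N : DFld.{u}}

theorem ev_d (g : DHom B F) (s : Set F.carrier) (hD : DR F (RG g s))
    {d : Ten (toRG g s) g.f → Ten (toRG g s) g.f} (hd : IsD d) 
    (hl : ∀ a, d (inl _ _ a) = inl _ _ (dS _ hD a)) (hr : ∀ a, d (inr _ _ a) = inr _ _ (F.deriv a))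
    (φ : RG g s →+* N.carrier) (ψ : DHom F N) (h : ∀ b, φ (toRG g s b) = ψ.f (g.f b))
    (hφ : ∀ x, φ (dS _ hD x) = N.deriv (φ x)) (t) :
    ev φ ψ.f h (d t) = N.deriv (ev φ ψ.f h t) := by
  induction t using Ten_ind with
  | h a b => rw [hd.mul, hl, hr]; simp only [map_add, map_mul, ev_inl, ev_inr]
             rw [N.deriv_mul, hφ, ψ.comm]
  | ha x y hx hy => rw [hd.add, map_add, map_add, N.deriv_add, hx, hy]

/-- certificates -/
def Cert (g : DHom B F) (s : Set F.carrier) (hD : DR F (RG g s)) 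
    (π : Ten (toRG g s) g.f →+* M.carrier) (m : M.carrier) : Prop :=
  ∃ p q w, π q ≠ 0 ∧ π w ≠ 0 ∧ m = π p / π q ∧ ∀ (N : DFld.{u}) (φ : RG g s →+* N.carrier)
    (ψ : DHom F N) (h : ∀ b, φ (toRG g s b) = ψ.f (g.f b)),
    (∀ x, φ (dS _ hD x) = N.deriv (φ x)) → ev φ ψ.f h w ≠ 0 → ev φ ψ.f h q ≠ 0 ∧
      ev φ ψ.f h p / ev φ ψ.f h q ∈ Subfield.closure (Set.range φ ∪ (con N : Set N.carrier))

theorem cert_all (g : DHom B F) (s : Set F.carrier) (hD : DR F (RG g s)) (hfr : FrS (RG g s)) 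
    {d : Ten (toRG g s) g.f → Ten (toRG g s) g.f} (hd : IsD d) 
    (hl : ∀ a, d (inl _ _ a) = inl _ _ (dS _ hD a)) (hr : ∀ a, d (inr _ _ a) = inr _ _ (F.deriv a))
    (ι σ : DHom F M) (π : Ten (toRG g s) g.f →+* M.carrier)
    (hπl : ∀ a, π (inl _ _ a) = ι a) 
    (hπd : ∀ r, π (d r) = M.deriv (π r))
    (hker : ∀ r, π r = 0 → ∃ v, π v ≠ 0 ∧ v * r = 0)
    (hfrac : ∀ m, ∃ a b, π b ≠ 0 ∧ m = π a / π b) (m) (hm : m ∈ cl ι) :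
    Cert g s hD π m := by
  rw [← cl_eq] at hm
  induction hm using Subfield.closure_induction with
  | mem x hx =>
    rcases hx with ⟨a, rfl⟩ | hx
    · obtain ⟨p, hp, q, hq, h0, rfl⟩ := hfr a
      have hq0 : π (inl _ _ ⟨q, hq⟩) ≠ 0 := by
        rw [hπl]; exact fun h => h0 (ι.inj (h.trans (map_zero ι.f).symm))
      refine ⟨inl _ _ ⟨p, hp⟩, inl _ _ ⟨q, hq⟩, inl _ _ ⟨q, hq⟩, hq0, hq0, ?_, ?_⟩
      · rw [hπl, hπl, map_div₀]
      · intro N φ ψ h hφ hw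
        refine ⟨hw, ?_⟩
        rw [ev_inl, ev_inl]
        exact div_mem (Subfield.subset_closure (Or.inl ⟨_, rfl⟩))
          (Subfield.subset_closure (Or.inl ⟨_, rfl⟩))
    · obtain ⟨p, q, hq0, rfl⟩ := hfrac x
      have hx' : M.deriv (π p / π q) = 0 := hx
      rw [d_div _ _ _ hq0, div_eq_zero_iff, ← hπd, ← hπd, ← map_mul, ← map_mul, ← map_sub] at hx'
      obtain ⟨v, hv, hv0⟩ := hker _ (hx'.resolve_right (pow_ne_zero 2 hq0))
      refine ⟨p, q, v * q, hq0, by rw [map_mul]; exact mul_ne_zero hv hq0, rfl, ?_⟩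
      intro N φ ψ h hφ hw
      rw [map_mul] at hw
      have hq1 := right_ne_zero_of_mul hw
      have hv1 := left_ne_zero_of_mul hw
      refine ⟨hq1, Subfield.subset_closure (Or.inr ?_)⟩
      show N.deriv _ = 0
      rw [d_div _ _ _ hq1, div_eq_zero_iff]
      left
      have := congrArg (ev φ ψ.f h) hv0
      rw [map_mul, map_zero, map_sub, map_mul, map_mul, ev_d g s hD hd hl hr φ ψ h hφ, 
        ev_d g s hD hd hl hr φ ψ h hφ] at this
      exact (mul_eq_zero.1 this).resolve_left hv1
  | one =>
    exact ⟨1, 1, 1, by simp, by simp, by simp, fun N φ ψ h hφ hw => ⟨hw, by simp [one_mem]⟩⟩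
  | add x y _ _ hx hy =>
    obtain ⟨p, q, w, hq, hw, rfl, H⟩ := hx
    obtain ⟨p', q', w', hq', hw', rfl, H'⟩ := hy
    refine ⟨p * q' + q * p', q * q', w * w', by rw [map_mul]; exact mul_ne_zero hq hq', 
      by rw [map_mul]; exact mul_ne_zero hw hw', ?_, ?_⟩
    · rw [map_add, map_mul, map_mul, map_mul, div_add_div _ _ hq hq']
    · intro N φ ψ h hφ h0
      rw [map_mul] at h0
      obtain ⟨h1, h2⟩ := H N φ ψ h hφ (left_ne_zero_of_mul h0)
      obtain ⟨h3, h4⟩ := H' N φ ψ h hφ (right_ne_zero_of_mul h0)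
      refine ⟨by rw [map_mul]; exact mul_ne_zero h1 h3, ?_⟩
      have := add_mem h2 h4
      rw [div_add_div _ _ h1 h3] at this
      simpa only [map_add, map_mul] using this
  | mul x y _ _ hx hy =>
    obtain ⟨p, q, w, hq, hw, rfl, H⟩ := hx
    obtain ⟨p', q', w', hq', hw', rfl, H'⟩ := hy
    refine ⟨p * p', q * q', w * w', by rw [map_mul]; exact mul_ne_zero hq hq', 
      by rw [map_mul]; exact mul_ne_zero hw hw', ?_, ?_⟩
    · rw [map_mul, map_mul, div_mul_div_comm]
    · intro N φ ψ h hφ h0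
      rw [map_mul] at h0
      obtain ⟨h1, h2⟩ := H N φ ψ h hφ (left_ne_zero_of_mul h0)
      obtain ⟨h3, h4⟩ := H' N φ ψ h hφ (right_ne_zero_of_mul h0)
      refine ⟨by rw [map_mul]; exact mul_ne_zero h1 h3, ?_⟩
      have := mul_mem h2 h4
      rw [div_mul_div_comm] at this
      simpa only [map_add, map_mul] using this
  | neg x _ hx =>
    obtain ⟨p, q, w, hq, hw, rfl, H⟩ := hx
    refine ⟨-p, q, w, hq, hw, by rw [map_neg, neg_div], fun N φ ψ h hφ h0 => ?_⟩
    obtain ⟨h1, h2⟩ := H N φ ψ h hφ h0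
    refine ⟨h1, ?_⟩
    rw [map_neg, neg_div]; exact neg_mem h2
  | inv x _ hx =>
    obtain ⟨p, q, w, hq, hw, rfl, H⟩ := hx
    by_cases hp : π p = 0
    · exact ⟨0, 1, 1, by simp, by simp, by simp [hp], fun N φ ψ h hφ hw => ⟨hw, by simp⟩⟩
    · refine ⟨q, p, w * p, hp, by rw [map_mul]; exact mul_ne_zero hw hp, by rw [inv_div], 
        fun N φ ψ h hφ h0 => ?_⟩
      rw [map_mul] at h0
      obtain ⟨h1, h2⟩ := H N φ ψ h hφ (left_ne_zero_of_mul h0)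
      refine ⟨right_ne_zero_of_mul h0, ?_⟩
      have := inv_mem h2
      rwa [inv_div] at this

theorem ev_comp {B S S' F R : Type u} [Field B] [CommRing S] [CommRing S'] [Field F] [CommRing R]
    {f : B →+* S} {g : B →+* F} {f' : B →+* S'} (φ : S →+* S')
    (h1 : ∀ b, φ (f b) = f' b) (a : S' →+* R) (b : F →+* R) (h : ∀ x, a (f' x) = b (g x))
    (h' : ∀ x, (a.comp φ) (f x) = b (g x))
    (h'' : ∀ x, ((inl f' g).comp φ) (f x) = inr f' g (g x)) (t : Ten f g) :
    ev (a.comp φ) b h' t = ev a b h (ev ((inl f' g).comp φ) (inr f' g) h'' t) := by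
  induction t using Ten_ind with
  | h x y => rw [map_mul, map_mul, map_mul, ev_inl, ev_inr, ev_inl, ev_inr, RingHom.comp_apply,
      RingHom.comp_apply, ev_inl, ev_inr]
  | ha x y hx hy => rw [map_add, map_add, map_add, hx, hy]

theorem simple_a (g : DHom B F) (s : Finset F.carrier) (hD : DR F (RG g s)) (hfr : FrS (RG g s))
    (W : Ten (toRG g s) g.f) 
    (H : ∀ (N : DFld.{u}) (φ : RG g s →+* N.carrier)
    (ψ : DHom F N) (h : ∀ b, φ (toRG g s b) = ψ.f (g.f b)),
    (∀ x, φ (dS _ hD x) = N.deriv (φ x)) → ev φ ψ.f h W ≠ 0 → ∀ x ∈ s,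
      ψ x ∈ Subfield.closure (Set.range φ ∪ (con N : Set N.carrier)))
    {I : Type u} {v : I → F.carrier} (hli : LI g.f v) (c : I →₀ RG g s)
    (hc : W = ∑ i ∈ c.support, inl (toRG g s) g.f (c i) * inr (toRG g s) g.f (v i)) 
    (l : I) (φ : RG g s →+* N.carrier) (hφ : ∀ x, φ (dS _ hD x) = N.deriv (φ x))
    (hu : φ (c l) ≠ 0) : ∃ (N' : DFld.{u}) (j : DHom N N') (ψ : DHom F N'),
       (∀ b, j (φ (toRG g s b)) = ψ (g b)) ∧
        ∀ x, ψ x ∈ Subfield.closure (Set.range (j.f.comp φ) ∪ (con N' : Set N'.carrier)) := by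
  let β : DHom B N := ⟨φ.comp (toRG g s), fun b => by
      have e : toRG g s (B.deriv b) = dS _ hD (toRG g s b) := Subtype.ext (g.comm b)
      exact (congrArg φ e).trans (hφ _)⟩
  have h'' : ∀ b, ((inl β.f g.f).comp φ) (toRG g s b) = inr β.f g.f (g.f b) := 
    fun b => inl_inr β.f g.f b
  have hW' : ev ((inl β.f g.f).comp φ) (inr β.f g.f) h'' W ≠ 0 := by
    intro h
    rw [hc, map_sum] at h
    simp only [map_mul, ev_inl, ev_inr] at h
    have h0 : l ∈ c.support := by
      rw [Finsupp.mem_support_iff]; intro h; rw [h, map_zero] at hu; exact hu rfl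
    have := Ten_indep (f := β.f) hli c.support (fun i => φ (c i)) h l h0
    exact hu this
  obtain ⟨N', j, ψ, h, hne, -, -⟩ := amalgam β g _ hW'
  refine ⟨N', j, ψ, h, ?_⟩
  have h2 : ∀ b, (j.f.comp φ) (toRG g s b) = ψ.f (g.f b) := h
  have hev := ev_comp φ (fun b => rfl) j.f ψ.f h h2 h'' W
  have hWne : ev (j.f.comp φ) ψ.f h2 W ≠ 0 := by rw [hev]; exact hne
  have hgen := H N' (j.f.comp φ) ψ h2 (fun x => by
      rw [RingHom.comp_apply, RingHom.comp_apply, hφ, j.comm]) hWne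
  have hall : ∀ x ∈ RG g s, ψ x ∈ 
      Subfield.closure (Set.range (j.f.comp φ) ∪ (con N' : Set N'.carrier)) := by
    intro x hx
    induction hx using Subring.closure_induction with
      | mem x hx =>
        rcases hx with ⟨b, rfl⟩ | hx
        · rw [← h2 b]; exact Subfield.subset_closure (Or.inl ⟨_, rfl⟩)
        · exact hgen x hx
      | zero => rw [map_zero]; exact zero_mem _
      | one => rw [map_one]; exact one_mem _
      | add x y _ _ h1 h2 => rw [map_add]; exact add_mem h1 h2
      | neg x _ h1 => rw [map_neg]; exact neg_mem h1
      | mul x y _ _ h1 h2 => rw [map_mul]; exact mul_mem h1 h2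
  intro x
  obtain ⟨a, ha, b, hb, -, rfl⟩ := hfr x
  rw [map_div₀]
  exact div_mem (hall a ha) (hall b hb)

theorem simple_b (g : DHom B F) (hSN : SN g) : ∃ (s : Finset F.carrier) (hD : DR F (RG g s)), FrS (RG g s) ∧
    ∃ W : Ten (toRG g s) g.f, W ≠ 0 ∧ ∀ (N : DFld.{u}) (φ : RG g s →+* N.carrier)
    (ψ : DHom F N) (h : ∀ b, φ (toRG g s b) = ψ.f (g.f b)),
    (∀ x, φ (dS _ hD x) = N.deriv (φ x)) → ev φ ψ.f h W ≠ 0 → ∀ x ∈ s,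
      ψ x ∈ Subfield.closure (Set.range φ ∪ (con N : Set N.carrier)) := by
  classical
  rw [SN_iff] at hSN
  obtain ⟨hfg, -, hsn⟩ := hSN
  obtain ⟨s, hD, hfr⟩ := exists_RG g hfg
  obtain ⟨d, hd, hl, hr, M, ι, σ, hb, π, hπl, hπr, hπd, hker, hfrac⟩ := amalgamR g s hD hfr
  have key : ∀ x : F.carrier, ∃ w, π w ≠ 0 ∧ ∀ (N : DFld.{u}) (φ : RG g s →+* N.carrier)
    (ψ : DHom F N) (h : ∀ b, φ (toRG g s b) = ψ.f (g.f b)),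
    (∀ x, φ (dS _ hD x) = N.deriv (φ x)) → ev φ ψ.f h w ≠ 0 → 
      ψ x ∈ Subfield.closure (Set.range φ ∪ (con N : Set N.carrier)) := by
    intro x
    obtain ⟨p, q, w, hq, hw, he, H⟩ := cert_all g s hD hfr hd hl hr ι σ π hπl hπd hker hfrac _ 
      (hsn M ι σ hb x)
    rw [← hπr, eq_div_iff hq, ← map_mul, ← sub_eq_zero, ← map_sub] at he
    obtain ⟨v, hv, hv0⟩ := hker _ he
    refine ⟨v * w, by rw [map_mul]; exact mul_ne_zero hv hw, fun N φ ψ h hφ h0 => ?_⟩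
    rw [map_mul] at h0
    obtain ⟨h1, h2⟩ := H N φ ψ h hφ (right_ne_zero_of_mul h0)
    have := congrArg (ev φ ψ.f h) hv0
    rw [map_mul, map_zero, map_sub, map_mul, ev_inr] at this
    have := (mul_eq_zero.1 this).resolve_left (left_ne_zero_of_mul h0)
    rw [sub_eq_zero, ← eq_div_iff h1] at this
    rw [← this] at h2
    exact h2
  choose w hw H using key
  have hW : π (∏ x ∈ s, w x) ≠ 0 := by
    rw [map_prod]; exact Finset.prod_ne_zero_iff.2 fun x _ => hw x
  refine ⟨s, hD, hfr, ∏ x ∈ s, w x, fun h => hW (by rw [h, map_zero]), ?_⟩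
  intro N φ ψ h hφ h0 x hx
  refine H x N φ ψ h hφ ?_
  rw [map_prod] at h0
  exact Finset.prod_ne_zero_iff.1 h0 x hx

end SNT

namespace SNT
variable {A B E F M N : DFld.{u}}

theorem incl_dS {R R' : Subring F.carrier} (hD : DR F R) (hD' : DR F R') (h : R ≤ R') (x : R) :
    Subring.inclusion h (dS R hD x) = dS R' hD' (Subring.inclusion h x) := rfl

theorem incl_toRG (g : DHom B F) (s t : Set F.carrier) (h : RG g s ≤ RG g t) (b) :
    Subring.inclusion h (toRG g s b) = toRG g t b := rfl

theorem incl_one {R R' : Subring F.carrier} (h : R ≤ R') (x : R) (z : F.carrier) (hz : z ∈ R') 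
    (h1 : (x : F.carrier) * z = 1) : Subring.inclusion h x * ⟨z, hz⟩ = 1 := Subtype.ext h1

theorem simple0 (g : DHom B F) (hSN : SN g) : ∃ s : Finset F.carrier, DR F (RG g s) ∧ FrS (RG g s) ∧
    ∀ (hD : DR F (RG g s)) (N : DFld.{u}) (φ : RG g s →+* N.carrier), (∀ x, φ (dS _ hD x) = N.deriv (φ x)) →
      ∃ (N' : DFld.{u}) (j : DHom N N') (ψ : DHom F N'), (∀ b, j (φ (toRG g s b)) = ψ (g b)) ∧
        ∀ x, ψ x ∈ Subfield.closure (Set.range (fun a => j (φ a)) ∪ (con N' : Set N'.carrier)) := by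
  classical
  obtain ⟨s, hD, hfr, W, hW, H⟩ := simple_b g hSN
  obtain ⟨I, v, hli, hsp⟩ := exists_basis g.f
  obtain ⟨c, hc⟩ := Ten_rep (f := toRG g s) hsp W
  obtain ⟨l, hl0⟩ : ∃ l, c l ≠ 0 := by
    by_contra hcon
    push Not at hcon
    apply hW; rw [hc]
    refine Finset.sum_eq_zero fun i hi => ?_
    rw [hcon i, map_zero, zero_mul]
  set z : F.carrier := (c l : F.carrier)⁻¹ with hz
  have hle := RG_mono g (Set.subset_insert z (s : Set F.carrier))
  refine ⟨insert z s, ?_, ?_, ?_⟩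
  · rw [Finset.coe_insert]; exact RG_inv g s hD _ (c l).2
  · rw [Finset.coe_insert]; exact FrS_mono hle hfr
  · intro hD' N φ' hφ'
    have hle2 : RG g s ≤ RG g (insert z s : Finset F.carrier) := by
      rw [Finset.coe_insert]; exact hle
    obtain ⟨i, hi⟩ : ∃ i, i = Subring.inclusion hle2 := ⟨_, rfl⟩
    have hiφ : ∀ x, i (dS _ hD x) = dS _ hD' (i x) := fun x => by rw [hi]; exact incl_dS _ _ _ _
    have hφ : ∀ x, (φ'.comp i) (dS _ hD x) = N.deriv ((φ'.comp i) x) := fun x => by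
      rw [RingHom.comp_apply, RingHom.comp_apply, hiφ, hφ']
    have hu : (φ'.comp i) (c l) ≠ 0 := by
      have hm : z ∈ RG g (insert z s : Finset F.carrier) := RG_gen _ _ (by simp)
      have h3 : (c l : F.carrier) * z = 1 := mul_inv_cancel₀ (fun h => hl0 (Subtype.ext h))
      have h4 : i (c l) * ⟨z, hm⟩ = 1 := by rw [hi]; exact incl_one hle2 _ _ _ h3
      have h5 := congrArg φ' h4
      rw [map_mul, map_one] at h5
      rw [RingHom.comp_apply]
      exact left_ne_zero_of_mul_eq_one h5
    obtain ⟨N', j, ψ, h1, h2⟩ := simple_a g s hD hfr W H hli c hc l (φ'.comp i) hφ hu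
    refine ⟨N', j, ψ, fun b => ?_, fun x => ?_⟩
    · have e : i (toRG g s b) = toRG g (insert z s : Finset F.carrier) b := by rw [hi]; exact incl_toRG _ _ _ _ _
      rw [← h1 b, RingHom.comp_apply, e]
    · have := h2 x
      refine Subfield.closure_mono (Set.union_subset_union_left _ ?_) this
      rintro _ ⟨a, rfl⟩
      exact ⟨i a, rfl⟩
end SNT

namespace SNT
variable {A B E F M N : DFld.{u}}

theorem LD (ψ : DHom F N) (S : Subfield F.carrier) (hS : con F ≤ S) {J : Type u}
    (v : J → F.carrier) (hv : LI S.subtype v) :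
    LI (S.map ψ.f ⊔ con N).subtype (fun j => ψ (v j)) := by
  classical
  intro s a h
  obtain ⟨I, b, hb, hli, hsp, hrep⟩ := exists_rep ψ
  obtain ⟨Q, hQ, -, hQa⟩ := rep_common ψ hb hsp S hS (hrep S hS) s (fun j => (a j : N.carrier))
    (fun j => (a j).2)
  have h1 : ∀ j, ∃ f : I →₀ F.carrier, (∀ i, f i ∈ S) ∧
      (j ∈ s → Q * a j = f.sum (fun i x => ψ.f x * b i)) := by
    intro j
    by_cases hj : j ∈ s
    · obtain ⟨f, hf, he⟩ := hQa j hj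
      exact ⟨f, hf, fun _ => he⟩
    · exact ⟨0, fun i => zero_mem _, fun h => absurd h hj⟩
  choose f hf he using h1
  let g : I →₀ F.carrier := ∑ j ∈ s, (f j).mapRange (fun y => y * v j) (by simp)
  have hg : g.sum (fun i x => ψ.f x * b i) = 0 := by
    have : g.sum (fun i x => ψ.f x * b i) =
        ∑ j ∈ s, ((f j).mapRange (fun y => y * v j) (by simp)).sum (fun i x => ψ.f x * b i) := by
      rw [Finsupp.sum_finset_sum_index]
      · simp
      · intros; simp [add_mul]
    rw [this]
    have h2 : ∑ j ∈ s, Q * ((a j : N.carrier) * ψ (v j)) = 0 := by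
      rw [← Finset.mul_sum]
      have h' : ∑ j ∈ s, (a j : N.carrier) * ψ (v j) = 0 := h
      rw [h', mul_zero]
    rw [← h2]
    refine Finset.sum_congr rfl fun j hj => ?_
    rw [← mul_assoc, he j hj, Finsupp.sum_mapRange_index (by simp), Finsupp.sum, Finsupp.sum,
      Finset.sum_mul]
    refine Finset.sum_congr rfl fun i hi => ?_
    rw [map_mul]; ring
  have hg0 := LI_sum hli g hg
  have h3 : ∀ i, ∀ j ∈ s, f j i = 0 := by
    intro i j hj
    have h4 : ∑ j ∈ s, S.subtype ⟨f j i, hf j i⟩ * v j = 0 := by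
      have := DFunLike.congr_fun hg0 i
      simpa [g, Finsupp.finset_sum_apply] using this
    have := hv s _ h4 j hj
    exact congrArg Subtype.val this
  intro j hj
  have h5 : f j = 0 := by ext i; exact h3 i j hj
  have h6 := he j hj
  rw [h5, Finsupp.sum_zero_index] at h6
  exact Subtype.ext ((mul_eq_zero.mp h6).resolve_left hQ)

theorem AI_iff {B F I : Type*} [CommRing B] [CommRing F] [Algebra B F] (t : I → F) :
    AlgebraicIndependent B t ↔
      LI (algebraMap B F) (fun d : I →₀ ℕ => d.prod (fun i e => t i ^ e)) := by
  classical
  rw [algebraicIndependent_iff]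
  constructor
  · intro h s c hc d hd
    have := h (∑ d ∈ s, MvPolynomial.monomial d (c d)) (by
      rw [map_sum, ← hc]
      refine Finset.sum_congr rfl fun i _ => ?_
      rw [MvPolynomial.aeval_monomial])
    have h2 := congrArg (MvPolynomial.coeff d) this
    rw [MvPolynomial.coeff_sum] at h2
    simpa [MvPolynomial.coeff_monomial, hd] using h2
  · intro h p hp
    rw [p.as_sum, map_sum] at hp
    ext d
    by_cases hd : d ∈ p.support
    · refine (h p.support (fun d => p.coeff d) ?_ d hd)
      rw [← hp]
      refine Finset.sum_congr rfl fun i _ => ?_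
      rw [MvPolynomial.aeval_monomial]
    · simpa using hd

theorem TR {B R L N : Type u} [Field B] [CommRing R] [IsDomain R] [Field L] [Field N]
    [Algebra B R] [Algebra.FiniteType B R] [Algebra B N] [Algebra L N] [Algebra B L]
    [IsScalarTower B L N] (χ θ : R →ₐ[B] N)
    (hθ : ∀ (ι : Type u) (t : ι → R), AlgebraicIndependent B t →
      AlgebraicIndependent L (fun i => θ (t i)))
    (hcl : ∀ x, θ x ∈ IntermediateField.adjoin L (Set.range χ)) (x : R) (hx : χ x = 0) :
    x = 0 := by
  classical
  obtain ⟨T, hT⟩ := exists_isTranscendenceBasis B R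
  have fin : Algebra.trdeg B R < Cardinal.aleph0 := trdeg_lt_aleph0_of_finiteType
  have hI := hθ T _ hT.1
  let Mt := AlgebraicIndependent.matroid L N
  obtain ⟨J, hJ⟩ := Mt.exists_isBasis (Set.range χ) (by simp [Mt])
  have hJ' := hJ
  simp only [Mt] at hJ'
  rw [AlgebraicIndependent.matroid_isBasis_iff] at hJ'
  obtain ⟨hJ1, hJ2, -⟩ := hJ'
  have h1 : Set.range (fun i : T => θ i) ⊆ Mt.closure (Set.range χ) := by
    simp only [Mt]
    rw [AlgebraicIndependent.matroid_closure_eq]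
    rintro _ ⟨i, rfl⟩
    have := hcl i
    show IsAlgebraic _ _
    obtain ⟨r, hr, s, hs, he⟩ := (IntermediateField.mem_adjoin_iff_div).1 this
    show IsAlgebraic _ (θ i)
    rw [he, div_eq_mul_inv]
    apply IsAlgebraic.mul
    · exact isAlgebraic_algebraMap (⟨r, hr⟩ : Algebra.adjoin L (Set.range χ))
    · apply IsAlgebraic.inv
      exact isAlgebraic_algebraMap (⟨s, hs⟩ : Algebra.adjoin L (Set.range χ))
  have h2 : (Set.range (fun i : T => θ i)).encard ≤ J.encard := by
    rw [hJ.encard_eq_eRk, ← Mt.eRk_closure_eq]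
    have h3 : Mt.Indep (Set.range (fun i : T => θ i)) :=
      AlgebraicIndependent.matroid_indep_iff.2 hI.to_subtype_range
    rw [← h3.eRk_eq_encard]
    exact Mt.eRk_mono h1
  choose y hy using fun j : J => hJ2 j.2
  have hyi : AlgebraicIndependent B y := by
    apply AlgebraicIndependent.of_comp χ
    apply AlgebraicIndependent.restrictScalars (K := L) (algebraMap B L).injective
    convert hJ1 using 1
    ext j; exact hy j
  have hJc : Cardinal.mk J ≤ Algebra.trdeg B R := hyi.cardinalMk_le_trdeg
  have hTc : Algebra.trdeg B R = Cardinal.mk T := hT.cardinalMk_eq_trdeg.symm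
  have hle : Algebra.trdeg B R ≤ Cardinal.mk J := by
    rw [hTc]
    have h4 : Cardinal.mk T = Cardinal.mk (Set.range (fun i : T => θ i)) :=
      (Cardinal.mk_range_eq _ hI.injective).symm
    rw [h4]
    have h5 : Cardinal.mk J < Cardinal.aleph0 := hJc.trans_lt fin
    rw [← Set.toENat_cardinalMk, ← Set.toENat_cardinalMk] at h2
    exact (Cardinal.toENat_le_iff_of_lt_aleph0 h5).1 h2
  have hb := hyi.isTranscendenceBasis_of_trdeg_le fin hle
  by_contra hx0
  have := hb.isAlgebraic
  obtain ⟨r, hr, w, hw⟩ := (Algebra.IsAlgebraic.isAlgebraic (R := Algebra.adjoin B (Set.range y)) x).exists_nonzero_dvd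
    (mem_nonZeroDivisors_of_ne_zero hx0)
  have hr2 : ∀ z ∈ Algebra.adjoin B (Set.range y), ∃ p : MvPolynomial J B, MvPolynomial.aeval y p = z := by
    intro z hz
    rw [Algebra.adjoin_range_eq_range_aeval] at hz
    exact hz
  replace hr2 := hr2 r r.2
  obtain ⟨p, hp⟩ := hr2
  have h7 : χ (r : R) = 0 := by
    have : (r : R) = x * w := hw
    rw [this, map_mul, hx, zero_mul]
  rw [← hp] at h7
  have h8 : MvPolynomial.aeval (fun j => χ (y j)) p = 0 := by
    rw [← h7]
    exact (MvPolynomial.comp_aeval_apply (f := y) χ p).symm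
  have h9 : AlgebraicIndependent B (fun j => χ (y j)) := by
    apply AlgebraicIndependent.restrictScalars (K := L) (algebraMap B L).injective
    convert hJ1 using 1
    ext j; exact hy j
  have h10 := (algebraicIndependent_iff.1 h9) p h8
  apply hr
  apply Subtype.ext
  rw [← hp, h10]; simp

theorem FT (g : DHom B F) (s : Finset F.carrier) :
    letI := (toRG g s).toAlgebra; Algebra.FiniteType B.carrier (RG g (s : Set F.carrier)) := by
  classical
  letI := (toRG g s).toAlgebra
  let s' : Finset (RG g (s : Set F.carrier)) := s.attach.image (fun x => ⟨x.1, RG_gen g _ x.2⟩)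
  refine ⟨⟨s', ?_⟩⟩
  rw [eq_top_iff]
  rintro ⟨x, hx⟩ -
  unfold RG at hx
  induction hx using Subring.closure_induction with
  | mem x hx =>
    rcases hx with ⟨b, rfl⟩ | hx
    · exact Subalgebra.algebraMap_mem _ b
    · refine Algebra.subset_adjoin ?_
      simp only [s', Finset.coe_image, Set.mem_image]
      exact ⟨⟨x, hx⟩, by simp, rfl⟩
  | zero => exact zero_mem _
  | one => exact one_mem _
  | add x y hx hy h1 h2 => exact add_mem h1 h2
  | neg x hx h1 => exact neg_mem h1
  | mul x y hx hy h1 h2 => exact mul_mem h1 h2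

theorem simple (g : DHom B F) (hSN : SN g) : ∃ s : Finset F.carrier,
    DR F (RG g (s : Set F.carrier)) ∧ FrS (RG g (s : Set F.carrier)) ∧
    ∀ (hD : DR F (RG g (s : Set F.carrier))) (N : DFld.{u})
      (φ : RG g (s : Set F.carrier) →+* N.carrier),
      (∀ x, φ (dS _ hD x) = N.deriv (φ x)) → ∀ x, φ x = 0 → x = 0 := by
  classical
  obtain ⟨s, h1, h2, h3⟩ := simple0 g hSN
  refine ⟨s, h1, h2, fun hD N φ hφ => ?_⟩
  obtain ⟨N', j, ψ, hb, hcl⟩ := h3 hD N φ hφ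
  have hcon := ((SN_iff g).1 hSN).2.1
  letI i1 := (toRG g s).toAlgebra
  haveI := FT g s
  let L : Subfield N'.carrier := g.f.fieldRange.map ψ.f ⊔ con N'
  letI i2 : Algebra B.carrier N'.carrier := (ψ.f.comp g.f).toAlgebra
  have hL : ∀ b, (ψ.f.comp g.f) b ∈ L := fun b =>
    (le_sup_left : _ ≤ L) ⟨g.f b, ⟨b, rfl⟩, rfl⟩
  letI i3 : Algebra B.carrier L := ((ψ.f.comp g.f).codRestrict L hL).toAlgebra
  haveI i4 : IsScalarTower B.carrier L N'.carrier := IsScalarTower.of_algebraMap_eq (fun _ => rfl)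
  let χ : RG g (s : Set F.carrier) →ₐ[B.carrier] N'.carrier :=
    { (j.f.comp φ) with commutes' := fun b => hb b }
  let θ : RG g (s : Set F.carrier) →ₐ[B.carrier] N'.carrier :=
    { (ψ.f.comp (RG g (s : Set F.carrier)).subtype) with commutes' := fun b => rfl }
  have hθ : ∀ (ι : Type u) (t : ι → RG g (s : Set F.carrier)), AlgebraicIndependent B.carrier t →
      AlgebraicIndependent L (fun i => θ (t i)) := by
    intro ι t ht
    rw [AI_iff] at ht ⊢
    have h4 : LI g.f.fieldRange.subtype
        (fun d : ι →₀ ℕ => ((d.prod (fun i e => t i ^ e) : RG g (s : Set F.carrier)) : F.carrier)) := by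
      intro T c hc d hd
      choose c' hc' using fun d => (c d).2
      have := ht T c' (by
        apply Subtype.ext
        rw [← Subring.coe_subtype, map_sum]
        rw [map_zero, ← hc]
        refine Finset.sum_congr rfl fun i _ => ?_
        rw [map_mul]
        congr 1
        exact hc' i) d hd
      apply Subtype.ext
      rw [← hc', this]; simp
    have hc : con F ≤ g.f.fieldRange := fun x hx => hcon x hx
    have h5 := LD ψ _ hc _ h4
    have h6 : (fun d : ι →₀ ℕ => d.prod (fun i e => (θ (t i)) ^ e)) =
        fun d : ι →₀ ℕ => ψ ((d.prod (fun i e => t i ^ e) : RG g (s : Set F.carrier)) : F.carrier) := by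
      funext d
      show (d.prod fun i e => θ (t i) ^ e) = θ _
      rw [map_finsuppProd]
      simp [map_pow]
    rw [h6]
    exact h5
  intro x hx
  refine TR χ θ hθ ?_ x ?_
  · intro x
    have := hcl (x : F.carrier)
    refine (Subfield.closure_le.2 ?_ :
      _ ≤ (IntermediateField.adjoin L (Set.range χ)).toSubfield) this
    rintro y (⟨a, rfl⟩ | hy)
    · exact IntermediateField.subset_adjoin _ _ ⟨a, rfl⟩
    · exact IntermediateField.algebraMap_mem (IntermediateField.adjoin L (Set.range χ)) (⟨y, (le_sup_right : _ ≤ L) hy⟩ : L)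
  · show j.f (φ x) = 0
    rw [hx, map_zero]
end SNT

namespace SNT
variable {A B E F M N : DFld.{u}}

theorem CH {E A : Type u} [Field E] [CommRing A] [IsDomain A] [Algebra E A] [Algebra.FiniteType E A]
    (c : A) (hc : Transcendental E c) (S : Set E) (hS : S.Infinite) :
    ∃ a ∈ S, ¬ IsUnit (c - algebraMap E A a) := by
  classical
  letI i1 : Algebra (Polynomial E) A := (Polynomial.aeval (R := E) c).toAlgebra
  have hmap : ∀ p : Polynomial E, algebraMap (Polynomial E) A p = Polynomial.aeval c p := fun _ => rfl
  haveI : IsScalarTower E (Polynomial E) A := IsScalarTower.of_algebraMap_eq (fun x => by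
    rw [hmap]; simp)
  haveI : Algebra.FiniteType (Polynomial E) A := Algebra.FiniteType.of_restrictScalars_finiteType E _ _
  haveI : Algebra.FinitePresentation (Polynomial E) A := Algebra.FinitePresentation.of_finiteType.1 inferInstance
  have hinj : Function.Injective (algebraMap (Polynomial E) A) := by
    rw [transcendental_iff_injective] at hc
    exact hc
  haveI : FaithfulSMul (Polynomial E) A := (faithfulSMul_iff_algebraMap_injective _ _).2 hinj
  haveI : Module.IsTorsionFree (Polynomial E) A := inferInstance
  haveI : Module.Flat (Polynomial E) A := inferInstance
  have hop := PrimeSpectrum.isOpenMap_comap_of_hasGoingDown_of_finitePresentation (R := Polynomial E) (S := A)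
  have hr := hop.isOpen_range
  have hbot : (⊥ : PrimeSpectrum (Polynomial E)) ∈ Set.range (PrimeSpectrum.comap (algebraMap (Polynomial E) A)) := by
    refine ⟨⊥, ?_⟩
    apply PrimeSpectrum.ext
    show Ideal.comap _ ⊥ = ⊥
    rw [← RingHom.ker_eq_comap_bot]
    exact (RingHom.injective_iff_ker_eq_bot _).1 hinj
  obtain ⟨_, ⟨p, rfl⟩, hp, hsub⟩ :=
    PrimeSpectrum.isTopologicalBasis_basic_opens.exists_subset_of_mem_open hbot hr
  have hp0 : p ≠ 0 := by
    rintro rfl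
    simp at hp
  have hfin : {a : E | p.IsRoot a}.Finite := by
    refine (p.roots.toFinset.finite_toSet).subset ?_
    intro a ha
    simpa [hp0] using ha
  obtain ⟨a, haS, ha⟩ := hS.exists_notMem_finite hfin
  have hprime : Prime (Polynomial.X - Polynomial.C a) := Polynomial.prime_X_sub_C a
  let x : PrimeSpectrum (Polynomial E) := ⟨Ideal.span {Polynomial.X - Polynomial.C a},
    (Ideal.span_singleton_prime hprime.ne_zero).2 hprime⟩
  have hx : x ∈ PrimeSpectrum.basicOpen p := by
    show p ∉ Ideal.span {Polynomial.X - Polynomial.C a}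
    rw [Ideal.mem_span_singleton, Polynomial.dvd_iff_isRoot]
    exact ha
  obtain ⟨q, hq⟩ := hsub hx
  refine ⟨a, haS, fun hu => ?_⟩
  have h1 : (Polynomial.X - Polynomial.C a) ∈ (PrimeSpectrum.comap (algebraMap (Polynomial E) A) q).asIdeal := by
    rw [hq]; exact Ideal.mem_span_singleton_self _
  have h2 : c - algebraMap E A a ∈ q.asIdeal := by
    have : algebraMap (Polynomial E) A (Polynomial.X - Polynomial.C a) ∈ q.asIdeal := h1
    rw [hmap] at this
    simpa using this
  exact q.2.ne_top (Ideal.eq_top_of_isUnit_mem _ h2 hu)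

theorem alg_con (ι : DHom E M) (hE : IsAlgClosed (con E)) (c : M.carrier) (hc : c ∈ con M)
    (hal : ¬ (letI := ι.f.toAlgebra; Transcendental E.carrier c)) : ∃ a ∈ con E, ι a = c := by
  classical
  letI i1 := ι.f.toAlgebra
  letI i2 : Algebra (con E) M.carrier := (ι.f.comp (con E).subtype).toAlgebra
  have h1 : ¬ Transcendental (con E) c := by
    intro ht
    apply hal
    show Transcendental E.carrier c
    rw [transcendental_iff] at ht ⊢
    have hli : LI (ι.f.comp (con E).subtype) (fun n : ℕ => c ^ n) := by
      intro s a h n hn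
      have := ht (∑ n ∈ s, Polynomial.monomial n (a n)) (by
        rw [map_sum, ← h]
        refine Finset.sum_congr rfl fun i _ => ?_
        rw [Polynomial.aeval_monomial]; rfl)
      have h2 := congrArg (fun p => Polynomial.coeff p n) this
      simpa [Polynomial.finset_sum_coeff, Polynomial.coeff_monomial, hn] using h2
    have hli2 := LI_con ι _ (fun n => pow_mem hc n) hli
    intro p hp
    ext n
    by_cases hn : n ∈ p.support
    · refine hli2 p.support (fun n => p.coeff n) ?_ n hn
      rw [Polynomial.aeval_def, Polynomial.eval₂_eq_sum] at hp
      exact hp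
    · simpa using hn
  unfold Transcendental at h1
  rw [not_not] at h1
  have h3 := minpoly.irreducible h1.isIntegral
  have h4 := IsAlgClosed.degree_eq_one_of_irreducible _ h3
  obtain ⟨a, ha⟩ := minpoly.mem_range_of_degree_eq_one _ _ h4
  exact ⟨a, a.2, ha⟩

theorem CON (ι : DHom E M) (hE : IsAlgClosed (con E)) (S : Finset M.carrier)
    (hD : DR M (RG ι (S : Set M.carrier))) (hfr : FrS (RG ι (S : Set M.carrier)))
    (w : M.carrier) (hw : w ∈ RG ι (S : Set M.carrier))
    (hJ : ∀ J : Ideal (RG ι (S : Set M.carrier)), J ≠ ⊥ → (∀ x ∈ J, dS _ hD x ∈ J) →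
      ∃ n, (⟨w, hw⟩ : RG ι (S : Set M.carrier)) ^ n ∈ J) (hw0 : w ≠ 0)
    (c : M.carrier) (hc : c ∈ con M) : ∃ a ∈ con E, ι a = c := by
  classical
  have hA : ∀ c ∈ con M, c ∈ RG ι (insert w⁻¹ S : Finset M.carrier) := by
    intro c hc
    let J : Ideal (RG ι (S : Set M.carrier)) :=
      { carrier := {r | (r : M.carrier) * c ∈ RG ι (S : Set M.carrier)}
        zero_mem' := by simp
        add_mem' := by
          intro a b ha hb
          simp only [Set.mem_setOf_eq, Subring.coe_add, add_mul] at *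
          exact add_mem ha hb
        smul_mem' := by
          intro a b hb
          simp only [Set.mem_setOf_eq, smul_eq_mul, Subring.coe_mul, mul_assoc] at *
          exact mul_mem a.2 hb }
    have hmemJ : ∀ r : RG ι (S : Set M.carrier), r ∈ J ↔ (r : M.carrier) * c ∈ RG ι (S : Set M.carrier) := fun _ => Iff.rfl
    obtain ⟨n, hn⟩ := hJ J (by
      obtain ⟨a, ha, b, hb, hb0, he⟩ := hfr c
      intro hbot
      have : (⟨b, hb⟩ : RG ι (S : Set M.carrier)) ∈ J := by
        rw [hmemJ, he]
        have : b * (a / b) = a := by field_simp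
        simpa [this] using ha
      rw [hbot] at this
      exact hb0 (congrArg Subtype.val this)) (by
      intro x hx
      rw [hmemJ] at hx ⊢
      have := hD _ hx
      rw [M.deriv_mul, mem_con.1 hc, mul_zero, add_zero] at this
      exact this)
    rw [hmemJ] at hn
    have h1 : w ^ n * c ∈ RG ι (insert w⁻¹ S : Finset M.carrier) := by
      refine RG_mono ι ?_ hn
      simp
    have h2 : w⁻¹ ∈ RG ι (insert w⁻¹ S : Finset M.carrier) := RG_gen ι _ (by simp)
    have h3 := mul_mem (pow_mem h2 n) h1
    have h4 : w⁻¹ ^ n * (w ^ n * c) = c := by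
      rw [← mul_assoc, ← mul_pow, inv_mul_cancel₀ hw0]; simp
    rwa [h4] at h3
  by_contra hne
  push Not at hne
  have hal : (letI := ι.f.toAlgebra; Transcendental E.carrier c) := by
    by_contra h
    obtain ⟨a, ha, he⟩ := alg_con ι hE c hc h
    exact hne a ha he
  letI i1 := ι.f.toAlgebra
  letI i2 := (toRG ι (insert w⁻¹ S : Finset M.carrier)).toAlgebra
  haveI := FT ι (insert w⁻¹ S : Finset M.carrier)
  let c' : RG ι ((insert w⁻¹ S : Finset M.carrier) : Set M.carrier) := ⟨c, hA c hc⟩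
  let v : RG ι ((insert w⁻¹ S : Finset M.carrier) : Set M.carrier) →ₐ[E.carrier] M.carrier :=
    { (RG ι ((insert w⁻¹ S : Finset M.carrier) : Set M.carrier)).subtype with commutes' := fun b => rfl }
  have hc' : Transcendental E.carrier c' := by
    intro h
    exact hal (h.algHom v)
  have hinf : ((con E : Subfield E.carrier) : Set E.carrier).Infinite := by
    refine (Set.infinite_range_of_injective (Nat.cast_injective (R := E.carrier))).mono ?_
    rintro _ ⟨n, rfl⟩
    exact natCast_mem _ n
  obtain ⟨a, ha, hu⟩ := CH c' hc' _ hinf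
  apply hu
  have h0 : c - ι a ≠ 0 := fun h => hne a ha (sub_eq_zero.1 h).symm
  have hi := hA _ (inv_mem (sub_mem hc (ι.cmem ha)))
  refine IsUnit.of_mul_eq_one ⟨_, hi⟩ ?_
  apply Subtype.ext
  exact mul_inv_cancel₀ h0
end SNT

namespace SNT
variable {A B E F M N : DFld.{u}}

theorem map_RG (f : DHom B E) (g : DHom B F) (ι : DHom E M) (τ : DHom F M)
    (h : ∀ b, ι.f (f.f b) = τ.f (g.f b)) (s : Set F.carrier) (S : Set M.carrier)
    (hS : ∀ x ∈ s, τ x ∈ S) : ∀ y ∈ RG g s, τ y ∈ RG ι S := by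
  intro y hy
  induction hy using Subring.closure_induction with
  | mem x hx =>
    rcases hx with ⟨b, rfl⟩ | hx
    · rw [← h]; exact RG_base ι _ _
    · exact RG_gen ι _ (hS x hx)
  | zero => rw [map_zero]; exact zero_mem _
  | one => rw [map_one]; exact one_mem _
  | add x y hx hy h1 h2 => rw [map_add]; exact add_mem h1 h2
  | neg x hx h1 => rw [map_neg]; exact neg_mem h1
  | mul x y hx hy h1 h2 => rw [map_mul]; exact mul_mem h1 h2

theorem range_RG (ι : DHom E M) (S : Finset M.carrier) (ι' : DHom E N)
    (π : RG ι (S : Set M.carrier) →+* N.carrier) (hπ : ∀ e, π (toRG ι _ e) = ι' e) :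
    ∃ S' : Finset N.carrier, π.range = RG ι' (S' : Set N.carrier) := by
  classical
  refine ⟨S.attach.image (fun x => π ⟨x.1, RG_gen ι _ x.2⟩), le_antisymm ?_ ?_⟩
  · rintro _ ⟨⟨x, hx⟩, rfl⟩
    have hx' := hx
    unfold RG at hx'
    induction hx' using Subring.closure_induction with
    | mem x hx2 =>
      rcases hx2 with ⟨b, rfl⟩ | hx2
      · have : π ⟨ι.f b, hx⟩ = ι' b := hπ b
        rw [this]; exact RG_base _ _ _
      · apply RG_gen
        simp only [Finset.coe_image, Set.mem_image]
        exact ⟨⟨x, hx2⟩, by simp, rfl⟩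
    | zero =>
      have : π ⟨0, hx⟩ = 0 := map_zero π
      rw [this]; exact zero_mem _
    | one =>
      have : π ⟨1, hx⟩ = 1 := map_one π
      rw [this]; exact one_mem _
    | add x y hx' hy' h1 h2 =>
      have : π ⟨x + y, hx⟩ = π ⟨x, hx'⟩ + π ⟨y, hy'⟩ := by rw [← map_add]; rfl
      rw [this]; exact add_mem (h1 _) (h2 _)
    | neg x hx' h1 =>
      have : π ⟨-x, hx⟩ = -π ⟨x, hx'⟩ := by rw [← map_neg]; rfl
      rw [this]; exact neg_mem (h1 _)
    | mul x y hx' hy' h1 h2 =>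
      have : π ⟨x * y, hx⟩ = π ⟨x, hx'⟩ * π ⟨y, hy'⟩ := by rw [← map_mul]; rfl
      rw [this]; exact mul_mem (h1 _) (h2 _)
  · unfold RG
    rw [Subring.closure_le]
    rintro x (⟨b, rfl⟩ | hx)
    · exact ⟨_, hπ b⟩
    · simp only [Finset.coe_image, Set.mem_image] at hx
      obtain ⟨y, -, rfl⟩ := hx
      exact ⟨_, rfl⟩

theorem clear (f : DHom B E) (g : DHom B F) (ι : DHom E M) (τ : DHom F M)
    (h : ∀ b, ι.f (f.f b) = τ.f (g.f b)) (s : Set F.carrier) (S : Set M.carrier)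
    (hS : ∀ y ∈ RG g s, τ y ∈ RG ι S) (hfr : FrS (RG g s)) (r : Ten f.f g.f) :
    ∃ b ∈ RG g s, b ≠ 0 ∧ ∃ x : RG ι S, ev ι.f τ.f h r * τ b = x ∧
      ∀ (M' : DFld.{u}) (π : RG ι S →+* M'.carrier) (ι' : DHom E M') (τ' : DHom F M')
        (h' : ∀ b, ι'.f (f.f b) = τ'.f (g.f b)),
        (∀ e, π (toRG ι _ e) = ι' e) → (∀ y (hy : y ∈ RG g s), π ⟨τ y, hS y hy⟩ = τ' y) →
        ev ι'.f τ'.f h' r * τ' b = π x := by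
  refine Ten_ind (P := fun r => ∃ b ∈ RG g s, b ≠ 0 ∧ ∃ x : RG ι S, ev ι.f τ.f h r * τ b = x ∧
      ∀ (M' : DFld.{u}) (π : RG ι S →+* M'.carrier) (ι' : DHom E M') (τ' : DHom F M')
        (h' : ∀ b, ι'.f (f.f b) = τ'.f (g.f b)),
        (∀ e, π (toRG ι _ e) = ι' e) → (∀ y (hy : y ∈ RG g s), π ⟨τ y, hS y hy⟩ = τ' y) →
        ev ι'.f τ'.f h' r * τ' b = π x) ?_ ?_ r
  · intro a y
    obtain ⟨p, hp, q, hq, hq0, rfl⟩ := hfr y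
    refine ⟨q, hq, hq0, toRG ι _ a * ⟨τ p, hS p hp⟩, ?_, ?_⟩
    · have : τ q ≠ 0 := (map_ne_zero τ.f).2 hq0
      rw [map_mul, ev_inl, ev_inr, map_div₀]
      show _ = ι a * τ p
      field_simp
    · intro M' π ι' τ' h' h1 h2
      have : τ' q ≠ 0 := (map_ne_zero τ'.f).2 hq0
      rw [map_mul, ev_inl, ev_inr, map_div₀, map_mul, h1, h2 p hp]
      field_simp
  · rintro x y ⟨b1, hb1, hb10, x1, e1, k1⟩ ⟨b2, hb2, hb20, x2, e2, k2⟩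
    refine ⟨b1 * b2, mul_mem hb1 hb2, mul_ne_zero hb10 hb20,
      x1 * ⟨τ b2, hS _ hb2⟩ + x2 * ⟨τ b1, hS _ hb1⟩, ?_, ?_⟩
    · show _ = (x1 : M.carrier) * τ b2 + x2 * τ b1
      rw [← e1, ← e2, map_add, map_mul]; ring
    · intro M' π ι' τ' h' h1 h2
      rw [map_add π, map_mul π, map_mul π, h2 b2 hb2, h2 b1 hb1, ← k1 M' π ι' τ' h' h1 h2, ← k2 M' π ι' τ' h' h1 h2, map_add, map_mul]; ring

theorem SPEC (f : DHom B E) (g : DHom B F) (hE : IsAlgClosed (con E)) (hSN : SN g)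
    (ι : DHom E M) (τ : DHom F M) (h : ∀ b, ι.f (f.f b) = τ.f (g.f b)) (z : Ten f.f g.f)
    (hz : ev ι.f τ.f h z ≠ 0) : ∃ (M' : DFld.{u}) (ι' : DHom E M') (τ' : DHom F M')
      (h' : ∀ b, ι'.f (f.f b) = τ'.f (g.f b)),
      (∀ r, ev ι.f τ.f h r = 0 → ev ι'.f τ'.f h' r = 0) ∧ ev ι'.f τ'.f h' z ≠ 0 ∧
      ∀ c ∈ con M', ∃ a ∈ con E, ι' a = c := by
  classical
  obtain ⟨s, hD, hfr, hsim⟩ := simple g hSN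
  obtain ⟨S, hSd⟩ : ∃ S : Finset M.carrier, S = s.image τ := ⟨_, rfl⟩
  have hS : ∀ y ∈ RG g (s : Set F.carrier), τ y ∈ RG ι (S : Set M.carrier) :=
    map_RG f g ι τ h _ _ (fun x hx => by rw [hSd]; exact Finset.mem_image_of_mem _ hx)
  have hDR : DR M (RG ι (S : Set M.carrier)) := by
    apply DR_RG
    intro x hx
    rw [hSd] at hx
    obtain ⟨y, hy, rfl⟩ := Finset.mem_image.1 hx
    rw [← τ.comm]
    exact hS _ (hD _ (RG_gen g _ hy))
  have hcl := clear f g ι τ h _ _ hS hfr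
  obtain ⟨b, hb, hb0, x, hx1, hx2⟩ := hcl z
  letI : Algebra ℚ (RG ι (S : Set M.carrier)) := ((toRG ι (S : Set M.carrier)).comp (algebraMap ℚ E.carrier)).toAlgebra
  have hx0 : x ≠ 0 := by
    rintro rfl
    exact mul_ne_zero hz ((map_ne_zero τ.f).2 hb0) hx1
  obtain ⟨P, hP, hxP, hdP, hPJ⟩ := diff_prime (isD_dS _ hDR) x
    (fun hn => hx0 hn.eq_zero)
  obtain ⟨M', π, hπ0, hπd, hπf⟩ := fracD (isD_dS _ hDR) P hdP (toRG ι (S : Set M.carrier))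
  obtain ⟨ι', hι'⟩ : ∃ ι' : DHom E M', ∀ e, π (toRG ι _ e) = ι' e :=
    ⟨⟨π.comp (toRG ι _), fun e => by
      rw [RingHom.comp_apply, RingHom.comp_apply, ← hπd]
      congr 1
      exact Subtype.ext (ι.comm e)⟩, fun _ => rfl⟩
  obtain ⟨φ, hφ⟩ : ∃ φ : RG g (s : Set F.carrier) →+* M'.carrier, ∀ y, φ y = π ⟨τ y, hS y y.2⟩ :=
    ⟨π.comp ((τ.f.comp (RG g (s : Set F.carrier)).subtype).codRestrict _ (fun y => hS y y.2)), fun _ => rfl⟩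
  have hφd : ∀ y, φ (dS _ hD y) = M'.deriv (φ y) := by
    intro y
    rw [hφ, hφ, ← hπd]
    congr 1
    exact Subtype.ext (τ.comm _)
  obtain ⟨τ', hτ'⟩ := extend _ hD hfr φ (hsim hD M' φ hφd) hφd
  have hτ2 : ∀ y (hy : y ∈ RG g (s : Set F.carrier)), π ⟨τ y, hS y hy⟩ = τ' y := by
    intro y hy
    have := hτ' ⟨y, hy⟩
    rw [hφ] at this
    exact this.symm
  have h' : ∀ b, ι'.f (f.f b) = τ'.f (g.f b) := by
    intro b
    rw [← hτ2 _ (RG_base g _ b), ← hι']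
    congr 1
    exact Subtype.ext (h b)
  refine ⟨M', ι', τ', h', ?_, ?_, ?_⟩
  · intro r hr
    obtain ⟨b, hb, hb0, x, hx1, hx2⟩ := hcl r
    have := hx2 M' π ι' τ' h' hι' hτ2
    rw [hr, zero_mul] at hx1
    have hx0 : x = 0 := Subtype.ext hx1.symm
    rw [hx0, map_zero] at this
    exact (mul_eq_zero.1 this).resolve_right ((map_ne_zero τ'.f).2 hb0)
  · intro h0
    have := hx2 M' π ι' τ' h' hι' hτ2
    rw [h0, zero_mul] at this
    exact hxP ((hπ0 x).1 this.symm)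
  · obtain ⟨S', hS'⟩ := range_RG ι S ι' π hι'
    have hmem : ∀ r, π r ∈ RG ι' (S' : Set M'.carrier) := fun r => by rw [← hS']; exact ⟨r, rfl⟩
    have hD' : DR M' (RG ι' (S' : Set M'.carrier)) := by
      rw [← hS']
      rintro _ ⟨r, rfl⟩
      exact ⟨_, hπd r⟩
    have hfr' : FrS (RG ι' (S' : Set M'.carrier)) := by
      intro m
      obtain ⟨a, b, hb, he⟩ := hπf m
      exact ⟨π a, hmem a, π b, hmem b, hb, he⟩
    refine CON ι' hE S' hD' hfr' (π x) (hmem x) ?_ (fun h => hxP ((hπ0 x).1 h))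
    intro J hJ hJd
    obtain ⟨π', hπ'⟩ : ∃ π' : RG ι (S : Set M.carrier) →+* RG ι' (S' : Set M'.carrier), ∀ r, π' r = ⟨π r, hmem r⟩ :=
      ⟨π.codRestrict _ hmem, fun _ => rfl⟩
    obtain ⟨n, hn⟩ := hPJ (J.comap π') (by
      refine lt_of_le_of_ne ?_ ?_
      · intro r hr
        rw [Ideal.mem_comap, hπ']
        have : (⟨π r, hmem r⟩ : RG ι' (S' : Set M'.carrier)) = 0 := Subtype.ext ((hπ0 r).2 hr)
        rw [this]; exact zero_mem _
      · intro heq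
        apply hJ
        rw [eq_bot_iff]
        rintro ⟨y, hy⟩ hyJ
        have hy' := hy
        rw [← hS'] at hy'
        obtain ⟨r, rfl⟩ := hy'
        have : r ∈ J.comap π' := by rw [Ideal.mem_comap, hπ']; exact hyJ
        rw [← heq] at this
        exact Subtype.ext ((hπ0 r).2 this)) (by
      intro r hr
      rw [Ideal.mem_comap] at hr ⊢
      have := hJd _ hr
      rw [hπ'] at this ⊢
      convert this using 1
      exact Subtype.ext (hπd r))
    refine ⟨n, ?_⟩
    rw [Ideal.mem_comap, map_pow, hπ'] at hn
    exact hn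
end SNT

namespace SNT
variable {A B E F M N : DFld.{u}}

theorem factor (ι : DHom N M) (τ : DHom A M) (h : ∀ e, τ e ∈ ι.f.fieldRange) :
    ∃ σ : DHom A N, ∀ e, ι (σ e) = τ e := by
  choose s hs using h
  have hs : ∀ e, ι (s e) = τ e := hs
  refine ⟨⟨⟨⟨⟨s, ?_⟩, ?_⟩, ?_, ?_⟩, ?_⟩, hs⟩
  · apply ι.inj; rw [hs]; exact (map_one τ.f).trans (map_one ι.f).symm
  · intro x y; apply ι.inj
    show ι (s (x * y)) = ι.f (s x * s y)
    rw [hs, map_mul ι.f]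
    show _ = ι (s x) * ι (s y)
    rw [hs, hs]; exact map_mul τ.f _ _
  · apply ι.inj; show ι (s 0) = _; rw [hs]; exact (map_zero τ.f).trans (map_zero ι.f).symm
  · intro x y; apply ι.inj
    show ι (s (x + y)) = ι.f (s x + s y)
    rw [hs, map_add ι.f]
    show _ = ι (s x) + ι (s y)
    rw [hs, hs]; exact map_add τ.f _ _
  · intro x; apply ι.inj
    show ι (s _) = ι (N.deriv (s x))
    rw [hs, ι.comm]
    show _ = M.deriv (ι (s x))
    rw [hs]; exact τ.comm x

theorem AM (f : DHom B E) (g : DHom B F) (hE : IsAlgClosed (con E)) (hSN : SN g) :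
    ∃ (M : DFld.{u}) (ι : DHom E M) (τ : DHom F M), (∀ b, ι (f b) = τ (g b)) ∧
      ∀ c ∈ con M, ∃ a ∈ con E, ι a = c := by
  obtain ⟨M, ι, τ, h⟩ := amalgam0 f g
  obtain ⟨M', ι', τ', h', -, -, hc⟩ := SPEC f g hE hSN ι τ h 1 (by rw [map_one]; exact one_ne_zero)
  exact ⟨M', ι', τ', h', hc⟩

theorem cl_nonew (ι : DHom E M) (h : ∀ c ∈ con M, ∃ a ∈ con E, ι a = c) :
    cl ι = ι.f.fieldRange := by
  unfold cl
  rw [sup_eq_left]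
  intro c hc
  obtain ⟨a, -, rfl⟩ := h c hc
  exact ⟨a, rfl⟩

theorem ev_comp' {f : DHom B E} {g : DHom B F} (φ : DHom M N) (a : DHom E M) (b : DHom F M)
    (a' : DHom E N) (b' : DHom F N)
    (h : ∀ x, a.f (f.f x) = b.f (g.f x)) (h' : ∀ x, a'.f (f.f x) = b'.f (g.f x))
    (ha : ∀ x, φ (a x) = a' x) (hb : ∀ x, φ (b x) = b' x) (r : Ten f.f g.f) :
    φ (ev a.f b.f h r) = ev a'.f b'.f h' r := by
  refine Ten_ind (P := fun r => φ.f (ev a.f b.f h r) = ev a'.f b'.f h' r) ?_ ?_ r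
  · intro x y
    simp only [map_mul, ev_inl, ev_inr]
    rw [ha, hb]
  · intro x y hx hy
    rw [map_add, map_add, map_add, hx, hy]

theorem END (g : DHom B N) (hN : IsAlgClosed (con N)) (hSN : SN g) (ι τ : DHom N M)
    (h : ∀ b, ι.f (g.f b) = τ.f (g.f b)) (z : Ten g.f g.f) (hz : ev ι.f τ.f h z ≠ 0) :
    ∃ (σ : DHom N N) (h' : ∀ b, (DHom.id N).f (g.f b) = σ.f (g.f b)),
      (∀ r, ev ι.f τ.f h r = 0 → ev (DHom.id N).f σ.f h' r = 0) ∧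
      ev (DHom.id N).f σ.f h' z ≠ 0 := by
  obtain ⟨M', ι', τ', h', h1, h2, hc⟩ := SPEC g g hN hSN ι τ h z hz
  have h3 := ((SN_iff g).1 hSN).2.2 M' ι' τ' h'
  rw [cl_nonew ι' hc] at h3
  obtain ⟨σ, hσ⟩ := factor ι' τ' h3
  have hh : ∀ b, (DHom.id N).f (g.f b) = σ.f (g.f b) := by
    intro b
    apply ι'.inj
    show ι' (g b) = ι' (σ (g b))
    rw [hσ]; exact h' b
  have key := fun r => ev_comp' (f := g) (g := g) ι' (DHom.id N) σ ι' τ' hh h' (fun _ => rfl) hσ r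
  refine ⟨σ, hh, fun r hr => ?_, fun h0 => h2 ?_⟩
  · apply ι'.inj
    exact (key r).trans ((h1 r hr).trans (map_zero ι'.f).symm)
  · rw [← key, h0]; exact map_zero ι'.f

theorem LI_pair (g : DHom B N) (x : N.carrier) (hx : x ∉ g.f.fieldRange) :
    LI g.f (fun i : Bool => if i then x else 1) := by
  rw [LI_iff]
  letI := g.f.toAlgebra
  show LinearIndependent B.carrier _
  rw [Fintype.linearIndependent_iff]
  intro c hc
  simp only [Fintype.sum_bool, Algebra.smul_def] at hc
  have hc : g.f (c true) * x + g.f (c false) * 1 = 0 := by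
    have h9 := hc
    simp only [if_true, Bool.false_eq_true, if_false] at h9
    exact h9
  have h1 : c true = 0 := by
    by_contra h0
    apply hx
    refine ⟨-(c false) / c true, ?_⟩
    have : g.f (c true) ≠ 0 := (map_ne_zero g.f).2 h0
    rw [map_div₀, map_neg]
    field_simp
    linear_combination -hc
  rw [h1, map_zero, zero_mul, zero_add, mul_one] at hc
  rintro (_ | _)
  · exact (map_eq_zero g.f).1 hc
  · exact h1

theorem U1 (g : DHom B N) (hN : IsAlgClosed (con N)) (hSN : SN g) (x : N.carrier)
    (hx : x ∉ g.f.fieldRange) : ∃ σ : DHom N N, (∀ b, σ (g b) = g b) ∧ σ x ≠ x := by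
  have hw : inr g.f g.f x - inl g.f g.f x ≠ 0 := by
    intro h0
    have := Ten_indep (f := g.f) (LI_pair g x hx) Finset.univ (fun i => if i then 1 else -x) (by
      rw [Fintype.sum_bool]
      simp only [if_true, map_one, one_mul, mul_one, map_neg, Bool.false_eq_true, if_false]
      rw [← sub_eq_add_neg]; exact h0) true (Finset.mem_univ _)
    simp at this
  obtain ⟨M, ι, τ, h, h1, -⟩ := amalgam g g _ hw
  obtain ⟨σ, h', -, h2⟩ := END g hN hSN ι τ h _ h1
  refine ⟨σ, fun b => (h' b).symm, fun h3 => h2 ?_⟩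
  rw [map_sub, ev_inl, ev_inr, h3]; exact sub_self _

theorem ev_d' (f : DHom B E) (g : DHom B F) : ∃ d : Ten f.f g.f → Ten f.f g.f, IsD d ∧
    ∀ (M : DFld.{u}) (ι : DHom E M) (τ : DHom F M) (h : ∀ b, ι.f (f.f b) = τ.f (g.f b)) r,
      ev ι.f τ.f h (d r) = M.deriv (ev ι.f τ.f h r) := by
  obtain ⟨d, hd, hl, hr⟩ := Ten_der f.f g.f (IsD.ofDFld B) (IsD.ofDFld E) (IsD.ofDFld F) f.comm g.comm
  refine ⟨d, hd, fun M ι τ h r => ?_⟩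
  refine Ten_ind (P := fun r => ev ι.f τ.f h (d r) = M.deriv (ev ι.f τ.f h r)) ?_ ?_ r
  · intro a b
    rw [hd.mul, hl, hr]
    simp only [map_add, map_mul, ev_inl, ev_inr, M.deriv_mul, ι.comm, τ.comm]
  · intro x y hx hy
    rw [hd.add, map_add, hx, hy, map_add, M.deriv_add]

theorem frac_sup (f : DHom B E) (g : DHom B F) (ι : DHom E M) (τ : DHom F M)
    (h : ∀ b, ι.f (f.f b) = τ.f (g.f b)) (m : M.carrier)
    (hm : m ∈ ι.f.fieldRange ⊔ τ.f.fieldRange) :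
    ∃ a b, ev ι.f τ.f h b ≠ 0 ∧ m = ev ι.f τ.f h a / ev ι.f τ.f h b := by
  rw [← Subfield.closure_eq ι.f.fieldRange, ← Subfield.closure_eq τ.f.fieldRange,
    ← Subfield.closure_union] at hm
  induction hm using Subfield.closure_induction with
  | mem x hx =>
    rcases hx with ⟨a, rfl⟩ | ⟨a, rfl⟩
    · exact ⟨inl _ _ a, 1, by rw [map_one]; exact one_ne_zero, by rw [map_one, ev_inl, div_one]⟩
    · exact ⟨inr _ _ a, 1, by rw [map_one]; exact one_ne_zero, by rw [map_one, ev_inr, div_one]⟩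
  | one => exact ⟨1, 1, by rw [map_one]; exact one_ne_zero, by rw [map_one, div_one]⟩
  | add x y hx hy h1 h2 =>
    obtain ⟨a, b, hb, rfl⟩ := h1
    obtain ⟨a', b', hb', rfl⟩ := h2
    exact ⟨a * b' + a' * b, b * b', by rw [map_mul]; exact mul_ne_zero hb hb', by
      simp only [map_mul, map_add]; field_simp⟩
  | neg x hx h1 =>
    obtain ⟨a, b, hb, rfl⟩ := h1
    exact ⟨-a, b, hb, by rw [map_neg, neg_div]⟩
  | inv x hx h1 =>
    obtain ⟨a, b, hb, rfl⟩ := h1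
    by_cases ha : ev ι.f τ.f h a = 0
    · exact ⟨0, 1, by rw [map_one]; exact one_ne_zero, by rw [ha]; simp⟩
    · exact ⟨b, a, ha, by rw [inv_div]⟩
  | mul x y hx hy h1 h2 =>
    obtain ⟨a, b, hb, rfl⟩ := h1
    obtain ⟨a', b', hb', rfl⟩ := h2
    exact ⟨a * a', b * b', by rw [map_mul]; exact mul_ne_zero hb hb', by
      simp only [map_mul]; field_simp⟩

end SNT

namespace SNT
variable {A B E F M N : DFld.{u}}

theorem common_den (g : DHom B N) (ι τ : DHom N M) (h : ∀ b, ι.f (g.f b) = τ.f (g.f b))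
    (hfr : ∀ m, ∃ a b, ev ι.f τ.f h b ≠ 0 ∧ m = ev ι.f τ.f h a / ev ι.f τ.f h b)
    {I : Type u} (c : I → M.carrier) (T : Finset I) :
    ∃ (b : Ten g.f g.f) (a : I → Ten g.f g.f), ev ι.f τ.f h b ≠ 0 ∧
      ∀ i ∈ T, ev ι.f τ.f h (a i) = c i * ev ι.f τ.f h b := by
  classical
  choose a0 b0 hb0 hc using fun i => hfr (c i)
  refine ⟨∏ j ∈ T, b0 j, fun i => a0 i * ∏ j ∈ T.erase i, b0 j, ?_, fun i hi => ?_⟩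
  · rw [map_prod]; exact Finset.prod_ne_zero_iff.2 fun i _ => hb0 i
  · rw [← Finset.mul_prod_erase T b0 hi, map_mul, map_mul]
    have h1 := hc i
    have h2 := hb0 i
    rw [eq_div_iff h2] at h1
    rw [← h1]; ring

theorem LS0 (g : DHom B N) (hN : IsAlgClosed (con N)) (hSN : SN g) (S : Subfield N.carrier)
    (hS : con N ≤ S) (x : N.carrier) (hx : ∀ σ : DHom N N, (∀ b, σ (g b) = g b) → σ x ∈ S)
    (ι τ : DHom N M) (h : ∀ b, ι.f (g.f b) = τ.f (g.f b))
    (hfr : ∀ m, ∃ a b, ev ι.f τ.f h b ≠ 0 ∧ m = ev ι.f τ.f h a / ev ι.f τ.f h b) :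
    τ x ∈ S.map ι.f ⊔ con M := by
  classical
  obtain ⟨I, c, hc, hli, -, hrep⟩ := exists_rep ι
  have hcl := ((SN_iff g).1 hSN).2.2 M ι τ h x
  unfold cl at hcl
  rw [RingHom.fieldRange_eq_map] at hcl
  obtain ⟨p, q, ⟨μ, -, hp⟩, ⟨ν, -, hq⟩, hq0, hpq⟩ := hrep ⊤ le_top (τ x) hcl
  obtain ⟨T, hT⟩ : ∃ T, T = μ.support ∪ ν.support := ⟨_, rfl⟩
  rw [Finsupp.sum_of_support_subset (s := T) _ (by rw [hT]; exact Finset.subset_union_left) _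
    (by intro i _; rw [map_zero, zero_mul])] at hp
  rw [Finsupp.sum_of_support_subset (s := T) _ (by rw [hT]; exact Finset.subset_union_right) _
    (by intro i _; rw [map_zero, zero_mul])] at hq
  obtain ⟨i0, hi0, hν0⟩ : ∃ i0 ∈ T, ν i0 ≠ 0 := by
    by_contra! hcon
    apply hq0
    rw [hq]
    refine Finset.sum_eq_zero fun i hi => ?_
    rw [hcon i hi, map_zero, zero_mul]
  obtain ⟨lam, hlam⟩ : ∃ lam : N.carrier →ₗ[S] S, lam (ν i0) ≠ 0 := by
    by_contra! hcon
    exact hν0 ((Module.forall_dual_apply_eq_zero_iff S (ν i0)).1 hcon)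
  obtain ⟨b, a, hb, ha⟩ := common_den g ι τ h hfr c T
  obtain ⟨d, hd, hev⟩ := ev_d' g g
  have hpq' : τ.f x * q = p := by
    have : τ.f x = p / q := hpq
    rw [this]; field_simp
  -- the relation
  have hrel : ev ι.f τ.f h (inr _ _ x * ∑ i ∈ T, inl _ _ (ν i) * a i - ∑ i ∈ T, inl _ _ (μ i) * a i) = 0 := by
    rw [map_sub, map_mul, ev_inr, map_sum, map_sum]
    have e1 : ∀ w : I → N.carrier, ∑ i ∈ T, ev ι.f τ.f h (inl _ _ (w i) * a i)
        = (∑ i ∈ T, ι.f (w i) * c i) * ev ι.f τ.f h b := by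
      intro w
      rw [Finset.sum_mul]
      refine Finset.sum_congr rfl fun i hi => ?_
      rw [map_mul, ev_inl, ha i hi]; ring
    rw [e1 (fun i => ν i), e1 (fun i => μ i), ← hp, ← hq, ← hpq']; ring
  have hcon : ∀ i ∈ T, ev ι.f τ.f h (d (a i) * b - a i * d b) = 0 := by
    intro i hi
    rw [map_sub, map_mul, map_mul, hev, hev, ha i hi, M.deriv_mul]
    have : M.deriv (c i) = 0 := hc i
    rw [this]; ring
  obtain ⟨y, hy⟩ : ∃ y, y = inr g.f g.f x * ∑ i ∈ T, inl _ _ ((lam (ν i) : N.carrier)) * a i - ∑ i ∈ T, inl _ _ ((lam (μ i) : N.carrier)) * a i := ⟨_, rfl⟩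
  have hy0 : ev ι.f τ.f h y = 0 := by
    by_contra hy0
    obtain ⟨σ, h', h1, h2⟩ := END g hN hSN ι τ h (b * y) (by rw [map_mul]; exact mul_ne_zero hb hy0)
    have hfix : ∀ b, σ (g b) = g b := fun b => (h' b).symm
    rw [map_mul] at h2
    have hb' := left_ne_zero_of_mul h2
    apply right_ne_zero_of_mul h2
    obtain ⟨c', hc'⟩ : ∃ c' : I → N.carrier, ∀ i, c' i = ev (DHom.id N).f σ.f h' (a i) / ev (DHom.id N).f σ.f h' b := ⟨_, fun i => rfl⟩
    have ha' : ∀ i, ev (DHom.id N).f σ.f h' (a i) = c' i * ev (DHom.id N).f σ.f h' b := by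
      intro i; rw [hc' i]; field_simp
    have hcS : ∀ i ∈ T, c' i ∈ S := by
      intro i hi
      apply hS
      rw [mem_con, hc', d_div _ _ _ hb', ← hev, ← hev]
      have := h1 _ (hcon i hi)
      rw [map_sub, map_mul, map_mul] at this
      rw [this, zero_div]
    have hr' := h1 _ hrel
    have hxS := hx σ hfix
    have e1 : ∀ w : I → N.carrier, ev (DHom.id N).f σ.f h' (inr _ _ x * ∑ i ∈ T, inl _ _ (w i) * a i) = (∑ i ∈ T, (σ x * c' i) * w i) * ev (DHom.id N).f σ.f h' b := by
      intro w
      rw [map_mul, ev_inr, map_sum, Finset.mul_sum, Finset.sum_mul]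
      refine Finset.sum_congr rfl fun i hi => ?_
      rw [map_mul, ev_inl, ha' i]
      show σ x * (w i * _) = _
      ring
    have e2 : ∀ w : I → N.carrier, ev (DHom.id N).f σ.f h' (∑ i ∈ T, inl _ _ (w i) * a i) = (∑ i ∈ T, c' i * w i) * ev (DHom.id N).f σ.f h' b := by
      intro w
      rw [map_sum, Finset.sum_mul]
      refine Finset.sum_congr rfl fun i hi => ?_
      rw [map_mul, ev_inl, ha' i]
      show (w i * _) = _
      ring
    rw [map_sub, e1 (fun i => ν i), e2 (fun i => μ i), ← sub_mul] at hr'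
    have hr2 := (mul_eq_zero.1 hr').resolve_right hb'
    have hS' : ∀ (k : I → N.carrier) (hk : ∀ i ∈ T, k i ∈ S) (w : I → N.carrier),
        (lam (∑ i ∈ T, k i * w i) : N.carrier) = ∑ i ∈ T, k i * (lam (w i) : N.carrier) := by
      intro k hk w
      rw [map_sum, AddSubmonoidClass.coe_finset_sum]
      refine Finset.sum_congr rfl fun i hi => ?_
      have : k i * w i = (⟨k i, hk i hi⟩ : S) • w i := rfl
      rw [this, map_smul]; rfl
    have hr3 := congrArg (fun t => (lam t : N.carrier)) hr2
    simp only [map_sub, map_zero] at hr3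
    rw [Subfield.coe_sub, hS' _ (fun i hi => mul_mem hxS (hcS i hi)), hS' _ hcS] at hr3
    rw [hy, map_sub, e1 (fun i => (lam (ν i) : N.carrier)), e2 (fun i => (lam (μ i) : N.carrier)), ← sub_mul, hr3]
    simp
  have e1 : ∀ w : I → N.carrier, ∑ i ∈ T, ev ι.f τ.f h (inl _ _ (w i) * a i)
        = (∑ i ∈ T, ι.f (w i) * c i) * ev ι.f τ.f h b := by
      intro w
      rw [Finset.sum_mul]
      refine Finset.sum_congr rfl fun i hi => ?_
      rw [map_mul, ev_inl, ha i hi]; ring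
  rw [hy, map_sub, map_mul, ev_inr, map_sum, map_sum, e1 (fun i => (lam (ν i) : N.carrier)), e1 (fun i => (lam (μ i) : N.carrier)), ← mul_assoc, ← sub_mul] at hy0
  have hy1 := (mul_eq_zero.1 hy0).resolve_right hb
  have hQ : ∑ i ∈ T, ι.f (lam (ν i) : N.carrier) * c i ≠ 0 := by
    intro h0
    apply hlam
    exact Subtype.ext (hli T _ h0 i0 hi0)
  have hmem : ∀ w : I → N.carrier, ∑ i ∈ T, ι.f (lam (w i) : N.carrier) * c i ∈ S.map ι.f ⊔ con M := by
    intro w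
    refine sum_mem fun i hi => mul_mem ?_ ?_
    · exact (le_sup_left : S.map ι.f ≤ _) ⟨_, (lam (w i)).2, rfl⟩
    · exact (le_sup_right : con M ≤ _) (hc i)
  have : τ x = (∑ i ∈ T, ι.f (lam (μ i) : N.carrier) * c i) / (∑ i ∈ T, ι.f (lam (ν i) : N.carrier) * c i) := by
    rw [eq_div_iff hQ]; exact sub_eq_zero.1 hy1
  rw [this]
  exact div_mem (hmem _) (hmem _)

theorem LS (g : DHom B N) (hN : IsAlgClosed (con N)) (hSN : SN g) (S : Subfield N.carrier)
    (hS : con N ≤ S) (x : N.carrier) (hx : ∀ σ : DHom N N, (∀ b, σ (g b) = g b) → σ x ∈ S)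
    (ι τ : DHom N M) (h : ∀ b, ι.f (g.f b) = τ.f (g.f b)) :
    τ x ∈ S.map ι.f ⊔ con M := by
  have hD : DC M (ι.f.fieldRange ⊔ τ.f.fieldRange) := DC_sup (DC_range _) (DC_range _)
  obtain ⟨ι', hι'⟩ : ∃ ι' : DHom N (sub M _ hD), ∀ x, subi M _ hD (ι' x) = ι x :=
    ⟨ι.codRestrict _ hD (fun x => (le_sup_left : ι.f.fieldRange ≤ _) ⟨x, rfl⟩), fun _ => rfl⟩
  obtain ⟨τ', hτ'⟩ : ∃ τ' : DHom N (sub M _ hD), ∀ x, subi M _ hD (τ' x) = τ x :=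
    ⟨τ.codRestrict _ hD (fun x => (le_sup_right : τ.f.fieldRange ≤ _) ⟨x, rfl⟩), fun _ => rfl⟩
  have h' : ∀ b, ι'.f (g.f b) = τ'.f (g.f b) := by
    intro b
    apply (subi M _ hD).inj
    exact (hι' _).trans ((h b).trans (hτ' _).symm)
  have := LS0 g hN hSN S hS x hx ι' τ' h' (by
    intro m
    obtain ⟨a, b, hb, hm⟩ := frac_sup g g ι τ h m.1 m.2
    have key := fun r => ev_comp' (f := g) (g := g) (subi M _ hD) ι' τ' ι τ h' h hι' hτ' r
    refine ⟨a, b, fun h0 => hb ?_, ?_⟩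
    · rw [← key, h0]; exact map_zero (subi M _ hD).f
    · apply (subi M _ hD).inj
      refine Eq.trans ?_ (map_div₀ (subi M _ hD).f _ _).symm
      have k1 := key a
      have k2 := key b
      rw [k1, k2]; exact hm)
  have h2 : (subi M _ hD) (τ' x) ∈ (S.map ι'.f ⊔ con (sub M _ hD)).map (subi M _ hD).f := ⟨_, this, rfl⟩
  rw [hτ', Subfield.map_sup] at h2
  refine (sup_le_sup ?_ ?_ : _ ≤ S.map ι.f ⊔ con M) h2
  · rintro _ ⟨_, ⟨y, hy, rfl⟩, rfl⟩
    exact ⟨y, hy, (hι' y).symm⟩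
  · rintro _ ⟨y, hy, rfl⟩
    exact (subi M _ hD).cmem hy

end SNT

namespace SNT

def FG {X : Type u} [Field X] (k L : Subfield X) : Prop :=
  ∃ s : Finset X, k ⊔ Subfield.closure (s : Set X) = L

section
variable {X : Type u} [Field X]

theorem LI_pair' {B N : Type u} [Field B] [Field N] (g : B →+* N) (x : N) (hx : x ∉ g.fieldRange) :
    LI g (fun i : Bool => if i then x else 1) := by
  rw [LI_iff]
  letI := g.toAlgebra
  show LinearIndependent B _
  rw [Fintype.linearIndependent_iff]
  intro c hc
  simp only [Fintype.sum_bool, Algebra.smul_def] at hc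
  have hc : g (c true) * x + g (c false) * 1 = 0 := by
    have h9 := hc
    simp only [if_true, Bool.false_eq_true, if_false] at h9
    exact h9
  have h1 : c true = 0 := by
    by_contra h0
    apply hx
    refine ⟨-(c false) / c true, ?_⟩
    have : g (c true) ≠ 0 := (map_ne_zero g).2 h0
    rw [map_div₀, map_neg]
    field_simp
    linear_combination -hc
  rw [h1, map_zero, zero_mul, zero_add, mul_one] at hc
  rintro (_ | _)
  · exact (map_eq_zero g).1 hc
  · exact h1

theorem Ten_diag (K : Subfield X) (a : X)
    (h : inl K.subtype K.subtype a = inr K.subtype K.subtype a) : a ∈ K := by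
  by_contra hx
  have := Ten_indep (f := K.subtype) (LI_pair' K.subtype a (by simpa using hx)) Finset.univ
    (fun i => if i then 1 else -a) (by
      rw [Fintype.sum_bool]
      simp only [if_true, map_one, one_mul, mul_one, map_neg, Bool.false_eq_true, if_false]
      rw [h]; ring) true (Finset.mem_univ _)
  simp at this

theorem Ten_noeth' {B : Type u} [Field B] (f : B →+* X) (s : Finset X)
    (hs : f.fieldRange ⊔ Subfield.closure (s : Set X) = ⊤) : IsNoetherianRing (Ten f f) := by
  letI : Algebra B X := f.toAlgebra
  have h1 : (⊤ : IntermediateField B X).FG := by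
    refine ⟨s, ?_⟩
    rw [eq_top_iff]
    intro x _
    have hx : x ∈ f.fieldRange ⊔ Subfield.closure (s : Set X) := by rw [hs]; trivial
    rw [← Subfield.closure_eq f.fieldRange, ← Subfield.closure_union] at hx
    refine (Subfield.closure_le.2 ?_ : _ ≤ (IntermediateField.adjoin B (s : Set X)).toSubfield) hx
    rintro y (⟨b, rfl⟩ | hy)
    · exact (IntermediateField.adjoin B (s : Set X)).algebraMap_mem b
    · exact IntermediateField.subset_adjoin B _ hy
  have h2 : Algebra.EssFiniteType B X := IntermediateField.fg_top_iff.1 h1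
  have := Algebra.EssFiniteType.isNoetherianRing X (TensorProduct B X X)
  exact this

theorem Ten_noeth (k : Subfield X) (h : FG k ⊤) : IsNoetherianRing (Ten k.subtype k.subtype) := by
  obtain ⟨s, hs⟩ := h
  refine Ten_noeth' k.subtype s ?_
  have : k.subtype.fieldRange = k := by ext x; simp
  rw [this]; exact hs

noncomputable def JI (k K : Subfield X) : Ideal (Ten k.subtype k.subtype) :=
  Ideal.span ((fun a => inl k.subtype k.subtype a - inr k.subtype k.subtype a) '' (K : Set X))

theorem JI_mem (k K : Subfield X) (hk : k ≤ K) (a : X)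
    (h : inl k.subtype k.subtype a - inr k.subtype k.subtype a ∈ JI k K) : a ∈ K := by
  have hc : ∀ x : k, inl K.subtype K.subtype (k.subtype x) = inr K.subtype K.subtype (k.subtype x) :=
    fun x => inl_inr K.subtype K.subtype ⟨x.1, hk x.2⟩
  have : JI k K ≤ RingHom.ker (ev (f := k.subtype) (g := k.subtype) (inl K.subtype K.subtype) (inr K.subtype K.subtype) hc) := by
    unfold JI
    rw [Ideal.span_le]
    rintro _ ⟨a, ha, rfl⟩
    show _ = _
    simp only [map_sub, ev_inl, ev_inr]
    rw [sub_eq_zero]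
    exact inl_inr K.subtype K.subtype ⟨a, ha⟩
  have h2 := this h
  rw [RingHom.mem_ker, map_sub, ev_inl, ev_inr, sub_eq_zero] at h2
  exact Ten_diag K a h2

theorem acc_top (k : Subfield X) (h : FG k ⊤) :
    WellFounded (fun K K' : {K : Subfield X // k ≤ K} => K'.1 < K.1) := by
  have hN := Ten_noeth k h
  have hw : WellFounded (fun I J : Ideal (Ten k.subtype k.subtype) => I > J) :=
    (inferInstance : WellFoundedGT (Ideal (Ten k.subtype k.subtype))).wf
  refine Subrelation.wf (r := InvImage (fun I J : Ideal (Ten k.subtype k.subtype) => I > J) (fun K : {K : Subfield X // k ≤ K} => JI k K.1)) ?_ (InvImage.wf _ hw)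
  intro K K' hlt
  show JI k K'.1 < JI k K.1
  refine lt_of_le_not_ge (Ideal.span_mono (Set.image_mono hlt.le)) fun hle => hlt.not_ge ?_
  intro a ha
  exact JI_mem k K'.1 K'.2 a (hle (Ideal.subset_span ⟨a, ha, rfl⟩))

theorem exists_max (k : Subfield X) (h : FG k ⊤) (P : Subfield X → Prop) (K0 : Subfield X)
    (h0 : k ≤ K0) (hP0 : P K0) : ∃ K, k ≤ K ∧ P K ∧ ∀ K', K ≤ K' → P K' → K' = K := by
  obtain ⟨K, hK, hm⟩ := (acc_top k h).has_min {K | P K.1} ⟨⟨K0, h0⟩, hP0⟩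
  refine ⟨K.1, K.2, hK, fun K' hle hP => ?_⟩
  by_contra hne
  exact hm ⟨K', K.2.trans hle⟩ hP (lt_of_le_of_ne hle (Ne.symm hne))

theorem FG_le_top (k K : Subfield X) (h : FG k ⊤) (hk : k ≤ K) : FG k K := by
  classical
  obtain ⟨L, hL, ⟨⟨s, hs⟩, hLK⟩, hm⟩ := exists_max k h (fun L => FG k L ∧ L ≤ K) k le_rfl
    ⟨⟨∅, by simp⟩, hk⟩
  have : L = K := by
    refine le_antisymm hLK fun a ha => ?_
    have := hm (L ⊔ Subfield.closure {a}) le_sup_left ⟨⟨insert a s, ?_⟩, ?_⟩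
    · rw [← this]
      exact (le_sup_right : Subfield.closure {a} ≤ _) (Subfield.subset_closure rfl)
    · rw [← hs, Finset.coe_insert, Set.insert_eq, Subfield.closure_union, sup_assoc, sup_comm (Subfield.closure {a})]
    · exact sup_le hLK (Subfield.closure_le.2 (by simpa using ha))
  exact ⟨s, hs.trans this⟩

theorem FG.trans {k K L : Subfield X} (h1 : FG k K) (h2 : FG K L) : FG k L := by
  classical
  obtain ⟨s, rfl⟩ := h1
  obtain ⟨t, rfl⟩ := h2
  exact ⟨s ∪ t, by rw [Finset.coe_union, Subfield.closure_union, sup_assoc]⟩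

theorem FG.le {k K : Subfield X} (h : FG k K) : k ≤ K := by
  obtain ⟨s, rfl⟩ := h; exact le_sup_left

theorem FG.map {Y : Type u} [Field Y] (f : X →+* Y) {k K : Subfield X} (h : FG k K) :
    FG (k.map f) (K.map f) := by
  classical
  obtain ⟨s, rfl⟩ := h
  exact ⟨s.image f, by rw [Subfield.map_sup, RingHom.map_field_closure, Finset.coe_image]⟩

theorem FG.sup {k K : Subfield X} (h : FG k K) (L : Subfield X) : FG (L ⊔ k) (L ⊔ K) := by
  obtain ⟨s, rfl⟩ := h
  exact ⟨s, by rw [sup_assoc]⟩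

theorem FG_up {k K L : Subfield X} (h : FG k L) (h1 : k ≤ K) (h2 : K ≤ L) : FG K L := by
  obtain ⟨s, rfl⟩ := h
  refine ⟨s, le_antisymm (sup_le h2 le_sup_right) (sup_le_sup_right h1 _)⟩

end
end SNT

namespace SNT
variable {A B E F M N W : DFld.{u}}

theorem SN_congr {g : DHom A F} {g' : DHom B F} (h : g.f.fieldRange = g'.f.fieldRange) :
    SN g ↔ SN g' := by unfold SN; rw [h]

theorem SN_of_comp (f : DHom A B) (g : DHom B F) (h : SN (g.comp f)) : SN g := by
  rw [SN_iff] at *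
  obtain ⟨⟨s, hs⟩, h2, h3⟩ := h
  refine ⟨⟨s, ?_⟩, ?_, ?_⟩
  · rw [eq_top_iff, ← hs]
    refine sup_le_sup_right ?_ _
    rintro _ ⟨x, rfl⟩
    exact ⟨f x, rfl⟩
  · intro x hx
    obtain ⟨b, hb⟩ := h2 x hx
    exact ⟨f b, hb⟩
  · intro M ι σ h e
    exact h3 M ι σ (fun b => h (f b)) e

theorem SN_surj (g : DHom B N) (hSN : SN g) (σ : DHom N N) (h : ∀ b, σ (g b) = g b) (e : N.carrier) :
    ∃ x, σ x = e := by
  rw [SN_iff] at hSN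
  have h1 := hSN.2.2 N σ (DHom.id N) (fun b => h b) e
  have h2 : cl σ = σ.f.fieldRange := by
    unfold cl
    rw [sup_eq_left]
    intro x hx
    obtain ⟨b, rfl⟩ := hSN.2.1 x hx
    exact ⟨g b, h b⟩
  rw [h2] at h1
  exact h1

def SNR (E : DFld.{u}) (K L : Subfield E.carrier) : Prop :=
  ∃ (hK : DC E K) (hL : DC E L) (h : K ≤ L), SN (incl E hK hL h)

theorem FG_sub {X : Type u} [Field X] {K L : Subfield X} (h : K ≤ L) :
    FG K L ↔ FG (K.comap L.subtype) ⊤ := by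
  classical
  have e1 : (K.comap L.subtype).map L.subtype = K := by
    rw [Subfield.map_comap_eq]
    have : L.subtype.fieldRange = L := by ext x; simp
    rw [this, inf_eq_left.2 h]
  have e2 : (⊤ : Subfield L).map L.subtype = L := by
    rw [← RingHom.fieldRange_eq_map]; ext x; simp
  constructor
  · rintro ⟨s, hs⟩
    have hsL : ∀ x ∈ s, x ∈ L := fun x hx => by
      rw [← hs]; exact (le_sup_right : Subfield.closure (s : Set X) ≤ _) (Subfield.subset_closure hx)
    refine ⟨s.attach.image (fun x => ⟨x.1, hsL x.1 x.2⟩), ?_⟩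
    have key : ∀ A B : Subfield L, A.map L.subtype = B.map L.subtype → A = B := by
      intro A B h; rw [← Subfield.comap_map L.subtype A, h, Subfield.comap_map]
    apply key
    rw [Subfield.map_sup, e1, e2, RingHom.map_field_closure]
    convert hs using 3
    ext x
    simp only [Finset.coe_image, Set.mem_image]
    constructor
    · rintro ⟨_, ⟨y, _, rfl⟩, rfl⟩; exact y.2
    · intro hx; exact ⟨_, ⟨⟨x, hx⟩, by simp, rfl⟩, rfl⟩
  · intro h1
    have := h1.map L.subtype
    rwa [e1, e2] at this

theorem SNR_of {K L : Subfield E.carrier} (hK : DC E K) (hL : DC E L) (h : K ≤ L) (hfg : FG K L)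
    (hc : ∀ x ∈ con E, x ∈ L → x ∈ K)
    (hs : ∀ (M : DFld.{u}) (ι σ : DHom (sub E L hL) M),
      (∀ x : (sub E L hL).carrier, subi E L hL x ∈ K → ι x = σ x) → ∀ e, σ e ∈ cl ι) : SNR E K L := by
  refine ⟨hK, hL, h, (SN_iff _).2 ⟨?_, ?_, ?_⟩⟩
  · obtain ⟨s, hs⟩ := (FG_sub h).1 hfg
    exact ⟨s, by rw [incl_range]; exact hs⟩
  · rintro ⟨x, hx⟩ hx2
    have : x ∈ K := hc x ((subi E L hL).cmem hx2) hx
    exact ⟨⟨x, this⟩, rfl⟩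
  · intro M ι σ hh e
    refine hs M ι σ (fun x hx => ?_) e
    exact hh ⟨x.1, hx⟩

theorem SNR.fg {K L : Subfield E.carrier} (h : SNR E K L) : FG K L := by
  obtain ⟨hK, hL, h, hSN⟩ := h
  obtain ⟨s, hs⟩ := ((SN_iff _).1 hSN).1
  rw [incl_range] at hs
  exact (FG_sub h).2 ⟨s, hs⟩

theorem SNR.con {K L : Subfield E.carrier} (h : SNR E K L) (x : E.carrier) (hx : x ∈ con E)
    (hxL : x ∈ L) : x ∈ K := by
  obtain ⟨hK, hL, h, hSN⟩ := h
  obtain ⟨⟨b, hb⟩, hb2⟩ := ((SN_iff _).1 hSN).2.1 ⟨x, hxL⟩ ((subi E L hL).con_iff.1 hx)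
  have : b = x := congrArg (subi E L hL) hb2
  rw [← this]; exact hb

theorem SNR.elim {K L : Subfield E.carrier} (h : SNR E K L) (hL : DC E L)
    (ι σ : DHom (sub E L hL) M)
    (hh : ∀ x : (sub E L hL).carrier, subi E L hL x ∈ K → ι x = σ x) (e) : σ e ∈ cl ι := by
  obtain ⟨hK, hL, h, hSN⟩ := h
  exact ((SN_iff _).1 hSN).2.2 M ι σ (fun b => hh _ b.2) e

theorem SNR.le {K L : Subfield E.carrier} (h : SNR E K L) : K ≤ L := h.2.2.1
theorem SNR.dcl {K L : Subfield E.carrier} (h : SNR E K L) : DC E K := h.1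
theorem SNR.dcr {K L : Subfield E.carrier} (h : SNR E K L) : DC E L := h.2.1

/-- if all the elements of two subfields are mapped into `cl`, so is the sup -/
theorem sup_into {X Y L : Subfield E.carrier} (hL : DC E L) (hXY : L ≤ X ⊔ Y) (hX : X ≤ L) (hY : Y ≤ L)
    (σ : DHom (sub E L hL) M) (Z : Subfield M.carrier)
    (h1 : ∀ e, subi E L hL e ∈ X → σ e ∈ Z) (h2 : ∀ e, subi E L hL e ∈ Y → σ e ∈ Z) (e) : σ e ∈ Z := by
  have hle : L ≤ (Z.comap σ.f).map (subi E L hL).f := by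
    refine hXY.trans (sup_le ?_ ?_)
    · intro x hx
      exact ⟨⟨x, hX hx⟩, h1 ⟨x, hX hx⟩ hx, rfl⟩
    · intro x hx
      exact ⟨⟨x, hY hx⟩, h2 ⟨x, hY hx⟩ hx, rfl⟩
  obtain ⟨y, hy, hye⟩ := hle e.2
  have : y = e := (subi E L hL).inj hye
  rw [← this]; exact hy

theorem cl_comp_le (ι : DHom B M) (f : DHom A B) : cl (ι.comp f) ≤ cl ι := by
  unfold cl
  refine sup_le_sup_right ?_ _
  rintro _ ⟨x, rfl⟩
  exact ⟨f x, rfl⟩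

theorem COMPOS {k K E1 : Subfield E.carrier} (h : SNR E k E1) (hc : con E ≤ k) (hK : DC E K)
    (hkK : k ≤ K) : SNR E K (K ⊔ E1) := by
  have hL : DC E (K ⊔ E1) := DC_sup hK h.dcr
  refine SNR_of hK hL le_sup_left ?_ (fun x hx _ => hkK (hc hx)) ?_
  · have := h.fg.sup K
    rwa [sup_eq_left.2 hkK] at this
  · intro M ι σ hh e
    refine sup_into hL le_rfl le_sup_left le_sup_right σ (cl ι) ?_ ?_ e
    · intro e he
      rw [← hh e he]
      exact (le_sup_left : ι.f.fieldRange ≤ _) ⟨e, rfl⟩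
    · intro e he
      have := h.elim h.dcr (ι.comp (incl E h.dcr hL le_sup_right))
        (σ.comp (incl E h.dcr hL le_sup_right)) (fun x hx => hh _ (hkK hx)) ⟨e.1, he⟩
      exact cl_comp_le _ _ this

theorem SUPSN {k E1 E2 : Subfield E.carrier} (h1 : SNR E k E1) (h2 : SNR E k E2)
    (hc : con E ≤ k) : SNR E k (E1 ⊔ E2) := by
  have hL : DC E (E1 ⊔ E2) := DC_sup h1.dcr h2.dcr
  refine SNR_of h1.dcl hL (h1.le.trans le_sup_left) ?_ (fun x hx _ => (hc hx)) ?_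
  · have := h2.fg.sup E1
    rw [sup_eq_left.2 h1.le] at this
    exact h1.fg.trans this
  · intro M ι σ hh e
    refine sup_into hL le_rfl le_sup_left le_sup_right σ (cl ι) ?_ ?_ e
    · intro e he
      have := h1.elim h1.dcr (ι.comp (incl E h1.dcr hL le_sup_left))
        (σ.comp (incl E h1.dcr hL le_sup_left)) (fun x hx => hh _ hx) ⟨e.1, he⟩
      exact cl_comp_le _ _ this
    · intro e he
      have := h2.elim h2.dcr (ι.comp (incl E h2.dcr hL le_sup_right))
        (σ.comp (incl E h2.dcr hL le_sup_right)) (fun x hx => hh _ hx) ⟨e.1, he⟩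
      exact cl_comp_le _ _ this

/-- hom version to subfields -/
theorem SNR_range (g : DHom B F) (hSN : SN g) (τ : DHom F M) :
    SNR M (τ.comp g).f.fieldRange τ.f.fieldRange := by
  rw [SN_iff] at hSN
  obtain ⟨⟨s, hs⟩, h2, h3⟩ := hSN
  refine SNR_of (DC_range _) (DC_range _) ?_ ?_ ?_ ?_
  · rintro _ ⟨x, rfl⟩; exact ⟨g x, rfl⟩
  · have := FG.map τ.f (k := g.f.fieldRange) (K := ⊤) ⟨s, hs⟩
    rw [← RingHom.fieldRange_eq_map, RingHom.map_fieldRange] at this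
    exact this
  · rintro _ hx ⟨y, rfl⟩
    obtain ⟨b, rfl⟩ := h2 y (τ.con_iff.1 hx)
    exact ⟨b, rfl⟩
  · intro M' ι σ hh e
    let τ' : DHom F (sub M τ.f.fieldRange (DC_range τ)) := τ.codRestrict _ (DC_range τ) (fun x => ⟨x, rfl⟩)
    obtain ⟨e, y, rfl⟩ := e
    have := h3 M' (ι.comp τ') (σ.comp τ') (fun b => hh _ ⟨b, rfl⟩) y
    exact cl_comp_le _ _ this

theorem SN_codRestrict (g : DHom B M) (L : Subfield M.carrier) (h : SNR M g.f.fieldRange L)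
    (hL : DC M L) (hg : ∀ x, g x ∈ L) : SN (g.codRestrict L hL hg) := by
  obtain ⟨h1, h2, h3, h4⟩ := h
  refine (SN_congr ?_).1 h4
  rw [incl_range]
  ext x
  constructor
  · rintro ⟨b, hb⟩
    exact ⟨b, Subtype.ext hb⟩
  · rintro ⟨b, rfl⟩
    exact ⟨b, rfl⟩

end SNT

namespace SNT
variable {A B E F L M N W : DFld.{u}}

theorem TAU (f : DHom B E) (g : DHom B F) (ι : DHom E L) (τ : DHom F L)
    (h : ∀ b, ι.f (f.f b) = τ.f (g.f b)) (htop : ι.f.fieldRange ⊔ τ.f.fieldRange = ⊤)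
    (hld : ∀ (I : Type u) (v : I → F.carrier), LI g.f v → LI ι.f (fun i => τ (v i)))
    (hcon : con L ≤ ι.f.fieldRange) (ρ : DHom L M) (j : DHom E M)
    (hj : ∀ b, j.f (f.f b) = ρ.f (τ.f (g.f b)))
    (hj2 : ∀ e, j e ∈ (ι.f.fieldRange).map ρ.f ⊔ con M) :
    ∃ T : DHom L M, (∀ x, T (τ x) = ρ (τ x)) ∧ ∀ x, T (ι x) = j x := by
  classical
  replace hj : ∀ b, j.f (f.f b) = (ρ.comp τ).f (g.f b) := hj
  obtain ⟨I, v, hv, hsp⟩ := exists_basis g.f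
  have i1 : ∀ t, ev ι.f τ.f h t = 0 → t = 0 := by
    intro t ht
    obtain ⟨c, rfl⟩ := Ten_rep (f := f.f) hsp t
    rw [map_sum] at ht
    simp only [map_mul, ev_inl, ev_inr] at ht
    have := hld I v hv c.support c ht
    exact Finset.sum_eq_zero fun i hi => by rw [this i hi, map_zero, zero_mul]
  have i2 : ∀ t, ev j.f (ρ.comp τ).f hj t = 0 → t = 0 := by
    intro t ht
    obtain ⟨c, rfl⟩ := Ten_rep (f := f.f) hsp t
    rw [map_sum] at ht
    simp only [map_mul, ev_inl, ev_inr] at ht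
    have h1 : LI (ι.f.fieldRange).subtype (fun i => τ (v i)) := by
      intro s c hs
      have hc : ∀ i, ∃ y, ι y = c i := fun i => (c i).2
      choose y hy using hc
      have := hld I v hv s y (by
        rw [← hs]
        refine Finset.sum_congr rfl fun i _ => ?_
        rw [hy]; rfl)
      intro i hi
      apply Subtype.ext
      rw [← hy, this i hi]; exact map_zero ι.f
    have h2 := LD ρ _ hcon _ h1 c.support (fun i => ⟨j (c i), hj2 _⟩) ht
    refine Finset.sum_eq_zero fun i hi => ?_
    have h3 : j.f (c i) = 0 := congrArg Subtype.val (h2 i hi)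
    rw [(map_eq_zero j.f).1 h3, map_zero, zero_mul]
  obtain ⟨d, hd, hev⟩ := ev_d' f g
  have hDR : DR L (ev ι.f τ.f h).range := by
    rintro _ ⟨t, rfl⟩
    exact ⟨d t, hev L ι τ h t⟩
  have hFr : FrS (ev ι.f τ.f h).range := by
    intro x
    obtain ⟨a, b, hb, hx⟩ := frac_sup f g ι τ h x (by rw [htop]; trivial)
    exact ⟨_, ⟨a, rfl⟩, _, ⟨b, rfl⟩, hb, hx⟩
  let e : Ten f.f g.f ≃+* (ev ι.f τ.f h).range :=
    RingEquiv.ofBijective (ev ι.f τ.f h).rangeRestrict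
      ⟨by
        rw [injective_iff_map_eq_zero]
        intro t ht
        exact i1 t (congrArg Subtype.val ht), (ev ι.f τ.f h).rangeRestrict_surjective⟩
  have he : ∀ t, (e t : L.carrier) = ev ι.f τ.f h t := fun t => rfl
  obtain ⟨φ, hφ⟩ : ∃ φ : (ev ι.f τ.f h).range →+* M.carrier, ∀ t, φ (e t) = ev j.f (ρ.comp τ).f hj t :=
    ⟨(ev j.f (ρ.comp τ).f hj).comp e.symm.toRingHom, fun t => by simp⟩
  obtain ⟨T, hT⟩ := extend _ hDR hFr φ (by
    intro x hx
    obtain ⟨t, rfl⟩ := e.surjective x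
    rw [hφ] at hx
    rw [i2 t hx, map_zero]) (by
    intro x
    obtain ⟨t, rfl⟩ := e.surjective x
    have : (⟨L.deriv (e t), hDR _ (e t).2⟩ : (ev ι.f τ.f h).range) = e (d t) :=
      Subtype.ext (hev L ι τ h t).symm
    rw [this, hφ, hφ]
    exact hev M j (ρ.comp τ) hj t)
  have hT' : ∀ t, T (ev ι.f τ.f h t) = ev j.f (ρ.comp τ).f hj t := by
    intro t
    rw [← hφ, ← hT]; rfl
  refine ⟨T, fun x => ?_, fun x => ?_⟩
  · have := hT' (inr _ _ x)
    rw [ev_inr, ev_inr] at this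
    exact this
  · have := hT' (inl _ _ x)
    rw [ev_inl, ev_inl] at this
    exact this

/-- Artin style linear disjointness -/
theorem ART1 {K X L : Subfield E.carrier} (hX : DC E X) (hKX : K ≤ X) (hLX : L ≤ X)
    (hfix : ∀ x ∈ X, (∀ σ : DHom (sub E X hX) E, (∀ y, subi E X hX y ∈ K → σ y = subi E X hX y) →
      ∀ hx : x ∈ X, σ ⟨x, hx⟩ = x) → x ∈ K)
    (hst : ∀ σ : DHom (sub E X hX) E, (∀ y, subi E X hX y ∈ K → σ y = subi E X hX y) →
      ∀ x, subi E X hX x ∈ L → σ x ∈ L)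
    {I : Type u} (v : I → E.carrier) (hvK : ∀ i, v i ∈ K) (hv : LI (K ⊓ L).subtype v) :
    LI L.subtype v := by
  classical
  intro s
  induction s using Finset.induction_on with
  | empty => intro c _ i hi; simp at hi
  | insert i0 s hi0 ih =>
    intro c hc
    by_cases h0 : c i0 = 0
    · rw [Finset.sum_insert hi0, h0, map_zero, zero_mul, zero_add] at hc
      have := ih c hc
      intro i hi
      rcases Finset.mem_insert.1 hi with rfl | hi
      · exact h0
      · exact this i hi
    · exfalso
      let c' : I → L := fun i => c i / c i0
      have hc1 : ∑ i ∈ insert i0 s, L.subtype (c' i) * v i = 0 := by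
        have : ∑ i ∈ insert i0 s, L.subtype (c' i) * v i = (L.subtype (c i0))⁻¹ * ∑ i ∈ insert i0 s, L.subtype (c i) * v i := by
          rw [Finset.mul_sum]
          refine Finset.sum_congr rfl fun i _ => ?_
          simp only [c', map_div₀]
          ring
        rw [this, hc, mul_zero]
      have hc10 : c' i0 = 1 := div_self h0
      -- the coefficients are fixed
      have hfx : ∀ i ∈ s, (c' i : E.carrier) ∈ K := by
        intro i hi
        refine hfix _ (hLX (c' i).2) fun σ hσ hx => ?_
        have hX' : ∀ i, (c' i : E.carrier) ∈ X := fun i => hLX (c' i).2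
        let c2 : I → L := fun i => ⟨σ ⟨c' i, hX' i⟩, hst σ hσ ⟨c' i, hX' i⟩ (c' i).2⟩ - c' i
        have hc2 : ∑ i ∈ insert i0 s, L.subtype (c2 i) * v i = 0 := by
          have e1 : ∑ i ∈ insert i0 s, σ.f ⟨c' i, hX' i⟩ * v i = 0 := by
            have e2 : (∑ i ∈ insert i0 s, (⟨c' i, hX' i⟩ * ⟨v i, hKX (hvK i)⟩ : (sub E X hX).carrier)) = 0 := by
              apply (subi E X hX).inj
              refine (map_sum (subi E X hX).f _ _).trans ?_
              rw [map_zero]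
              exact hc1
            have e3 := congrArg σ.f e2
            rw [map_sum, map_zero] at e3
            rw [← e3]
            refine Finset.sum_congr rfl fun i _ => ?_
            refine Eq.trans ?_ (map_mul σ.f _ _).symm
            congr 1
            exact (hσ ⟨v i, hKX (hvK i)⟩ (hvK i)).symm
          calc _ = ∑ i ∈ insert i0 s, (σ.f ⟨c' i, hX' i⟩ * v i - L.subtype (c' i) * v i) := by
                refine Finset.sum_congr rfl fun i _ => ?_
                rw [← sub_mul]; rfl
            _ = 0 := by rw [Finset.sum_sub_distrib, e1, hc1, sub_zero]
        have hc20 : c2 i0 = 0 := by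
          apply Subtype.ext
          show σ.f ⟨c' i0, hX' i0⟩ - c' i0 = 0
          have h8 : σ.f ⟨c' i0, hX' i0⟩ = 1 := by
            have : (⟨c' i0, hX' i0⟩ : (sub E X hX).carrier) = (1 : (sub E X hX).carrier) := (subi E X hX).inj (by
              refine Eq.trans ?_ (map_one (subi E X hX).f).symm
              show (c' i0 : E.carrier) = 1
              rw [hc10]; rfl)
            exact (congrArg σ.f this).trans (map_one σ.f)
          rw [h8, hc10]; exact sub_self _
        rw [Finset.sum_insert hi0, hc20, map_zero, zero_mul, zero_add] at hc2
        have h5 : σ ⟨c' i, hX' i⟩ - c' i = 0 := congrArg Subtype.val (ih c2 hc2 i hi)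
        exact sub_eq_zero.1 h5
      have hfx' : ∀ i ∈ insert i0 s, (c' i : E.carrier) ∈ K := by
        intro i hi
        rcases Finset.mem_insert.1 hi with rfl | hi
        · rw [hc10]; exact one_mem _
        · exact hfx i hi
      have := hv (insert i0 s) (fun i => if hi : i ∈ insert i0 s then ⟨c' i, hfx' i hi, (c' i).2⟩ else 0) (by
        rw [← hc1]
        refine Finset.sum_congr rfl fun i hi => ?_
        rw [dif_pos hi]; rfl) i0 (Finset.mem_insert_self _ _)
      rw [dif_pos (Finset.mem_insert_self _ _)] at this
      have h7 : (c' i0 : E.carrier) = 0 := congrArg Subtype.val this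
      rw [hc10] at h7
      exact one_ne_zero h7

end SNT

namespace SNT
variable {A B E F L M N W : DFld.{u}}

theorem subi_range {K : Subfield E.carrier} (hK : DC E K) : (subi E K hK).f.fieldRange = K := by
  ext x
  constructor
  · rintro ⟨y, rfl⟩; exact y.2
  · intro hx; exact ⟨⟨x, hx⟩, rfl⟩

theorem ART2 {K E1 L : Subfield E.carrier} (hK : DC E K) (hE1 : DC E E1) (hL : DC E L) (hEL : E1 ≤ L)
    (hLX : L ≤ K ⊔ E1)
    (hld : ∀ (I : Type u) (v : I → E.carrier), (∀ i, v i ∈ K) → LI (K ⊓ L).subtype v → LI L.subtype v) :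
    L = (L ⊓ K) ⊔ E1 := by
  classical
  refine le_antisymm ?_ (sup_le inf_le_left hEL)
  intro x hx
  have hK1 : DC E (L ⊓ K) := DC_inf hL hK
  have hL0 : DC E ((L ⊓ K) ⊔ E1) := DC_sup hK1 hE1
  obtain ⟨L0, hL0e⟩ : ∃ L0, L0 = (L ⊓ K) ⊔ E1 := ⟨_, rfl⟩
  rw [← hL0e] at hL0 ⊢
  have hL0L : L0 ≤ L := by rw [hL0e]; exact sup_le inf_le_left hEL
  have h1 : L ⊓ K ≤ L0 := by rw [hL0e]; exact le_sup_left
  obtain ⟨f, hf⟩ : ∃ f, f = incl E hK1 hL0 h1 := ⟨_, rfl⟩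
  obtain ⟨g, hg⟩ : ∃ g, g = incl E hK1 hK inf_le_right := ⟨_, rfl⟩
  have hcomm : ∀ b, (subi E L0 hL0).f (f.f b) = (subi E K hK).f (g.f b) := by
    intro b; rw [hf, hg]; rfl
  obtain ⟨a, b, hb, hab⟩ := frac_sup f g (subi E L0 hL0) (subi E K hK) hcomm x (by
    rw [subi_range, subi_range]
    refine (hLX.trans ?_) hx
    rw [hL0e]
    exact sup_le le_sup_right (le_sup_right.trans le_sup_left))
  obtain ⟨I, v, hv, hsp⟩ := exists_basis g.f
  obtain ⟨ca, rfl⟩ := Ten_rep (f := f.f) hsp a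
  obtain ⟨cb, rfl⟩ := Ten_rep (f := f.f) hsp b
  have hli : LI L.subtype (fun i => subi E K hK (v i)) := by
    refine hld I _ (fun i => (v i).2) ?_
    intro s c hs
    have := hv s (fun i => ⟨c i, (c i).2.2, (c i).2.1⟩) (by
      apply (subi E K hK).inj
      refine (map_sum (subi E K hK).f _ _).trans ?_
      rw [map_zero, ← hs]
      refine Finset.sum_congr rfl fun i _ => ?_
      rw [hg]; rfl)
    intro i hi
    exact Subtype.ext (congrArg (subi E _ hK1) (this i hi))
  have ex : ∀ c : I →₀ (sub E L0 hL0).carrier, ∀ s, c.support ⊆ s →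
      ev (subi E L0 hL0).f (subi E K hK).f hcomm (∑ i ∈ c.support, inl f.f g.f (c i) * inr f.f g.f (v i))
      = ∑ i ∈ s, (subi E L0 hL0).f (c i) * (subi E K hK).f (v i) := by
    intro c s hs
    rw [map_sum]
    simp only [map_mul, ev_inl, ev_inr]
    refine Finset.sum_subset hs fun i _ hi => ?_
    rw [Finsupp.notMem_support_iff.1 hi, map_zero, zero_mul]
  have h2 := hli (ca.support ∪ cb.support)
    (fun i => ⟨x, hx⟩ * ⟨(cb i).1, hL0L (cb i).2⟩ - ⟨(ca i).1, hL0L (ca i).2⟩) (by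
      have h3 := (eq_div_iff hb).1 hab
      rw [ex cb _ Finset.subset_union_right, ex ca (ca.support ∪ cb.support) Finset.subset_union_left, Finset.mul_sum] at h3
      rw [← sub_eq_zero, ← Finset.sum_sub_distrib] at h3
      rw [← h3]
      refine Finset.sum_congr rfl fun i _ => ?_
      show (x * _ - _) * _ = _
      rw [sub_mul, mul_assoc]; rfl)
  obtain ⟨i, hi, hi0⟩ : ∃ i ∈ cb.support, cb i ≠ 0 := by
    by_contra hcon
    push Not at hcon
    apply hb
    rw [Finset.sum_eq_zero, map_zero]
    intro i hi
    rw [hcon i hi, map_zero, zero_mul]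
  have h4 : x * (cb i).1 - (ca i).1 = 0 := congrArg Subtype.val (h2 i (Finset.mem_union_right _ hi))
  have h5 : ((cb i).1 : E.carrier) ≠ 0 := fun h => hi0 ((subi E L0 hL0).inj (h.trans (map_zero (subi E L0 hL0).f).symm))
  have h6 : x = (ca i).1 / (cb i).1 := by rw [eq_div_iff h5]; exact sub_eq_zero.1 h4
  rw [h6]
  exact div_mem (ca i).2 (cb i).2

/-- fixed fields -/
theorem FIXED {K X : Subfield E.carrier} (hX : DC E X) (h : SNR E K X) (hcE : con E ≤ K)
    (hC : IsAlgClosed (con E)) :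
    ∀ x ∈ X, (∀ σ : DHom (sub E X hX) E, (∀ y, subi E X hX y ∈ K → σ y = subi E X hX y) →
      ∀ hx : x ∈ X, σ ⟨x, hx⟩ = x) → x ∈ K := by
  intro x hx hfix
  by_contra hxK
  obtain ⟨hK, hX2, hle, hSN⟩ := h
  have hN : IsAlgClosed (con (sub E X hX)) := algClosed_of' (subi E X hX)
    (fun c hc => ⟨⟨c, hle (hcE hc)⟩, rfl⟩) hC
  obtain ⟨σ, h1, h2⟩ := U1 (incl E hK hX hle) hN hSN ⟨x, hx⟩ (by
    rw [incl_range]; exact hxK)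
  apply h2
  apply (subi E X hX).inj
  exact hfix ((subi E X hX).comp σ) (fun y hy => congrArg (subi E X hX) (h1 ⟨y.1, hy⟩)) hx

/-- normality -/
theorem STAB {k E1 X : Subfield E.carrier} (hX : DC E X) (h : SNR E k E1) (hcE : con E ≤ k)
    (hE1X : E1 ≤ X) (σ : DHom (sub E X hX) E) (hσ : ∀ y, subi E X hX y ∈ k → σ y = subi E X hX y)
    (x) (hx : subi E X hX x ∈ E1) : σ x ∈ E1 := by
  have := h.elim h.dcr (subi E E1 h.dcr) (σ.comp (incl E h.dcr hX hE1X)) (fun y hy =>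
    (hσ (incl E h.dcr hX hE1X y) hy).symm) ⟨x.1, hx⟩
  have h2 : cl (subi E E1 h.dcr) = E1 := by
    unfold cl
    rw [subi_range, sup_eq_left]
    exact hcE.trans h.le
  rw [h2] at this
  exact this

end SNT

namespace SNT
variable {A B E F L M N W : DFld.{u}}

def Emb (E : DFld.{u}) (k L : Subfield E.carrier) : Prop :=
  ∃ (hk : DC E k) (hL : DC E L) (h : k ≤ L) (F : DFld.{u}) (ψ : DHom (sub E L hL) F),
    SN (ψ.comp (incl E hk hL h))

theorem Emb.dcl {k L : Subfield E.carrier} (h : Emb E k L) : DC E k := h.1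
theorem Emb.dcr {k L : Subfield E.carrier} (h : Emb E k L) : DC E L := h.2.1
theorem Emb.le {k L : Subfield E.carrier} (h : Emb E k L) : k ≤ L := h.2.2.1

theorem Emb_of_SNR {k K L : Subfield E.carrier} (h : SNR E k L) (hK : DC E K) (hkK : k ≤ K)
    (hKL : K ≤ L) : Emb E k K := by
  obtain ⟨hk, hL, hle, hSN⟩ := h
  exact ⟨hk, hK, hkK, sub E L hL, incl E hK hL hKL, hSN⟩

theorem TRANS {E1 L1 X : Subfield E.carrier} (hX : DC E X) (g : DHom (sub E X hX) E) (hle : L1 ≤ X)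
    (hg2 : ∀ e ∈ E1, ∃ y, subi E X hX y ∈ E1 ∧ g y = e)
    (hg1 : ∀ y, subi E X hX y ∈ E1 → g y ∈ E1) (h : Emb E E1 L1) :
    ∃ L2, Emb E E1 L2 ∧ L2 ≤ g.f.fieldRange ∧ ∀ y, subi E X hX y ∈ L1 → g y ∈ L2 := by
  obtain ⟨hE1, hL1, hle1, F, ψ, hSN⟩ := h
  obtain ⟨gL, hgL⟩ : ∃ gL, gL = g.comp (incl E hL1 hX hle) := ⟨_, rfl⟩
  have hgL' : ∀ (x : E.carrier) (h1 : x ∈ L1) (h2 : x ∈ X), gL ⟨x, h1⟩ = g ⟨x, h2⟩ := by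
    intro x h1 h2; rw [hgL]; rfl
  have hL2 : DC E gL.f.fieldRange := DC_range gL
  obtain ⟨θ, hθ⟩ := factor gL (subi E _ hL2) (fun e => e.2)
  have hEL : E1 ≤ gL.f.fieldRange := by
    intro e he
    obtain ⟨y, hy, rfl⟩ := hg2 e he
    exact ⟨⟨y.1, hle1 hy⟩, hgL' _ _ _⟩
  refine ⟨gL.f.fieldRange, ⟨hE1, hL2, hEL, F, ψ.comp θ, (SN_congr ?_).1 hSN⟩, ?_, ?_⟩
  · ext z
    constructor
    · rintro ⟨y, rfl⟩
      refine ⟨⟨g ⟨y.1, hle (hle1 y.2)⟩, hg1 _ y.2⟩, ?_⟩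
      show ψ (θ _) = ψ _
      congr 1
      apply gL.inj
      rw [hθ]
      exact (hgL' _ _ _).symm
    · rintro ⟨e, rfl⟩
      obtain ⟨y, hy, hye⟩ := hg2 e.1 e.2
      refine ⟨⟨y.1, hy⟩, ?_⟩
      show ψ _ = ψ (θ _)
      congr 1
      apply gL.inj
      rw [hθ]
      exact (hgL' _ _ _).trans hye
  · rintro _ ⟨y, rfl⟩
    exact ⟨⟨y.1, hle y.2⟩, (hgL' _ _ _).symm⟩
  · intro y hy
    exact ⟨⟨y.1, hy⟩, hgL' _ _ _⟩

theorem algClosed_sub {K : Subfield E.carrier} (hK : DC E K) (h : con E ≤ K) (hC : IsAlgClosed (con E)) :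
    IsAlgClosed (con (sub E K hK)) :=
  algClosed_of' (subi E K hK) (fun c hc => ⟨⟨c, h hc⟩, rfl⟩) hC

theorem COMP {E1 L1 L2 : Subfield E.carrier} (hcE : con E ≤ E1) (hC : IsAlgClosed (con E))
    (h1 : Emb E E1 L1) (h2 : Emb E E1 L2) : Emb E E1 (L1 ⊔ L2) := by
  obtain ⟨hE1, hL1, hle1, F1, ψ1, hSN1⟩ := h1
  obtain ⟨hE1', hL2, hle2, F2, ψ2, hSN2⟩ := h2
  have hW : DC E (L1 ⊔ L2) := DC_sup hL1 hL2
  have hEW : E1 ≤ L1 ⊔ L2 := hle1.trans le_sup_left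
  have hCW := algClosed_sub hW (hcE.trans hEW) hC
  obtain ⟨M1, ι1, τ1, hh1, hc1⟩ := AM (incl E hL1 hW le_sup_left) ψ1 hCW (SN_of_comp _ _ hSN1)
  have hCM1 : IsAlgClosed (con M1) := algClosed_of ι1 (fun x hx => by
    obtain ⟨a, -, h⟩ := hc1 x hx; exact ⟨a, h⟩) hCW
  obtain ⟨M2, ι2, τ2, hh2, hc2⟩ := AM (ι1.comp (incl E hL2 hW le_sup_right)) ψ2 hCM1 (SN_of_comp _ _ hSN2)
  have r1 := SNR_range _ hSN1 (ι2.comp τ1)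
  have r2 := SNR_range _ hSN2 τ2
  obtain ⟨Φ, hΦ⟩ : ∃ Φ, Φ = ι2.comp ι1 := ⟨_, rfl⟩
  have hΦa : ∀ x, Φ x = ι2 (ι1 x) := by intro x; rw [hΦ]; rfl
  have e1 : ((ι2.comp τ1).comp (ψ1.comp (incl E hE1 hL1 hle1))).f.fieldRange
      = (Φ.comp (incl E hE1 hW hEW)).f.fieldRange := by
    congr 2
    ext x
    have h := hh1 (incl E hE1 hL1 hle1 x)
    show ι2 (τ1 (ψ1 _)) = Φ _
    rw [← h, hΦa]; rfl
  have e2 : (τ2.comp (ψ2.comp (incl E hE1' hL2 hle2))).f.fieldRange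
      = (Φ.comp (incl E hE1 hW hEW)).f.fieldRange := by
    congr 2
    ext x
    have h := hh2 (incl E hE1 hL2 hle2 x)
    show (τ2 (ψ2 _)) = Φ _
    rw [← h, hΦa]; rfl
  rw [e1] at r1
  rw [e2] at r2
  have r := SUPSN r1 r2 (by
    intro c hc
    obtain ⟨a, ha, rfl⟩ := hc2 c hc
    obtain ⟨w, hw, rfl⟩ := hc1 a ha
    have hw2 := hcE ((subi E _ hW).cmem hw)
    exact ⟨⟨_, hw2⟩, hΦa _⟩)
  have hin : ∀ x, Φ x ∈ (ι2.comp τ1).f.fieldRange ⊔ τ2.f.fieldRange := by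
    refine sup_into hW le_rfl le_sup_left le_sup_right Φ _ ?_ ?_
    · intro e he
      refine (le_sup_left : (ι2.comp τ1).f.fieldRange ≤ _) ⟨ψ1 ⟨e.1, he⟩, ?_⟩
      rw [hΦa]
      exact (congrArg ι2 (hh1 ⟨e.1, he⟩)).symm
    · intro e he
      refine (le_sup_right : τ2.f.fieldRange ≤ _) ⟨ψ2 ⟨e.1, he⟩, ?_⟩
      rw [hΦa]
      exact (hh2 ⟨e.1, he⟩).symm
  refine ⟨hE1, hW, hEW, sub M2 _ r.dcr, Φ.codRestrict _ r.dcr hin, ?_⟩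
  exact SN_codRestrict (Φ.comp (incl E hE1 hW hEW)) _ r r.dcr (fun x => hin _)

end SNT

namespace SNT
variable {A B E F L M N W E1 K1 : DFld.{u}}

theorem CORE (f : DHom B E1) (g : DHom B K1) (ι : DHom E1 L) (τ : DHom K1 L)
    (h : ∀ b, ι.f (f.f b) = τ.f (g.f b)) (htop : ι.f.fieldRange ⊔ τ.f.fieldRange = ⊤)
    (hld : ∀ (I : Type u) (v : I → K1.carrier), LI g.f v → LI ι.f (fun i => τ (v i)))
    (hf : SN f) (ψ : DHom L N) (hψ : SN (ψ.comp ι)) (hN : IsAlgClosed (con N)) :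
    ∃ (F : DFld.{u}) (φ : DHom K1 F), SN (φ.comp g) := by
  obtain ⟨S0, hS0⟩ : ∃ S0 : Set N.carrier, S0 = {y | ∃ (s : DHom N N) (x : K1.carrier),
    (∀ b, s (ψ (ι b)) = ψ (ι b)) ∧ y = s (ψ (τ x))} := ⟨_, rfl⟩
  obtain ⟨S, hS⟩ : ∃ S, S = Subfield.closure S0 := ⟨_, rfl⟩
  have hSD : DC N S := by
    rw [hS]
    refine DC_closure fun y hy => Subfield.subset_closure ?_
    rw [hS0] at hy ⊢
    obtain ⟨s, x, hs, rfl⟩ := hy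
    exact ⟨s, K1.deriv x, hs, by rw [τ.comm, ψ.comm, s.comm]⟩
  have hgen : ∀ (s : DHom N N) (x : K1.carrier), (∀ b, s (ψ (ι b)) = ψ (ι b)) → s (ψ (τ x)) ∈ S := by
    intro s x hs
    rw [hS]
    apply Subfield.subset_closure
    rw [hS0]
    exact ⟨s, x, hs, rfl⟩
  have hin : ∀ x, (ψ.comp τ) x ∈ S := fun x => hgen (DHom.id N) x (fun _ => rfl)
  obtain ⟨kk, hkk⟩ : ∃ kk, kk = ((ψ.comp τ).comp g).f.fieldRange := ⟨_, rfl⟩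
  have hkk2 : kk = ((ψ.comp ι).comp f).f.fieldRange := by
    rw [hkk]
    congr 2
    ext b
    exact congrArg ψ (h b).symm
  have hf' := (SN_iff f).1 hf
  have hψ' := (SN_iff _).1 hψ
  have hcon : ∀ x ∈ con N, ∃ b, ψ (ι (f b)) = x := by
    intro x hx
    obtain ⟨e, rfl⟩ := hψ'.2.1 x hx
    obtain ⟨b, rfl⟩ := hf'.2.1 e ((ψ.comp ι).con_iff.1 hx)
    exact ⟨b, rfl⟩
  have hconk : con N ≤ kk := by
    intro x hx
    obtain ⟨b, hb⟩ := hcon x hx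
    rw [hkk2]; exact ⟨b, hb⟩
  have hconL : con L ≤ ι.f.fieldRange := by
    intro x hx
    obtain ⟨b, hb⟩ := hcon _ (ψ.cmem hx)
    exact ⟨f b, ψ.inj hb⟩
  have hkS : kk ≤ S := by
    rw [hkk]; rintro _ ⟨b, rfl⟩; exact hin _
  have key : SNR N kk S := by
    refine SNR_of (by rw [hkk]; exact DC_range _) hSD hkS ?_ (fun x hx _ => hconk hx) ?_
    · refine FG_le_top _ _ ?_ hkS
      have h1 : FG f.f.fieldRange ⊤ := hf'.1
      have h2 : FG (ψ.comp ι).f.fieldRange ⊤ := hψ'.1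
      have h3 := h1.map (ψ.comp ι).f
      rw [← RingHom.fieldRange_eq_map, RingHom.map_fieldRange] at h3
      rw [hkk2]
      exact h3.trans h2
    · intro M ι' σ' hh
      have hgn : ∀ (s : DHom N N) (hs : ∀ b, s (ψ (ι b)) = ψ (ι b)) (x : K1.carrier),
          σ' ⟨s (ψ (τ x)), hgen s x hs⟩ ∈ cl ι' := by
        intro s hs x
        obtain ⟨κ, hκ⟩ : ∃ κ : DHom K1 (sub N S hSD), ∀ x, κ x = ⟨s (ψ (τ x)), hgen s x hs⟩ :=
          ⟨((s.comp ψ).comp τ).codRestrict S hSD (fun x => hgen s x hs), fun _ => rfl⟩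
        rw [← hκ]
        obtain ⟨M1, α, j, hαj⟩ := amalgam0 ι' (subi N S hSD)
        obtain ⟨M2, β, ρ, hβρ⟩ := amalgam0 (α.comp (σ'.comp κ)) τ
        replace hβρ : ∀ x, β (α (σ' (κ x))) = ρ (τ x) := hβρ
        obtain ⟨j', hj'⟩ : ∃ j' : DHom E1 M2, ∀ e, j' e = β (j (ψ (ι e))) :=
          ⟨((β.comp j).comp ψ).comp ι, fun _ => rfl⟩
        have hj : ∀ b, j'.f (f.f b) = ρ.f (τ.f (g.f b)) := by
          intro b
          rw [← hβρ, hj']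
          congr 1
          have hk : subi N S hSD (κ (g b)) = ψ (ι (f b)) := by
            rw [hκ]
            refine Eq.trans (congrArg (fun z => s (ψ z)) (h b).symm) (hs _)
          rw [← hh (κ (g b)) (by rw [hk, hkk2]; exact ⟨b, rfl⟩), hαj, hk]
        obtain ⟨T, hT1, hT2⟩ := TAU f g ι τ h htop hld hconL ρ j' hj (by
          intro e
          have := hf'.2.2 M2 (ρ.comp ι) j' (fun b => by
            rw [hj b, ← h]; rfl) e
          unfold cl at this
          rw [RingHom.map_fieldRange]
          exact this)
        obtain ⟨M3, γ, ξ, hγξ⟩ := amalgam0 T ψ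
        obtain ⟨J, hJ⟩ : ∃ J : DHom N M3, ∀ x, J x = γ (β (j x)) := ⟨γ.comp (β.comp j), fun _ => rfl⟩
        have hLS := LS (ψ.comp ι) hN hψ S (hconk.trans hkS) (ψ (τ x)) (fun σ hσ => hgen σ x hσ) J ξ (by
          intro b
          show J (ψ (ι b)) = ξ (ψ (ι b))
          rw [hJ, ← hγξ, hT2, hj'])
        rw [← hγξ, hT1, ← hβρ] at hLS
        refine desc_cl (γ.comp (β.comp α)) ι' _ ?_
        have he : S.map J.f = ((γ.comp (β.comp α)).comp ι').f.fieldRange := by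
          ext z
          constructor
          · rintro ⟨y, hy, rfl⟩
            refine ⟨⟨y, hy⟩, ?_⟩
            show γ (β (α (ι' _))) = J y
            exact (congrArg (fun z => γ (β z)) (hαj ⟨y, hy⟩)).trans (hJ y).symm
          · rintro ⟨y, rfl⟩
            refine ⟨subi N S hSD y, y.2, ?_⟩
            show J _ = γ (β (α (ι' _)))
            rw [hαj, hJ]
        unfold cl
        rw [← he]
        exact hLS
      intro e
      have hle : S ≤ ((cl ι').comap σ'.f).map (subi N S hSD).f := by
        conv_lhs => rw [hS]
        rw [Subfield.closure_le]
        intro y hy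
        rw [hS0] at hy
        obtain ⟨s, x, hs, rfl⟩ := hy
        exact ⟨_, hgn s hs x, rfl⟩
      obtain ⟨y, hy, hye⟩ := hle e.2
      have : y = e := (subi N S hSD).inj hye
      rw [← this]; exact hy
  rw [hkk] at key
  exact ⟨sub N S hSD, (ψ.comp τ).codRestrict S hSD hin,
    SN_codRestrict ((ψ.comp τ).comp g) S key hSD (fun x => hin _)⟩

end SNT

namespace SNT
variable {A B E F M N W : DFld.{u}}

theorem MAIN {k K E1 L1 : Subfield E.carrier} (hcE : con E ≤ k) (hC : IsAlgClosed (con E))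
    (hfg : FG k ⊤) (hE1 : SNR E k E1) (hK : DC E K) (hkK : k ≤ K) (hint : K ⊓ E1 = k)
    (hL1 : Emb E E1 L1) (hlt : E1 < L1) (hL1X : L1 ≤ K ⊔ E1) :
    ∃ K1, k < K1 ∧ K1 ≤ K ∧ Emb E k K1 := by
  obtain ⟨X, hXe⟩ : ∃ X, X = K ⊔ E1 := ⟨_, rfl⟩
  have hXS : SNR E K X := by rw [hXe]; exact COMPOS hE1 hcE hK hkK
  rw [← hXe] at hL1X
  have hX := hXS.dcr
  have hE1X : E1 ≤ X := by rw [hXe]; exact le_sup_right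
  have hfix := FIXED hX hXS (hcE.trans hkK) hC
  have stE : ∀ σ : DHom (sub E X hX) E, (∀ y, subi E X hX y ∈ K → σ y = subi E X hX y) →
      ∀ x, subi E X hX x ∈ E1 → σ x ∈ E1 := fun σ hσ x hx =>
    STAB hX hE1 hcE hE1X σ (fun y hy => hσ y (hkK hy)) x hx
  have stX : ∀ σ : DHom (sub E X hX) E, (∀ y, subi E X hX y ∈ K → σ y = subi E X hX y) →
      ∀ x, σ x ∈ X := fun σ hσ x =>
    STAB hX hXS (hcE.trans hkK) le_rfl σ hσ x x.2
  have surE : ∀ σ : DHom (sub E X hX) E, (∀ y, subi E X hX y ∈ K → σ y = subi E X hX y) →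
      ∀ e ∈ E1, ∃ y, subi E X hX y ∈ E1 ∧ σ y = e := by
    intro σ hσ e he
    obtain ⟨hk, hE1d, hkE1, hSN⟩ := hE1
    obtain ⟨σ0, hσ0⟩ : ∃ σ0 : DHom (sub E E1 hE1d) (sub E E1 hE1d),
        ∀ x, subi E E1 hE1d (σ0 x) = σ (incl E hE1d hX hE1X x) :=
      ⟨(σ.comp (incl E hE1d hX hE1X)).codRestrict E1 hE1d (fun x => stE σ hσ _ x.2), fun _ => rfl⟩
    obtain ⟨y, hy⟩ := SN_surj _ hSN σ0 (fun b => by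
      apply (subi E E1 hE1d).inj
      rw [hσ0]
      exact hσ _ (hkK b.2)) ⟨e, he⟩
    refine ⟨incl E hE1d hX hE1X y, y.2, ?_⟩
    rw [← hσ0, hy]; rfl
  obtain ⟨L, hEL, ⟨hLE, hLX⟩, hmax⟩ := exists_max E1 (FG_up hfg hE1.le le_top)
    (fun L => Emb E E1 L ∧ L ≤ X) L1 hlt.le ⟨hL1, hL1X⟩
  have hgr : ∀ L', Emb E E1 L' → L' ≤ X → L' ≤ L := by
    intro L' h1 h2
    rw [← hmax (L ⊔ L') le_sup_left ⟨COMP (hcE.trans hE1.le) hC hLE h1, sup_le hLX h2⟩]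
    exact le_sup_right
  have stL : ∀ σ : DHom (sub E X hX) E, (∀ y, subi E X hX y ∈ K → σ y = subi E X hX y) →
      ∀ x, subi E X hX x ∈ L → σ x ∈ L := by
    intro σ hσ x hx
    obtain ⟨L2, h1, h2, h3⟩ := TRANS hX σ hLX (surE σ hσ) (stE σ hσ) hLE
    refine hgr L2 h1 (h2.trans ?_) (h3 x hx)
    rintro _ ⟨y, rfl⟩
    exact stX σ hσ y
  have hKX : K ≤ X := hXS.le
  have a1 := ART2 hK hE1.dcr hLE.dcr hEL (by rw [← hXe]; exact hLX)
    (fun I v hv hli => ART1 hX hKX hLX hfix stL v hv hli)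
  have a2 : ∀ (I : Type u) (v : I → E.carrier), (∀ i, v i ∈ K) → LI k.subtype v → LI E1.subtype v := by
    intro I v hv hli
    refine ART1 hX hKX hE1X hfix stE v hv ?_
    rw [hint]; exact hli
  obtain ⟨K1, hK1⟩ : ∃ K1, K1 = L ⊓ K := ⟨_, rfl⟩
  have hK1d : DC E K1 := by rw [hK1]; exact DC_inf hLE.dcr hK
  rw [← hK1] at a1
  have hkK1 : k ≤ K1 := by rw [hK1]; exact le_inf (hE1.le.trans hEL) hkK
  have hne : k ≠ K1 := by
    intro h
    rw [← h, sup_eq_right.2 hE1.le] at a1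
    exact absurd (hgr L1 hL1 hL1X) (by rw [a1]; exact not_le_of_gt hlt)
  have hK1K : K1 ≤ K := by rw [hK1]; exact inf_le_right
  have hK1L : K1 ≤ L := by rw [hK1]; exact inf_le_left
  obtain ⟨hE1d, hLd, hEL', N, ψ, hψ⟩ := hLE
  obtain ⟨hk, hE1d', hkE1, hSN1⟩ := hE1
  have hN : IsAlgClosed (con N) := algClosed_of (ψ.comp (incl E hE1d hLd hEL')) ((SN_iff _).1 hψ).2.1
    (algClosed_sub hE1d (hcE.trans hkE1) hC)
  obtain ⟨F, φ, hφ⟩ := CORE (incl E hk hE1d hkE1) (incl E hk hK1d hkK1) (incl E hE1d hLd hEL')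
    (incl E hK1d hLd hK1L) (fun b => rfl) (by
      rw [incl_range, incl_range, eq_top_iff]
      intro x _
      have hx : x.1 ∈ (E1.comap L.subtype ⊔ K1.comap L.subtype).map L.subtype := by
        rw [Subfield.map_sup, Subfield.map_comap_eq, Subfield.map_comap_eq]
        have : L.subtype.fieldRange = L := by ext x; simp
        rw [this, inf_eq_left.2 hK1L, inf_eq_left.2 hEL, sup_comm E1 K1, ← a1]
        exact x.2
      obtain ⟨y, hy, hyx⟩ := hx
      have : y = x := Subtype.ext hyx
      rw [← this]; exact hy) (by
      intro I v hv s c hs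
      have h1 := a2 I (fun i => subi E K1 hK1d (v i)) (fun i => hK1K (v i).2) (by
        intro s c hs
        refine hv s c ?_
        apply (subi E K1 hK1d).inj
        refine (map_sum (subi E K1 hK1d).f _ _).trans ?_
        rw [map_zero, ← hs]
        rfl) s c (by
        have h2 := congrArg (subi E L hLd).f hs
        rw [map_zero] at h2
        rw [← h2]
        refine Eq.trans ?_ (map_sum (subi E L hLd).f _ _).symm
        rfl)
      exact h1) hSN1 ψ hψ hN
  exact ⟨K1, lt_of_le_of_ne hkK1 hne, hK1K, hk, hK1d, hkK1, F, φ, hφ⟩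

end SNT

namespace SNT
variable {A B E F M N W : DFld.{u}}

inductive Tow (E : DFld.{u}) : Subfield E.carrier → Prop
  | top : Tow E ⊤
  | step (k E1 : Subfield E.carrier) : SNR E k E1 → Tow E E1 → Tow E k

theorem Tow.fg {k : Subfield E.carrier} (h : Tow E k) : FG k ⊤ := by
  induction h with
  | top => exact ⟨∅, by simp⟩
  | step k E1 h1 _ ih => exact h1.fg.trans ih

theorem Tow.up {k : Subfield E.carrier} (h : Tow E k) : ∀ K, con E ≤ k → DC E K → k ≤ K → Tow E K := by
  induction h with
  | top => intro K _ _ h; rw [top_le_iff.1 h]; exact Tow.top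
  | step k E1 h1 _ ih =>
    intro K hc hK hkK
    exact Tow.step K (K ⊔ E1) (COMPOS h1 hc hK hkK)
      (ih _ (hc.trans h1.le) (DC_sup hK h1.dcr) le_sup_right)

theorem Tow.claim (hC : IsAlgClosed (con E)) {k : Subfield E.carrier} (h : Tow E k) :
    ∀ K, con E ≤ k → DC E K → k < K → ∃ K1, k < K1 ∧ K1 ≤ K ∧ Emb E k K1 := by
  induction h with
  | top => intro K _ _ h; exact absurd h not_top_lt
  | step k E1 h1 ht ih =>
    intro K hc hK hkK
    by_cases hint : K ⊓ E1 = k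
    · have hlt : E1 < K ⊔ E1 := by
        refine lt_of_le_of_ne le_sup_right fun h => ?_
        have : K ≤ E1 := by rw [h]; exact le_sup_left
        rw [inf_eq_left.2 this] at hint
        exact hkK.ne hint.symm
      obtain ⟨L1, hl, hle, hE⟩ := ih (K ⊔ E1) (hc.trans h1.le) (DC_sup hK h1.dcr) hlt
      exact MAIN hc hC (h1.fg.trans ht.fg) h1 hK hkK.le hint hE hl hle
    · exact ⟨K ⊓ E1, lt_of_le_of_ne (le_inf hkK.le h1.le) (Ne.symm hint), inf_le_left,
        Emb_of_SNR h1 (DC_inf hK h1.dcr) (le_inf hkK.le h1.le) inf_le_right⟩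

theorem RES (hC : IsAlgClosed (con E)) {k0 K : Subfield E.carrier} (h : Tow E k0) (hc : con E ≤ k0)
    (hK : DC E K) : ∀ k : {k : Subfield E.carrier // k0 ≤ k}, DC E k.1 → k.1 ≤ K →
    ∃ (m : ℕ) (S : Fin (m + 1) → Subfield E.carrier), S 0 = k.1 ∧ S (Fin.last m) = K ∧
      (∀ i : Fin m, S i.castSucc < S i.succ) ∧ (∀ i, DC E (S i)) ∧
      ∀ i : Fin m, Emb E (S i.castSucc) (S i.succ) := by
  intro k
  induction k using (acc_top k0 h.fg).induction with
  | _ k ih =>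
  intro hk hkK
  by_cases he : k.1 = K
  · exact ⟨0, fun _ => K, he.symm, rfl, fun i => i.elim0, fun _ => hK, fun i => i.elim0⟩
  · obtain ⟨K1, h1, h2, h3⟩ := (h.up k.1 hc hk k.2).claim hC K (hc.trans k.2) hK (lt_of_le_of_ne hkK he)
    obtain ⟨m, S, hS0, hSm, hlt, hd, hemb⟩ := ih ⟨K1, k.2.trans h1.le⟩ h1 h3.dcr h2
    refine ⟨m + 1, Fin.cons k.1 S, rfl, ?_, ?_, ?_, ?_⟩
    · rw [← Fin.succ_last, Fin.cons_succ, hSm]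
    · intro i
      refine Fin.cases ?_ (fun i => ?_) i
      · show k.1 < S 0
        rw [hS0]; exact h1
      · rw [← Fin.succ_castSucc, Fin.cons_succ, Fin.cons_succ]; exact hlt i
    · intro i
      refine Fin.cases hk (fun i => ?_) i
      rw [Fin.cons_succ]; exact hd i
    · intro i
      refine Fin.cases ?_ (fun i => ?_) i
      · show Emb E k.1 (S 0)
        rw [hS0]; exact h3
      · rw [← Fin.succ_castSucc, Fin.cons_succ, Fin.cons_succ]; exact hemb i

theorem Emb.final {k L : Subfield E.carrier} (h : Emb E k L) :
    ∃ (F : DFld.{u}) (ψ : ↥L →+* F.carrier),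
      (∀ (x : E.carrier) (hx : x ∈ L) (hx' : E.deriv x ∈ L), ψ ⟨E.deriv x, hx'⟩ = F.deriv (ψ ⟨x, hx⟩)) ∧
      IsSN F.deriv (Subfield.map ψ (Subfield.comap L.subtype k)) := by
  obtain ⟨hk, hL, hle, F, ψ, hSN⟩ := h
  refine ⟨F, ψ.f, fun x hx _ => ψ.comm ⟨x, hx⟩, ?_⟩
  have : (ψ.comp (incl E hk hL hle)).f.fieldRange = Subfield.map ψ.f (Subfield.comap L.subtype k) := by
    have h1 : Subfield.map ψ.f (incl E hk hL hle).f.fieldRange = Subfield.map ψ.f (Subfield.comap L.subtype k) :=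
      congrArg (fun Z => Subfield.map ψ.f Z) (incl_range hk hL hle)
    refine Eq.trans ?_ h1
    exact (RingHom.map_fieldRange _ _).symm
  exact Eq.mp (congrArg (fun Z => IsSN F.deriv Z) this) hSN

end SNT



/-- Every intermediate differential field `k ⊂ K ⊆ E` of an iterated
strongly normal extension `E` of `k` can be resolved into a tower
`k = K₀ ⊂ K₁ ⊂ ⋯ ⊂ K_m = K` in which each `Kᵢ` embeds differentially over `Kᵢ₋₁` into a
strongly normal extension of `Kᵢ₋₁`. -/
theorem stmt2 {E : Type u} [Field E] [CharZero E] (D : Derivation ℤ E E)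
    (k K : Subfield E)
    (hk : ∀ x ∈ k, D x ∈ k) (hK : ∀ x ∈ K, D x ∈ K)
    (hC : IsAlgClosed ↥(constantsOf D k))
    (hkK : k < K)
    (n : ℕ) (T : Fin (n + 1) → Subfield E)
    (hT0 : T 0 = k) (hTn : T (Fin.last n) = ⊤)
    (hTmono : ∀ i : Fin n, T i.castSucc ≤ T i.succ)
    (hTdiff : ∀ i, ∀ x ∈ T i, D x ∈ T i)
    (hSN : ∀ i : Fin n, IsSNRel (⇑D) (T i.castSucc) (T i.succ) (hTdiff i.succ)) :
    ∃ (m : ℕ) (S : Fin (m + 1) → Subfield E),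
      S 0 = k ∧ S (Fin.last m) = K ∧
      (∀ i : Fin m, S i.castSucc < S i.succ) ∧
      (∀ i, ∀ x ∈ S i, D x ∈ S i) ∧
      ∀ i : Fin m,
        ∃ (F : DFld.{u}) (ψ : ↥(S i.succ) →+* F.carrier),
          (∀ (x : E) (hx : x ∈ S i.succ) (hx' : D x ∈ S i.succ),
            ψ ⟨D x, hx'⟩ = F.deriv (ψ ⟨x, hx⟩)) ∧
          IsSN F.deriv
            (Subfield.map ψ (Subfield.comap (S i.succ).subtype (S i.castSucc))) := by
  let E' : DFld.{u} := ⟨E, D, fun a b => map_add D a b, fun a b => by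
    rw [Derivation.leibniz, smul_eq_mul, smul_eq_mul]; ring⟩
  have hsn : ∀ i : Fin n, SNT.SNR E' (T i.castSucc) (T i.succ) := fun i =>
    ⟨hTdiff i.castSucc, hTdiff i.succ, hTmono i, (SNT.SN_incl (E := E') _ _ _).2 (hSN i)⟩
  have hti : ∀ i : Fin (n + 1), SNT.con E' ≤ T i ∧ SNT.Tow E' (T i) := by
    intro i
    induction i using Fin.reverseInduction with
    | last => rw [hTn]; exact ⟨le_top, SNT.Tow.top⟩
    | cast i ih =>
      exact ⟨fun x hx => (hsn i).con x hx (ih.1 hx), SNT.Tow.step _ _ (hsn i) ih.2⟩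
  have h0 := hti 0
  rw [hT0] at h0
  have hCe : constantsOf D k = SNT.con E' := by
    ext x
    exact ⟨fun h => h.2, fun h => ⟨h0.1 h, h⟩⟩
  rw [hCe] at hC
  obtain ⟨m, S, h1, h2, h3, h4, h5⟩ := SNT.RES (E := E') hC h0.2 h0.1 hK ⟨k, le_rfl⟩ hk hkK.le
  exact ⟨m, S, h1, h2, h3, h4, fun i => (h5 i).final⟩
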